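/- arXiv:2302.03363 — 5 statements merged into one kernel-verified Lean document; each statement's English description precedes it below -/
import Mathlib

section
/- Let α, β, γ be real numbers with α > -1/2, α + β + γ > -3/2, γ ∈ (−1, −1/2), and let θ > 0. Define h(T) = ∫₀ᵀ s^{2α}(T−s)^γ (∫ₛᵀ e^{θt} t^β (t−s)^γ dt) ds for T > 0. Then lim_{T→+∞} h(T) / (T^{2α+β} e^{θT}) = σ² / θ^{2γ+2}, where σ² = Γ(γ+1)Γ(−2γ−1)Γ(2γ+2) / Γ(−γ). -/
open MeasureTheory Filter intervalIntegral

open Set Topology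

lemma integral_Ioo_rpow_mul_one_sub_rpow {a b : ℝ} (ha : -1 < a) (hb : -1 < b) :
    ∫ x in Ioo (0 : ℝ) 1, x ^ a * (1 - x) ^ b
      = Real.Gamma (a + 1) * Real.Gamma (b + 1) / Real.Gamma (a + b + 2) := by
  have key := ProbabilityTheory.beta_eq_betaIntegralReal (a + 1) (b + 1) (by linarith) (by linarith)
  have hcongr : Complex.betaIntegral ((a + 1 : ℝ) : ℂ) ((b + 1 : ℝ) : ℂ)
      = ((∫ x in Ioo (0 : ℝ) 1, x ^ a * (1 - x) ^ b : ℝ) : ℂ) := by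
    rw [Complex.betaIntegral, intervalIntegral.integral_of_le zero_le_one,
      integral_Ioc_eq_integral_Ioo, ← integral_complex_ofReal]
    refine setIntegral_congr_fun measurableSet_Ioo fun x hx => ?_
    have hx' : (0 : ℝ) ≤ 1 - x := by linarith [hx.2]
    simp only [Complex.ofReal_mul, Complex.ofReal_cpow hx.1.le, Complex.ofReal_cpow hx']
    push_cast
    simp
  rw [hcongr, Complex.ofReal_re, ProbabilityTheory.beta] at key
  rw [← key]
  congr 2
  ring

lemma integrableOn_Ioo_rpow_mul_one_sub_rpow {a b : ℝ} (ha : -1 < a) (hb : -1 < b) :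
    IntegrableOn (fun x : ℝ => x ^ a * (1 - x) ^ b) (Ioo 0 1) := by
  refine .of_integral_ne_zero ?_
  rw [integral_Ioo_rpow_mul_one_sub_rpow ha hb]
  have h1 := Real.Gamma_pos_of_pos (show 0 < a + 1 by linarith)
  have h2 := Real.Gamma_pos_of_pos (show 0 < b + 1 by linarith)
  have h3 := Real.Gamma_pos_of_pos (show 0 < a + b + 2 by linarith)
  positivity

lemma integrableOn_and_integral_Ioo_rpow_mul_sub_rpow {a b T : ℝ} (ha : -1 < a) (hb : -1 < b)
    (hT : 0 < T) :
    IntegrableOn (fun x : ℝ => x ^ a * (T - x) ^ b) (Ioo 0 T) ∧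
      ∫ x in Ioo 0 T, x ^ a * (T - x) ^ b
        = T ^ (a + b + 1) * ∫ x in Ioo (0 : ℝ) 1, x ^ a * (1 - x) ^ b := by
  have himg : (fun x => T * x) '' Ioo (0 : ℝ) 1 = Ioo 0 T := by
    rw [Set.image_mul_left_Ioo hT]; simp
  have hderiv : ∀ x ∈ Ioo (0 : ℝ) 1, HasDerivWithinAt (fun x => T * x) T (Ioo 0 1) x :=
    fun x _ => by simpa using ((hasDerivAt_id x).const_mul T).hasDerivWithinAt
  have hinj : InjOn (fun x => T * x) (Ioo (0 : ℝ) 1) := (mul_right_injective₀ hT.ne').injOn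
  have hcongr : EqOn (fun x => |T| • ((T * x) ^ a * (T - T * x) ^ b))
      (fun x => T ^ (a + b + 1) * (x ^ a * (1 - x) ^ b)) (Ioo 0 1) := fun x hx => by
    have hx' : 0 ≤ 1 - x := by linarith [hx.2]
    simp only [smul_eq_mul, abs_of_pos hT]
    rw [show T - T * x = T * (1 - x) by ring, Real.mul_rpow hT.le hx.1.le,
      Real.mul_rpow hT.le hx', Real.rpow_add hT, Real.rpow_add hT, Real.rpow_one]
    ring
  rw [← himg, integrableOn_image_iff_integrableOn_abs_deriv_smul measurableSet_Ioo hderiv hinj,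
    integral_image_eq_integral_abs_deriv_smul measurableSet_Ioo hderiv hinj,
    integrableOn_congr_fun hcongr measurableSet_Ioo,
    setIntegral_congr_fun measurableSet_Ioo hcongr, MeasureTheory.integral_const_mul]
  exact ⟨(integrableOn_Ioo_rpow_mul_one_sub_rpow ha hb).const_mul _, rfl⟩

/-- The integral in Euler's representation of the hypergeometric function, with parameters chosen
so that `ε = 0` gives a Beta integral. -/
noncomputable def eulerIntegral (a b e ε : ℝ) : ℝ :=
  ∫ u in Ioo (0 : ℝ) 1, u ^ a * (1 - u) ^ b * (u + ε * (1 - u)) ^ (-e)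

lemma eulerIntegral_zero {a b e : ℝ} (hb : -1 < b) (he : -1 < a - e) :
    eulerIntegral a b e 0
      = Real.Gamma (a - e + 1) * Real.Gamma (b + 1) / Real.Gamma (a - e + b + 2) := by
  rw [← integral_Ioo_rpow_mul_one_sub_rpow he hb]
  refine setIntegral_congr_fun measurableSet_Ioo fun u hu => ?_
  simp only [zero_mul, add_zero]
  rw [sub_eq_add_neg a e, Real.rpow_add hu.1]
  ring

lemma eulerIntegrand_nonneg (a b e : ℝ) {ε u : ℝ} (hε : 0 ≤ ε) (hu : u ∈ Ioo (0 : ℝ) 1) :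
    0 ≤ u ^ a * (1 - u) ^ b * (u + ε * (1 - u)) ^ (-e) := by
  have h1 : 0 < 1 - u := by linarith [hu.2]
  have h0 := hu.1
  positivity

lemma eulerIntegral_nonneg (a b e : ℝ) {ε : ℝ} (hε : 0 ≤ ε) : 0 ≤ eulerIntegral a b e ε :=
  setIntegral_nonneg measurableSet_Ioo fun _ hu => eulerIntegrand_nonneg a b e hε hu

lemma eulerIntegrand_le (a b e : ℝ) {ε u : ℝ} (hε : ε ∈ Icc (0 : ℝ) 1) (hu : u ∈ Ioo (0 : ℝ) 1) :
    u ^ a * (1 - u) ^ b * (u + ε * (1 - u)) ^ (-e)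
      ≤ u ^ (a - e) * (1 - u) ^ b + u ^ a * (1 - u) ^ b := by
  have h1 : 0 < 1 - u := by linarith [hu.2]
  have h0 := hu.1
  have hlow : u ≤ u + ε * (1 - u) := by nlinarith [hε.1]
  have hupp : u + ε * (1 - u) ≤ 1 := by nlinarith [hε.2]
  have hD : (u + ε * (1 - u)) ^ (-e) ≤ u ^ (-e) + 1 := by
    rcases le_total 0 e with he | he
    · have := Real.rpow_le_rpow_of_nonpos h0 hlow (neg_nonpos.2 he)
      linarith
    · have := Real.rpow_le_one (h0.le.trans hlow) hupp (neg_nonneg.2 he)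
      have := Real.rpow_nonneg h0.le (-e)
      linarith
  calc _ ≤ u ^ a * (1 - u) ^ b * (u ^ (-e) + 1) := by gcongr
    _ = _ := by rw [sub_eq_add_neg a e, Real.rpow_add h0]; ring

lemma integrableOn_eulerBound {a b e : ℝ} (ha : -1 < a) (hb : -1 < b) (he : -1 < a - e) :
    IntegrableOn (fun u : ℝ => u ^ (a - e) * (1 - u) ^ b + u ^ a * (1 - u) ^ b) (Ioo 0 1) :=
  (integrableOn_Ioo_rpow_mul_one_sub_rpow he hb).add
    (integrableOn_Ioo_rpow_mul_one_sub_rpow ha hb)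

lemma measurable_eulerIntegrand (a b e ε : ℝ) :
    Measurable fun u : ℝ => u ^ a * (1 - u) ^ b * (u + ε * (1 - u)) ^ (-e) := by
  fun_prop

lemma integrableOn_eulerIntegrand {a b e ε : ℝ} (ha : -1 < a) (hb : -1 < b) (he : -1 < a - e)
    (hε : ε ∈ Icc (0 : ℝ) 1) :
    IntegrableOn (fun u : ℝ => u ^ a * (1 - u) ^ b * (u + ε * (1 - u)) ^ (-e)) (Ioo 0 1) := by
  refine (integrableOn_eulerBound ha hb he).mono'
    (measurable_eulerIntegrand a b e ε).aestronglyMeasurable ?_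
  filter_upwards [ae_restrict_mem measurableSet_Ioo] with u hu
  rw [Real.norm_of_nonneg (eulerIntegrand_nonneg a b e hε.1 hu)]
  exact eulerIntegrand_le a b e hε hu

lemma exists_eulerIntegral_le {a b e : ℝ} (ha : -1 < a) (hb : -1 < b) (he : -1 < a - e) :
    ∃ C, 0 ≤ C ∧ ∀ ε ∈ Icc (0 : ℝ) 1, eulerIntegral a b e ε ≤ C := by
  have h : ∀ ε ∈ Icc (0 : ℝ) 1, eulerIntegral a b e ε ≤
      ∫ u in Ioo (0 : ℝ) 1, (u ^ (a - e) * (1 - u) ^ b + u ^ a * (1 - u) ^ b) := fun ε hε =>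
    setIntegral_mono_on (integrableOn_eulerIntegrand ha hb he hε)
      (integrableOn_eulerBound ha hb he) measurableSet_Ioo
      fun u hu => eulerIntegrand_le a b e hε hu
  exact ⟨_, (eulerIntegral_nonneg a b e le_rfl).trans (h 0 (by simp)), h⟩

lemma continuousOn_eulerIntegral {a b e : ℝ} (ha : -1 < a) (hb : -1 < b) (he : -1 < a - e) :
    ContinuousOn (eulerIntegral a b e) (Icc 0 1) := by
  refine continuousOn_of_dominated
    (fun ε _ => (measurable_eulerIntegrand a b e ε).aestronglyMeasurable) (fun ε hε => ?_)
    (integrableOn_eulerBound ha hb he) ?_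
  · filter_upwards [ae_restrict_mem measurableSet_Ioo] with u hu
    rw [Real.norm_of_nonneg (eulerIntegrand_nonneg a b e hε.1 hu)]
    exact eulerIntegrand_le a b e hε hu
  · filter_upwards [ae_restrict_mem measurableSet_Ioo] with u hu
    refine continuousOn_const.mul (ContinuousOn.rpow_const (by fun_prop) fun ε hε => Or.inl ?_)
    have := hu.1
    have : 0 ≤ ε * (1 - u) := mul_nonneg hε.1 (by linarith [hu.2])
    linarith

/-- Substituting `s = t * u / (u + ε * (1 - u))` with `ε = (T - t) / T` fixes both singular
endpoints and turns the `T`-dependence into the parameter of `eulerIntegral`. -/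
lemma integrableOn_and_integral_rpow_mul_sub_rpow_mul_sub_rpow {a b t T : ℝ} (ha : -1 < a)
    (hb : -1 < b) (hb' : b < -(1 / 2)) (ht : 0 < t) (htT : t < T) :
    IntegrableOn (fun s => s ^ a * (T - s) ^ b * (t - s) ^ b) (Ioo 0 t) ∧
      ∫ s in Ioo 0 t, s ^ a * (T - s) ^ b * (t - s) ^ b
        = t ^ (a + b + 1) * (T - t) ^ (2 * b + 1) * T ^ (-(b + 1)) *
          eulerIntegral a b (a + 2 * b + 2) ((T - t) / T) := by
  have hT : 0 < T := ht.trans htT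
  have hTt : 0 < T - t := by linarith
  set ε := (T - t) / T with hε
  have hε0 : 0 < ε := by positivity
  have hε1 : ε < 1 := by rw [hε, div_lt_one hT]; linarith
  have htε : t = T * (1 - ε) := by rw [hε]; field_simp; ring
  have hD : ∀ u ∈ Ioo (0 : ℝ) 1, 0 < u + ε * (1 - u) := fun u hu => by
    have := mul_pos hε0 (sub_pos.2 hu.2)
    linarith [hu.1]
  have himg : (fun u => t * u / (u + ε * (1 - u))) '' Ioo (0 : ℝ) 1 = Ioo 0 t := by
    ext s
    constructor
    · rintro ⟨u, hu, rfl⟩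
      have hDu := hD u hu
      refine ⟨div_pos (mul_pos ht hu.1) hDu, ?_⟩
      simp only
      rw [div_lt_iff₀ hDu]
      have := mul_pos hε0 (sub_pos.2 hu.2)
      exact mul_lt_mul_of_pos_left (by linarith) ht
    · rintro ⟨hs0, hst⟩
      have hden : 0 < t - s * (1 - ε) := by nlinarith
      refine ⟨ε * s / (t - s * (1 - ε)), ⟨by positivity, ?_⟩, ?_⟩
      · rw [div_lt_one hden]; linarith
      · have hDeq : ε * s / (t - s * (1 - ε)) + ε * (1 - ε * s / (t - s * (1 - ε)))
            = ε * t / (t - s * (1 - ε)) := by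
          field_simp
          ring
        simp only
        rw [hDeq]
        field_simp
  have hderiv : ∀ u ∈ Ioo (0 : ℝ) 1, HasDerivWithinAt (fun u => t * u / (u + ε * (1 - u)))
      (t * ε / (u + ε * (1 - u)) ^ 2) (Ioo 0 1) u := fun u hu => by
    have h1 : HasDerivAt (fun u : ℝ => t * u) t u := by
      simpa using (hasDerivAt_id u).const_mul t
    have h2 : HasDerivAt (fun u : ℝ => u + ε * (1 - u)) (1 + ε * (-1)) u :=
      (hasDerivAt_id u).add (((hasDerivAt_id u).const_sub 1).const_mul ε)
    refine ((h1.div h2 (hD u hu).ne').congr_deriv ?_).hasDerivWithinAt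
    congr 1
    ring
  have hinj : InjOn (fun u => t * u / (u + ε * (1 - u))) (Ioo (0 : ℝ) 1) := by
    intro u hu v hv huv
    simp only at huv
    rw [div_eq_div_iff (hD u hu).ne' (hD v hv).ne'] at huv
    have : t * ε * (u - v) = 0 := by linear_combination huv
    have := (mul_eq_zero.1 this).resolve_left (by positivity)
    linarith
  have hcongr : EqOn
      (fun u => |t * ε / (u + ε * (1 - u)) ^ 2| •
        ((t * u / (u + ε * (1 - u))) ^ a * (T - t * u / (u + ε * (1 - u))) ^ b *
          (t - t * u / (u + ε * (1 - u))) ^ b))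
      (fun u => t ^ (a + b + 1) * (T - t) ^ (2 * b + 1) * T ^ (-(b + 1)) *
        (u ^ a * (1 - u) ^ b * (u + ε * (1 - u)) ^ (-(a + 2 * b + 2)))) (Ioo 0 1) := by
    intro u hu
    have hDu := hD u hu
    have hu0 := hu.1
    have hu1 : 0 < 1 - u := sub_pos.2 hu.2
    have e1 : T - t * u / (u + ε * (1 - u)) = (T - t) / (u + ε * (1 - u)) := by
      rw [eq_div_iff hDu.ne', sub_mul, div_mul_cancel₀ _ hDu.ne', htε]
      ring
    have e2 : t - t * u / (u + ε * (1 - u)) = t * ((T - t) / T) * (1 - u) / (u + ε * (1 - u)) := by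
      rw [eq_div_iff hDu.ne', sub_mul, div_mul_cancel₀ _ hDu.ne', ← hε]
      ring
    simp only [smul_eq_mul]
    rw [abs_of_pos (by positivity), e1, e2]
    generalize u + ε * (1 - u) = D at hDu
    rw [hε, Real.div_rpow (by positivity) hDu.le, Real.div_rpow hTt.le hDu.le,
      Real.div_rpow (by positivity) hDu.le, Real.mul_rpow ht.le hu0.le,
      Real.mul_rpow (by positivity) hu1.le, Real.mul_rpow ht.le (by positivity),
      Real.div_rpow hTt.le hT.le, Real.rpow_neg hT.le, Real.rpow_neg hDu.le,
      show a + 2 * b + 2 = a + b + b + (2 : ℕ) by push_cast; ring,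
      show 2 * b + 1 = b + b + 1 by ring, Real.rpow_add_natCast hDu.ne',
      Real.rpow_add hDu, Real.rpow_add hDu, Real.rpow_add ht, Real.rpow_add ht,
      Real.rpow_add hTt, Real.rpow_add hTt, Real.rpow_add hT]
    simp only [Real.rpow_one]
    have := (Real.rpow_pos_of_pos hT b).ne'
    have := (Real.rpow_pos_of_pos hDu a).ne'
    have := (Real.rpow_pos_of_pos hDu b).ne'
    field_simp
  rw [← himg, integrableOn_image_iff_integrableOn_abs_deriv_smul measurableSet_Ioo hderiv hinj,
    integral_image_eq_integral_abs_deriv_smul measurableSet_Ioo hderiv hinj,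
    integrableOn_congr_fun hcongr measurableSet_Ioo,
    setIntegral_congr_fun measurableSet_Ioo hcongr, MeasureTheory.integral_const_mul]
  exact ⟨(integrableOn_eulerIntegrand ha hb (by linarith) ⟨hε0.le, hε1.le⟩).const_mul _, rfl⟩

/-- Watson-type limit: the factor `(1 - y / T) ^ p * J (y / T)` only matters near `y / T = 0`. -/
lemma tendsto_integral_exp_mul_rpow_mul_one_sub_rpow_mul {q p θ C : ℝ} {J : ℝ → ℝ} (hq : -1 < q)
    (hp : -1 < p) (hθ : 0 < θ) (hJ : ContinuousOn J (Icc 0 1)) (hC : 0 ≤ C)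
    (hJC : ∀ ε ∈ Icc (0 : ℝ) 1, |J ε| ≤ C) :
    Tendsto (fun T : ℝ => ∫ y in Ioo 0 T,
        Real.exp (-(θ * y)) * y ^ q * ((1 - y / T) ^ p * J (y / T))) atTop
      (𝓝 (J 0 * (Real.Gamma (q + 1) / θ ^ (q + 1)))) := by
  set F : ℝ → ℝ → ℝ := fun T y =>
    Real.exp (-(θ * y)) * y ^ q * ((1 - y / T) ^ p * J (y / T)) with hF
  have hmem : ∀ {T y : ℝ}, y ∈ Ioo 0 T → y / T ∈ Icc (0 : ℝ) 1 := fun {T y} hy => by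
    have hT : 0 < T := hy.1.trans hy.2
    exact ⟨div_nonneg hy.1.le hT.le, (div_le_one hT).2 hy.2.le⟩
  have hmeas : ∀ T : ℝ, AEStronglyMeasurable (F T) (volume.restrict (Ioo 0 T)) := fun T => by
    refine AEStronglyMeasurable.mul (by fun_prop) (AEStronglyMeasurable.mul
      (Measurable.aestronglyMeasurable (by fun_prop)) ?_)
    exact (hJ.comp (by fun_prop) fun y hy => hmem hy).aestronglyMeasurable measurableSet_Ioo
  have hbeta : ∀ {T : ℝ}, 0 < T → IntegrableOn (fun y => y ^ q * (T - y) ^ p) (Ioo 0 T) :=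
    fun hT => (integrableOn_and_integral_Ioo_rpow_mul_sub_rpow hq hp hT).1
  have hle : ∀ {c T y : ℝ}, c ≤ y → y ∈ Ioo 0 T →
      ‖F T y‖ ≤ Real.exp (-(θ * c)) * C * T ^ (-p) * (y ^ q * (T - y) ^ p) := by
    intro c T y hcy hy
    have hT : 0 < T := hy.1.trans hy.2
    have hy0 := hy.1
    have hTy : 0 < T - y := sub_pos.2 hy.2
    have e1 : (1 - y / T) ^ p = (T - y) ^ p * T ^ (-p) := by
      rw [show 1 - y / T = (T - y) / T by field_simp, Real.div_rpow hTy.le hT.le,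
        Real.rpow_neg hT.le, div_eq_mul_inv]
    have h0 : 0 ≤ (T - y) ^ p * T ^ (-p) := by positivity
    rw [hF]
    simp only [Real.norm_eq_abs, abs_mul, Real.abs_exp, e1, abs_of_pos (Real.rpow_pos_of_pos hy0 q),
      abs_of_pos (Real.rpow_pos_of_pos hTy p), abs_of_pos (Real.rpow_pos_of_pos hT (-p))]
    have hexp : Real.exp (-(θ * y)) ≤ Real.exp (-(θ * c)) := by
      gcongr
    calc _ ≤ Real.exp (-(θ * c)) * y ^ q * ((T - y) ^ p * T ^ (-p) * C) := by
            gcongr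
            exact hJC _ (hmem hy)
      _ = _ := by ring
  have hint : ∀ {T : ℝ}, 0 < T → IntegrableOn (F T) (Ioo 0 T) := fun {T} hT => by
    refine ((hbeta hT).const_mul (Real.exp (-(θ * 0)) * C * T ^ (-p))).mono' (hmeas T) ?_
    filter_upwards [ae_restrict_mem measurableSet_Ioo] with y hy
    exact hle hy.1.le hy
  have hsplit : ∀ᶠ T : ℝ in atTop, (∫ y in Ioi 0, (Iic (T / 2)).indicator (F T) y)
      + ∫ y in Ioo (T / 2) T, F T y = ∫ y in Ioo 0 T, F T y := by
    filter_upwards [eventually_gt_atTop 0] with T hT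
    have hunion : Ioo 0 T = Ioc 0 (T / 2) ∪ Ioo (T / 2) T :=
      (Ioc_union_Ioo_eq_Ioo (by positivity) (by linarith)).symm
    have hi := hint hT
    rw [hunion, integrableOn_union] at hi
    rw [hunion, setIntegral_union (by
        rw [Set.disjoint_left]; intro y hy hy'; exact absurd hy.2 (not_le.2 hy'.1))
      measurableSet_Ioo hi.1 hi.2, setIntegral_indicator measurableSet_Iic, Ioi_inter_Iic]
  have htail : Tendsto (fun T : ℝ => ∫ y in Ioo (T / 2) T, F T y) atTop (𝓝 0) := by
    set B := ∫ x in Ioo (0 : ℝ) 1, x ^ q * (1 - x) ^ p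
    have hlim : Tendsto (fun T : ℝ => C * B * (T ^ (q + 1) * Real.exp (-(θ / 2) * T))) atTop
        (𝓝 0) := by
      simpa using (tendsto_rpow_mul_exp_neg_mul_atTop_nhds_zero (q + 1) (θ / 2)
        (by positivity)).const_mul (C * B)
    refine squeeze_zero_norm' ?_ hlim
    filter_upwards [eventually_gt_atTop 0] with T hT
    have hsub : Ioo (T / 2) T ⊆ Ioo 0 T := Ioo_subset_Ioo_left (by positivity)
    have hI := (hbeta hT).const_mul (Real.exp (-(θ * (T / 2))) * C * T ^ (-p))
    calc ‖∫ y in Ioo (T / 2) T, F T y‖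
        ≤ ∫ y in Ioo (T / 2) T,
            Real.exp (-(θ * (T / 2))) * C * T ^ (-p) * (y ^ q * (T - y) ^ p) := by
          refine norm_integral_le_of_norm_le (IntegrableOn.mono_set hI hsub) ?_
          filter_upwards [ae_restrict_mem measurableSet_Ioo] with y hy
          exact hle hy.1.le (hsub hy)
      _ ≤ ∫ y in Ioo 0 T,
            Real.exp (-(θ * (T / 2))) * C * T ^ (-p) * (y ^ q * (T - y) ^ p) := by
          refine setIntegral_mono_set hI ?_ hsub.eventuallyLE
          filter_upwards [ae_restrict_mem measurableSet_Ioo] with y hy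
          have := hy.1
          have : 0 < T - y := sub_pos.2 hy.2
          simp only [Pi.zero_apply]
          positivity
      _ = C * B * (T ^ (q + 1) * Real.exp (-(θ / 2) * T)) := by
          rw [MeasureTheory.integral_const_mul,
            (integrableOn_and_integral_Ioo_rpow_mul_sub_rpow hq hp hT).2,
            show q + p + 1 = q + 1 + p by ring, Real.rpow_add hT (q + 1) p, Real.rpow_neg hT.le,
            show -(θ / 2) * T = -(θ * (T / 2)) by ring]
          have := (Real.rpow_pos_of_pos hT p).ne'
          field_simp
          rfl
  have hmain : Tendsto (fun T : ℝ => ∫ y in Ioi 0, (Iic (T / 2)).indicator (F T) y) atTop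
      (𝓝 (∫ y in Ioi 0, y ^ (q + 1 - 1) * Real.exp (-(θ * y)) * J 0)) := by
    have hGamma : IntegrableOn (fun y : ℝ => y ^ q * Real.exp (-(θ * y))) (Ioi 0) := by
      simpa using integrableOn_rpow_mul_exp_neg_mul_rpow hq one_pos hθ
    refine tendsto_integral_filter_of_dominated_convergence
      (fun y => (1 + (1 / 2) ^ p) * C * (y ^ q * Real.exp (-(θ * y)))) ?_ ?_
      (hGamma.const_mul _) ?_
    · filter_upwards [eventually_gt_atTop 0] with T hT
      rw [aestronglyMeasurable_indicator_iff measurableSet_Iic,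
        Measure.restrict_restrict measurableSet_Iic, inter_comm, Ioi_inter_Iic]
      have hsub : Ioc 0 (T / 2) ⊆ Ioo 0 T := fun y hy => ⟨hy.1, hy.2.trans_lt (by linarith)⟩
      exact (hmeas T).mono_measure (Measure.restrict_mono hsub le_rfl)
    · filter_upwards [eventually_gt_atTop 0] with T hT
      filter_upwards [ae_restrict_mem measurableSet_Ioi] with y hy
      have hy0 : 0 < y := hy
      by_cases hyT : y ≤ T / 2
      · rw [indicator_of_mem (by exact hyT)]
        have hhalf : 1 / 2 ≤ 1 - y / T := by
          have : y / T ≤ 1 / 2 := by rw [div_le_iff₀ hT]; linarith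
          linarith
        have hone : 1 - y / T ≤ 1 := by
          have : 0 ≤ y / T := by positivity
          linarith
        have hpow : (1 - y / T) ^ p ≤ 1 + (1 / 2) ^ p := by
          have h2 : (0 : ℝ) < (1 / 2) ^ p := by positivity
          rcases le_total 0 p with h | h
          · have := Real.rpow_le_one (by linarith) hone h
            linarith
          · have := Real.rpow_le_rpow_of_nonpos (by norm_num) hhalf h
            linarith
        have hpow0 : 0 ≤ (1 - y / T) ^ p := Real.rpow_nonneg (by linarith) p
        simp only [hF, Real.norm_eq_abs, abs_mul, Real.abs_exp,
          abs_of_pos (Real.rpow_pos_of_pos hy0 q), abs_of_nonneg hpow0]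
        calc _ ≤ Real.exp (-(θ * y)) * y ^ q * ((1 + (1 / 2) ^ p) * C) := by
                gcongr
                exact hJC _ (hmem ⟨hy0, by linarith⟩)
          _ = _ := by ring
      · rw [indicator_of_notMem (by exact hyT), norm_zero]
        positivity
    · filter_upwards [ae_restrict_mem measurableSet_Ioi] with y hy
      have hy0 : 0 < y := hy
      have hdiv : Tendsto (fun T : ℝ => y / T) atTop (𝓝 0) :=
        tendsto_const_nhds.div_atTop tendsto_id
      have hJlim : Tendsto (fun T : ℝ => J (y / T)) atTop (𝓝 (J 0)) := by
        refine (hJ 0 (by simp)).tendsto.comp (tendsto_nhdsWithin_iff.2 ⟨hdiv, ?_⟩)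
        filter_upwards [eventually_gt_atTop y] with T hT using hmem ⟨hy0, hT⟩
      have hplim : Tendsto (fun T : ℝ => (1 - y / T) ^ p) atTop (𝓝 1) := by
        have := (hdiv.const_sub 1).rpow_const (p := p) (Or.inl (by norm_num))
        simpa using this
      have hFlim : Tendsto (fun T => F T y) atTop
          (𝓝 (y ^ (q + 1 - 1) * Real.exp (-(θ * y)) * J 0)) := by
        convert (hplim.mul hJlim).const_mul (Real.exp (-(θ * y)) * y ^ q) using 2
        rw [add_sub_cancel_right]
        ring
      refine hFlim.congr' ?_
      filter_upwards [eventually_ge_atTop (2 * y)] with T hT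
      rw [indicator_of_mem]
      simp only [mem_Iic]
      linarith
  have hval : ∫ y in Ioi (0 : ℝ), y ^ (q + 1 - 1) * Real.exp (-(θ * y)) * J 0
      = J 0 * (Real.Gamma (q + 1) / θ ^ (q + 1)) := by
    rw [MeasureTheory.integral_mul_const, Real.integral_rpow_mul_exp_neg_mul_Ioi (by linarith) hθ,
      Real.div_rpow zero_le_one hθ.le, Real.one_rpow]
    ring
  rw [← hval, ← add_zero (∫ y in Ioi (0 : ℝ), y ^ (q + 1 - 1) * Real.exp (-(θ * y)) * J 0)]
  exact (hmain.add htail).congr' hsplit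

lemma integral_mul_integral_eq_integral_eulerIntegral {a b β θ T : ℝ} (ha : -1 < a) (hb : -1 < b)
    (hb' : b < -(1 / 2)) (hp : -1 < a + β + b + 1) (hT : 0 < T) :
    ∫ s in (0 : ℝ)..T, s ^ a * (T - s) ^ b * (∫ t in s..T, Real.exp (θ * t) * t ^ β * (t - s) ^ b)
      = ∫ t in Ioo 0 T, Real.exp (θ * t) * t ^ β * (t ^ (a + b + 1) * (T - t) ^ (2 * b + 1) *
          T ^ (-(b + 1)) * eulerIntegral a b (a + 2 * b + 2) ((T - t) / T)) := by
  set G : ℝ → ℝ → ℝ := fun s t =>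
    Real.exp (θ * t) * t ^ β * (s ^ a * (T - s) ^ b * (t - s) ^ b) with hG
  set k : ℝ → ℝ → ℝ := fun s t => {z : ℝ × ℝ | z.1 < z.2}.indicator (Function.uncurry G) (s, t)
    with hk
  have hks : ∀ s t, k s t = (Ioi s).indicator (G s) t := fun s t => by
    simp [hk, indicator, Function.uncurry]
  have hkt : ∀ s t, k s t = (Iio t).indicator (fun s => G s t) s := fun s t => by
    simp [hk, indicator, Function.uncurry]
  have hmeas : Measurable (Function.uncurry k) := by
    have hG' : Measurable (Function.uncurry G) := by
      simp only [hG, Function.uncurry_def]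
      fun_prop
    exact hG'.indicator (measurableSet_lt measurable_fst measurable_snd)
  have hinter : ∀ t ∈ Ioo 0 T, Ioo 0 T ∩ Iio t = Ioo 0 t := fun t ht => by
    rw [Ioo_inter_Iio, min_eq_right ht.2.le]
  have hslice : ∀ t ∈ Ioo 0 T, IntegrableOn (fun s => k s t) (Ioo 0 T) ∧
      ∫ s in Ioo 0 T, k s t = Real.exp (θ * t) * t ^ β * (t ^ (a + b + 1) *
        (T - t) ^ (2 * b + 1) * T ^ (-(b + 1)) *
          eulerIntegral a b (a + 2 * b + 2) ((T - t) / T)) := fun t ht => by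
    obtain ⟨h1, h2⟩ := integrableOn_and_integral_rpow_mul_sub_rpow_mul_sub_rpow ha hb hb' ht.1 ht.2
    simp only [hkt]
    rw [setIntegral_indicator measurableSet_Iio, hinter t ht, IntegrableOn,
      integrable_indicator_iff measurableSet_Iio, IntegrableOn,
      Measure.restrict_restrict measurableSet_Iio, inter_comm, hinter t ht, ← h2,
      ← MeasureTheory.integral_const_mul]
    exact ⟨h1.const_mul _, rfl⟩
  have hknn : ∀ s ∈ Ioo 0 T, ∀ t ∈ Ioo 0 T, 0 ≤ k s t := fun s hs t ht => by
    rw [hks]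
    refine indicator_apply_nonneg ?_
    intro hst
    have h1 := hs.1
    have h2 := ht.1
    have h3 := sub_pos.2 hs.2
    have h4 : 0 < t - s := sub_pos.2 hst
    simp only [hG]
    positivity
  have hint : Integrable (Function.uncurry k)
      ((volume.restrict (Ioo 0 T)).prod (volume.restrict (Ioo 0 T))) := by
    rw [integrable_prod_iff' hmeas.aestronglyMeasurable]
    refine ⟨?_, ?_⟩
    · filter_upwards [ae_restrict_mem measurableSet_Ioo] with t ht using (hslice t ht).1
    · obtain ⟨C, hC, hJC⟩ := exists_eulerIntegral_le ha hb (e := a + 2 * b + 2) (by linarith)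
      have hbeta := (integrableOn_and_integral_Ioo_rpow_mul_sub_rpow (a := a + β + b + 1)
        (b := 2 * b + 1) hp (by linarith) hT).1
      refine (hbeta.const_mul (Real.exp (|θ| * T) * T ^ (-(b + 1)) * C)).mono'
        (AEStronglyMeasurable.integral_prod_right'
          (hmeas.comp measurable_swap).norm.aestronglyMeasurable) ?_
      filter_upwards [ae_restrict_mem measurableSet_Ioo] with t ht
      have ht0 := ht.1
      have hTt : 0 < T - t := sub_pos.2 ht.2
      have hε : (T - t) / T ∈ Icc (0 : ℝ) 1 :=
        ⟨by positivity, (div_le_one hT).2 (by linarith)⟩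
      have hJ0 := eulerIntegral_nonneg a b (a + 2 * b + 2) hε.1
      have hexp : Real.exp (θ * t) ≤ Real.exp (|θ| * T) := by
        have := le_abs_self θ
        have := ht.2.le
        gcongr
      have hnorm : ∫ s in Ioo 0 T, ‖Function.uncurry k (s, t)‖ = ∫ s in Ioo 0 T, k s t :=
        setIntegral_congr_fun measurableSet_Ioo fun s hs =>
          Real.norm_of_nonneg (hknn s hs t ht)
      rw [hnorm, (hslice t ht).2, Real.norm_of_nonneg (by positivity)]
      calc _ ≤ Real.exp (|θ| * T) * t ^ β * (t ^ (a + b + 1) * (T - t) ^ (2 * b + 1) *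
              T ^ (-(b + 1)) * C) := by
            gcongr
            exact hJC _ hε
        _ = _ := by
            rw [show a + β + b + 1 = β + (a + b + 1) by ring, Real.rpow_add ht0 β]
            ring
  calc _ = ∫ s in Ioo 0 T, ∫ t in Ioo 0 T, k s t := by
        rw [intervalIntegral.integral_of_le hT.le, integral_Ioc_eq_integral_Ioo]
        refine setIntegral_congr_fun measurableSet_Ioo fun s hs => ?_
        simp only [hks]
        rw [setIntegral_indicator measurableSet_Ioi, Ioo_inter_Ioi, max_eq_right hs.1.le,
          intervalIntegral.integral_of_le hs.2.le, integral_Ioc_eq_integral_Ioo,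
          ← MeasureTheory.integral_const_mul]
        congr 1
        ext t
        simp only [hG]
        ring
    _ = ∫ t in Ioo 0 T, ∫ s in Ioo 0 T, k s t := integral_integral_swap hint
    _ = _ := setIntegral_congr_fun measurableSet_Ioo fun t ht => (hslice t ht).2

/-- Lemma B.2, case `γ ∈ (-1, -1/2)`. -/
theorem stmt_12 (α β γ θ : ℝ) (hα : -(1/2 : ℝ) < α)
    (hαβγ : -(3/2 : ℝ) < α + β + γ) (hγ : -1 < γ) (hγ' : γ < -(1/2 : ℝ))
    (hθ : 0 < θ)
    (h : ℝ → ℝ)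
    (hdef : ∀ T : ℝ, h T = ∫ s in (0:ℝ)..T, s ^ (2*α) * (T - s) ^ γ *
      (∫ t in s..T, Real.exp (θ * t) * t ^ β * (t - s) ^ γ)) :
    Tendsto (fun T : ℝ => h T / (T ^ (2*α+β) * Real.exp (θ * T))) atTop
      (nhds ((Real.Gamma (γ+1) * Real.Gamma (-2*γ-1) * Real.Gamma (2*γ+2)
        / Real.Gamma (-γ)) / θ ^ (2*γ+2))) := by
  have ha : -1 < 2 * α := by linarith
  have he : -1 < 2 * α - (2 * α + 2 * γ + 2) := by linarith
  have hp : -1 < 2 * α + β + γ + 1 := by linarith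
  obtain ⟨C, hC, hJC⟩ := exists_eulerIntegral_le ha hγ he
  have hlim := tendsto_integral_exp_mul_rpow_mul_one_sub_rpow_mul (q := 2 * γ + 1) (by linarith)
    hp hθ (continuousOn_eulerIntegral ha hγ he) hC
    (fun ε hε => (abs_of_nonneg (eulerIntegral_nonneg _ _ _ hε.1)).trans_le (hJC ε hε))
  rw [eulerIntegral_zero hγ he] at hlim
  refine (hlim.congr' ?_).trans_eq ?_
  · filter_upwards [eventually_gt_atTop 0] with T hT
    rw [hdef, integral_mul_integral_eq_integral_eulerIntegral ha hγ hγ' hp hT,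
      ← integral_Ioc_eq_integral_Ioo, ← integral_Ioc_eq_integral_Ioo,
      ← intervalIntegral.integral_of_le hT.le, ← intervalIntegral.integral_of_le hT.le,
      ← intervalIntegral.integral_div]
    have hsub := intervalIntegral.integral_comp_sub_left (a := 0) (b := T)
      (fun t => Real.exp (θ * t) * t ^ β * (t ^ (2 * α + γ + 1) * (T - t) ^ (2 * γ + 1) *
        T ^ (-(γ + 1)) * eulerIntegral (2 * α) γ (2 * α + 2 * γ + 2) ((T - t) / T)) /
          (T ^ (2 * α + β) * Real.exp (θ * T))) T
    rw [sub_self, sub_zero] at hsub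
    rw [← hsub, intervalIntegral.integral_of_le hT.le, intervalIntegral.integral_of_le hT.le,
      integral_Ioc_eq_integral_Ioo, integral_Ioc_eq_integral_Ioo]
    refine setIntegral_congr_fun measurableSet_Ioo fun y hy => ?_
    have hTy : 0 < T - y := sub_pos.2 hy.2
    simp only [sub_sub_cancel]
    rw [show 1 - y / T = (T - y) / T by field_simp, Real.div_rpow hTy.le hT.le,
      show θ * (T - y) = -(θ * y) + θ * T by ring, Real.exp_add,
      show 2 * α + β + γ + 1 = β + (2 * α + γ + 1) by ring, Real.rpow_add hTy β,
      show β + (2 * α + γ + 1) = (2 * α + β) + (γ + 1) by ring, Real.rpow_add hT (2 * α + β),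
      Real.rpow_neg hT.le]
    have := (Real.rpow_pos_of_pos hT (2 * α + β)).ne'
    have := (Real.rpow_pos_of_pos hT (γ + 1)).ne'
    field_simp
  · congr 1
    rw [show 2 * α - (2 * α + 2 * γ + 2) + 1 = -2 * γ - 1 by ring,
      show 2 * α - (2 * α + 2 * γ + 2) + γ + 2 = -γ by ring,
      show 2 * γ + 1 + 1 = 2 * γ + 2 by ring]
    ring
end

section
/- Let α, β be real numbers with α > -1/2 and α + β − 1/2 > -3/2 (i.e. α + β > −1), let γ = −1/2, and let θ > 0. Define h(T) = ∫₀ᵀ s^{2α}(T−s)^{−1/2} (∫ₛᵀ e^{θt} t^β (t−s)^{−1/2} dt) ds for T > 0. Then lim_{T→+∞} h(T) / (T^{2α+β} e^{θT} log T) = 1/θ. -/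
open MeasureTheory Filter intervalIntegral

/-- The integral `∫₀¹ y ^ a (1 - y) ^ (-1/2) (1 - δ y) ^ (-1/2) dy`. -/
noncomputable def kernelIntegral (a δ : ℝ) : ℝ :=
  ∫ y in Set.Ioc (0 : ℝ) 1, y ^ a * (1 - y) ^ (-(1/2 : ℝ)) * (1 - δ * y) ^ (-(1/2 : ℝ))

lemma rpow_neg_half_eq_zero {x : ℝ} (hx : x ≤ 0) : x ^ (-(1/2 : ℝ)) = 0 := by
  rcases hx.lt_or_eq with hx | rfl
  · rw [Real.rpow_def_of_neg hx, show -(1/2 : ℝ) * Real.pi = -(Real.pi / 2) by ring,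
      Real.cos_neg, Real.cos_pi_div_two, mul_zero]
  · exact Real.zero_rpow (by norm_num)

lemma rpow_neg_half_nonneg (x : ℝ) : 0 ≤ x ^ (-(1/2 : ℝ)) := by
  rcases le_total x 0 with hx | hx
  · exact (rpow_neg_half_eq_zero hx).ge
  · exact Real.rpow_nonneg hx _

lemma rpow_neg_half_anti {x y : ℝ} (hx : 0 < x) (hxy : x ≤ y) :
    y ^ (-(1/2 : ℝ)) ≤ x ^ (-(1/2 : ℝ)) :=
  Real.rpow_le_rpow_of_nonpos hx hxy (by norm_num)

lemma mul_rpow_neg_half_sq {x : ℝ} (hx : 0 < x) :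
    x * x ^ (-(1/2 : ℝ)) * x ^ (-(1/2 : ℝ)) = 1 := by
  rw [mul_assoc, ← Real.rpow_add hx]
  norm_num [Real.rpow_neg_one, hx.ne']

lemma integrableOn_rpow_mul_one_sub_rpow {a b : ℝ} (ha : -1 < a) (hb : -1 < b) :
    IntegrableOn (fun y : ℝ => y ^ a * (1 - y) ^ b) (Set.Ioc 0 1) := by
  have h := Complex.betaIntegral_convergent (u := ((a + 1 : ℝ) : ℂ)) (v := ((b + 1 : ℝ) : ℂ))
    (by rw [Complex.ofReal_re]; linarith) (by rw [Complex.ofReal_re]; linarith)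
  rw [intervalIntegrable_iff_integrableOn_Ioc_of_le zero_le_one] at h
  refine IntegrableOn.congr_fun (Integrable.re h) (fun y hy => ?_) measurableSet_Ioc
  have h1 : ((a + 1 : ℝ) : ℂ) - 1 = (a : ℂ) := by push_cast; ring
  have h2 : ((b + 1 : ℝ) : ℂ) - 1 = (b : ℂ) := by push_cast; ring
  simp only [h1, h2]
  rw [← Complex.ofReal_cpow hy.1.le, ← Complex.ofReal_one, ← Complex.ofReal_sub,
    ← Complex.ofReal_cpow (by linarith [hy.2]), ← Complex.ofReal_mul]
  exact Complex.ofReal_re _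

lemma integrableOn_kernel {a δ : ℝ} (ha : -1 < a) (h0 : 0 ≤ δ) (h1 : δ < 1) :
    IntegrableOn (fun y : ℝ => y ^ a * (1 - y) ^ (-(1/2 : ℝ)) * (1 - δ * y) ^ (-(1/2 : ℝ)))
      (Set.Ioc 0 1) := by
  refine Integrable.mul_bdd (c := (1 - δ) ^ (-(1/2 : ℝ)))
    (integrableOn_rpow_mul_one_sub_rpow ha (by norm_num)) ?_ ?_
  · exact Measurable.aestronglyMeasurable (by fun_prop)
  · refine ae_restrict_of_forall_mem measurableSet_Ioc fun y hy => ?_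
    rw [Real.norm_of_nonneg (rpow_neg_half_nonneg _)]
    exact rpow_neg_half_anti (by linarith) (by nlinarith [hy.1, hy.2])

lemma kernelIntegral_nonneg (a δ : ℝ) : 0 ≤ kernelIntegral a δ :=
  setIntegral_nonneg measurableSet_Ioc fun _ hy =>
    mul_nonneg (mul_nonneg (Real.rpow_nonneg hy.1.le _) (rpow_neg_half_nonneg _))
      (rpow_neg_half_nonneg _)

lemma kernelIntegral_le_mul_rpow {a δ : ℝ} (ha : -1 < a) (h0 : 0 ≤ δ) (h1 : δ < 1) :
    kernelIntegral a δ ≤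
      (∫ y in Set.Ioc (0 : ℝ) 1, y ^ a * (1 - y) ^ (-(1/2 : ℝ))) * (1 - δ) ^ (-(1/2 : ℝ)) := by
  rw [← MeasureTheory.integral_mul_const]
  refine setIntegral_mono_on (integrableOn_kernel ha h0 h1)
    ((integrableOn_rpow_mul_one_sub_rpow ha (by norm_num)).mul_const _) measurableSet_Ioc
    fun y hy => ?_
  exact mul_le_mul_of_nonneg_left (rpow_neg_half_anti (by linarith) (by nlinarith [hy.1, hy.2]))
    (mul_nonneg (Real.rpow_nonneg hy.1.le _) (rpow_neg_half_nonneg _))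

lemma abs_rpow_sub_one_le {a y : ℝ} (ha : -1 < a) (h0 : 0 < y) (h1 : y ≤ 1) :
    |y ^ a - 1| ≤ (1 + |a|) * (1 + y ^ a) * (1 - y) := by
  have hy : 0 < y ^ a := Real.rpow_pos_of_pos h0 a
  have habs := abs_nonneg a
  have key : |y ^ a - 1| ≤ (1 - y) ∨ |y ^ a - 1| ≤ |a| * (1 - y) ∨
      |y ^ a - 1| ≤ y ^ a * (1 - y) := by
    rcases lt_or_ge a 0 with hneg | hpos
    · right; right
      have h2 : 1 ≤ y ^ a := Real.one_le_rpow_of_pos_of_le_one_of_nonpos h0 h1 hneg.le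
      have h3 : y ^ (1:ℝ) ≤ y ^ (-a) := Real.rpow_le_rpow_of_exponent_ge h0 h1 (by linarith)
      have h4 : y ^ a * y ^ (-a) = 1 := by rw [← Real.rpow_add h0]; simp
      rw [Real.rpow_one] at h3
      rw [abs_of_nonneg (by linarith)]
      nlinarith
    · have h2 : y ^ a ≤ 1 := Real.rpow_le_one h0.le h1 hpos
      rw [abs_of_nonpos (by linarith)]
      rcases le_total a 1 with h | h
      · left
        have h3 := Real.rpow_le_rpow_of_exponent_ge h0 h1 h
        rw [Real.rpow_one] at h3
        linarith
      · right; left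
        have h3 := one_add_mul_self_le_rpow_one_add (s := y - 1) (by linarith) h
        rw [abs_of_nonneg hpos]
        rw [show 1 + (y - 1) = y by ring] at h3
        linarith
  have hy1 : 0 ≤ 1 - y := by linarith
  have e1 : 0 ≤ y ^ a * (1 - y) := by positivity
  have e2 : 0 ≤ |a| * (1 - y) := by positivity
  have e3 : 0 ≤ |a| * (y ^ a * (1 - y)) := by positivity
  rcases key with h | h | h <;> nlinarith

lemma abs_kernelIntegral_sub_le {a δ : ℝ} (ha : -1 < a) (h0 : 0 ≤ δ) (h1 : δ < 1) :
    |kernelIntegral a δ - kernelIntegral 0 δ| ≤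
      ∫ y in Set.Ioc (0 : ℝ) 1, (1 + |a|) * (1 + y ^ a) := by
  rw [kernelIntegral, kernelIntegral,
    ← MeasureTheory.integral_sub (integrableOn_kernel ha h0 h1)
      (integrableOn_kernel (by norm_num) h0 h1), ← Real.norm_eq_abs]
  have hint : IntegrableOn (fun y : ℝ => y ^ a) (Set.Ioc 0 1) := by
    rw [← intervalIntegrable_iff_integrableOn_Ioc_of_le zero_le_one]
    exact intervalIntegrable_rpow' ha
  refine norm_integral_le_of_norm_le
    (((integrable_const (1:ℝ)).add hint).const_mul (1 + |a|))
    (ae_restrict_of_forall_mem measurableSet_Ioc fun y hy => ?_)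
  have hya := Real.rpow_pos_of_pos hy.1 a
  rw [Real.rpow_zero, ← sub_mul, ← sub_mul, norm_mul, norm_mul,
    Real.norm_of_nonneg (rpow_neg_half_nonneg _), Real.norm_of_nonneg (rpow_neg_half_nonneg _),
    Real.norm_eq_abs]
  rcases hy.2.eq_or_lt with rfl | hlt
  · simp; positivity
  · calc |y ^ a - 1| * (1 - y) ^ (-(1/2 : ℝ)) * (1 - δ * y) ^ (-(1/2 : ℝ))
      _ ≤ (1 + |a|) * (1 + y ^ a) * (1 - y) * (1 - y) ^ (-(1/2 : ℝ)) * (1 - y) ^ (-(1/2 : ℝ)) := by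
        have := rpow_neg_half_nonneg (1 - y)
        have := rpow_neg_half_nonneg (1 - δ * y)
        have : 0 ≤ 1 - y := by linarith
        refine mul_le_mul (mul_le_mul_of_nonneg_right (abs_rpow_sub_one_le ha hy.1 hy.2) ‹_›)
          (rpow_neg_half_anti (by linarith) (by nlinarith [hy.1])) ‹_› (by positivity)
      _ = (1 + |a|) * (1 + y ^ a) * ((1 - y) * (1 - y) ^ (-(1/2 : ℝ)) * (1 - y) ^ (-(1/2 : ℝ))) := by
        ring
      _ = (1 + |a|) * (1 + y ^ a) := by rw [mul_rpow_neg_half_sq (by linarith), mul_one]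

lemma rpow_neg_half_eq {x : ℝ} (hx : 0 ≤ x) : x ^ (-(1/2 : ℝ)) = (√x)⁻¹ := by
  rw [Real.rpow_neg hx, Real.sqrt_eq_rpow]

lemma kernelIntegral_zero_left {δ : ℝ} (h0 : 0 < δ) (h1 : δ < 1) :
    kernelIntegral 0 δ = (2 * Real.log (1 + √δ) - Real.log (1 - δ)) / √δ := by
  have hs : 0 < √δ := Real.sqrt_pos.2 h0
  have hsq : √δ * √δ = δ := Real.mul_self_sqrt h0.le
  have hpos : ∀ y ∈ Set.Icc (0:ℝ) 1, 0 < √δ * √(1 - y) + √(1 - δ * y) := fun y hy => by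
    have : 0 < √(1 - δ * y) := Real.sqrt_pos.2 (by nlinarith [hy.1, hy.2])
    positivity
  have hint := integrableOn_kernel (a := 0) (by norm_num) h0.le h1
  rw [kernelIntegral, ← integral_of_le zero_le_one,
    integral_eq_sub_of_hasDerivAt_of_le
      (f := fun y => -(2 / √δ) * Real.log (√δ * √(1 - y) + √(1 - δ * y))) zero_le_one]
  · have : Real.log √(1 - δ) = Real.log (1 - δ) / 2 := Real.log_sqrt (by linarith)
    simp only [sub_self, Real.sqrt_zero, mul_zero, zero_add, mul_one, sub_zero, Real.sqrt_one, this]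
    rw [add_comm 1 √δ]
    field_simp
    ring
  · refine ContinuousOn.mul continuousOn_const (ContinuousOn.log ?_ fun y hy => (hpos y hy).ne')
    fun_prop
  · intro y hy
    have hy1 : 0 < 1 - y := by linarith [hy.2]
    have hy2 : 0 < 1 - δ * y := by nlinarith [hy.1, hy.2]
    have p := hpos y ⟨hy.1.le, hy.2.le⟩
    have d1 : HasDerivAt (fun y : ℝ => √(1 - y)) (-1 / (2 * √(1 - y))) y :=
      ((hasDerivAt_id y).const_sub 1).sqrt hy1.ne'
    have d2 : HasDerivAt (fun y : ℝ => √(1 - δ * y)) (-(δ * 1) / (2 * √(1 - δ * y))) y :=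
      (((hasDerivAt_id y).const_mul δ).const_sub 1).sqrt hy2.ne'
    have d := (((d1.const_mul √δ).add d2).log p.ne').const_mul (-(2 / √δ))
    refine d.congr_deriv ?_
    have q1 : 0 < √(1 - y) := Real.sqrt_pos.2 hy1
    have q2 : 0 < √(1 - δ * y) := Real.sqrt_pos.2 hy2
    rw [rpow_neg_half_eq hy1.le, rpow_neg_half_eq hy2.le, Real.rpow_zero]
    simp only [Pi.add_apply]
    generalize √(1 - δ * y) = r at *
    generalize √(1 - y) = q at *
    field_simp
    linear_combination -q * hsq
  · rwa [intervalIntegrable_iff_integrableOn_Ioc_of_le zero_le_one]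

lemma kernel_scaling {a t T y : ℝ} (ht : 0 < t) (htT : t < T) (hy : y ∈ Set.Ioc (0 : ℝ) 1) :
    (t * y) ^ a * (T - t * y) ^ (-(1/2 : ℝ)) * (t - t * y) ^ (-(1/2 : ℝ)) =
      t ^ (a - 1/2) * T ^ (-(1/2 : ℝ)) *
        (y ^ a * (1 - y) ^ (-(1/2 : ℝ)) * (1 - t / T * y) ^ (-(1/2 : ℝ))) := by
  have hT : 0 < T := ht.trans htT
  have hle : t / T * y ≤ 1 := by
    have : t / T ≤ 1 := (div_le_one hT).2 htT.le
    have : 0 < t / T := by positivity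
    nlinarith [hy.1, hy.2]
  rw [show T - t * y = T * (1 - t / T * y) by field_simp, show t - t * y = t * (1 - y) by ring,
    Real.mul_rpow ht.le hy.1.le, Real.mul_rpow hT.le (by linarith),
    Real.mul_rpow ht.le (by linarith [hy.2]), show a - 1/2 = a + -(1/2 : ℝ) by ring,
    Real.rpow_add ht]
  ring

lemma intervalIntegrable_scaled_kernel {a t T : ℝ} (ha : -1 < a) (ht : 0 < t) (htT : t < T) :
    IntervalIntegrable
      (fun s : ℝ => s ^ a * (T - s) ^ (-(1/2 : ℝ)) * (t - s) ^ (-(1/2 : ℝ))) volume 0 t := by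
  have hT : 0 < T := ht.trans htT
  have h := (integrableOn_kernel ha (div_pos ht hT).le ((div_lt_one hT).2 htT)).const_mul
    (t ^ (a - 1/2) * T ^ (-(1/2 : ℝ)))
  have h' : IntervalIntegrable (fun y : ℝ => (t * y) ^ a * (T - t * y) ^ (-(1/2 : ℝ)) *
      (t - t * y) ^ (-(1/2 : ℝ))) volume (0 / t) (t / t) := by
    rw [zero_div, div_self ht.ne', intervalIntegrable_iff_integrableOn_Ioc_of_le zero_le_one]
    exact IntegrableOn.congr_fun h (fun y hy => (kernel_scaling ht htT hy).symm) measurableSet_Ioc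
  exact (IntervalIntegrable.comp_mul_left_iff ht.ne').1 h'

lemma integrableOn_scaled_kernel {a t T : ℝ} (ha : -1 < a) (ht : 0 < t) (htT : t < T) :
    IntegrableOn
      (fun s : ℝ => s ^ a * (T - s) ^ (-(1/2 : ℝ)) * (t - s) ^ (-(1/2 : ℝ))) (Set.Ioc 0 T) := by
  have h := intervalIntegrable_scaled_kernel ha ht htT
  rw [intervalIntegrable_iff_integrableOn_Ioc_of_le ht.le] at h
  refine h.of_forall_sdiff_eq_zero measurableSet_Ioc fun s hs => ?_
  have : t < s := by by_contra! hc; exact hs.2 ⟨hs.1.1, hc⟩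
  rw [rpow_neg_half_eq_zero (by linarith : t - s ≤ 0), mul_zero]

lemma setIntegral_scaled_kernel {a t T : ℝ} (ht : 0 < t) (htT : t < T) :
    ∫ s in Set.Ioc 0 T, s ^ a * (T - s) ^ (-(1/2 : ℝ)) * (t - s) ^ (-(1/2 : ℝ)) =
      t ^ (a + 1/2) * T ^ (-(1/2 : ℝ)) * kernelIntegral a (t / T) := by
  rw [setIntegral_eq_of_subset_of_forall_sdiff_eq_zero measurableSet_Ioc
    (Set.Ioc_subset_Ioc_right htT.le), ← integral_of_le ht.le]
  · have h := mul_integral_comp_mul_left (a := 0) (b := 1)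
      (f := fun s : ℝ => s ^ a * (T - s) ^ (-(1/2 : ℝ)) * (t - s) ^ (-(1/2 : ℝ))) t
    rw [mul_zero, mul_one] at h
    rw [← h, integral_of_le zero_le_one, setIntegral_congr_fun measurableSet_Ioc
      (fun y hy => kernel_scaling ht htT hy), MeasureTheory.integral_const_mul, kernelIntegral,
      show a + 1/2 = 1 + (a - 1/2) by ring, Real.rpow_add ht, Real.rpow_one]
    ring
  · intro s hs
    have : t < s := by by_contra! hc; exact hs.2 ⟨hs.1.1, hc⟩
    rw [rpow_neg_half_eq_zero (by linarith : t - s ≤ 0), mul_zero]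

lemma measurable_kernelIntegral (a : ℝ) : Measurable (kernelIntegral a) := by
  have : StronglyMeasurable (fun z : ℝ × ℝ => z.2 ^ a * (1 - z.2) ^ (-(1/2 : ℝ)) *
      (1 - z.1 * z.2) ^ (-(1/2 : ℝ))) := Measurable.stronglyMeasurable (by fun_prop)
  exact this.integral_prod_right'.measurable

lemma integrableOn_exp_mul_rpow_mul_kernelIntegral {a p θ T : ℝ} (ha : -1 < a) (hp : -1 < p)
    (hθ : 0 < θ) (hT : 0 < T) :
    IntegrableOn (fun t => Real.exp (θ * t) * t ^ p * kernelIntegral a (t / T))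
      (Set.Ioo 0 T) := by
  set B := ∫ y in Set.Ioc (0 : ℝ) 1, y ^ a * (1 - y) ^ (-(1/2 : ℝ))
  have hg : IntegrableOn (fun t : ℝ => (t / T) ^ p * (1 - t / T) ^ (-(1/2 : ℝ))) (Set.Ioo 0 T) := by
    have h := integrableOn_rpow_mul_one_sub_rpow (b := -(1/2)) hp (by norm_num)
    rw [← intervalIntegrable_iff_integrableOn_Ioc_of_le zero_le_one] at h
    have h' := (IntervalIntegrable.comp_mul_left_iff (c := T⁻¹) (by positivity)).2 h
    rw [zero_div, one_div T⁻¹, inv_inv, intervalIntegrable_iff_integrableOn_Ioc_of_le hT.le] at h'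
    refine (h'.mono_set Set.Ioo_subset_Ioc_self).congr_fun (fun t _ => ?_) measurableSet_Ioo
    simp only [div_eq_inv_mul]
  refine Integrable.mono' (hg.const_mul (Real.exp (θ * T) * T ^ p * B)) ?_
    (ae_restrict_of_forall_mem measurableSet_Ioo fun t ht => ?_)
  · have := (measurable_kernelIntegral a).comp (measurable_id.div_const T)
    exact Measurable.aestronglyMeasurable (by fun_prop)
  · have htp := Real.rpow_pos_of_pos ht.1 p
    have hM := kernelIntegral_nonneg a (t / T)
    rw [Real.norm_of_nonneg (by positivity), Real.div_rpow ht.1.le hT.le]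
    have hTp := Real.rpow_pos_of_pos hT p
    calc Real.exp (θ * t) * t ^ p * kernelIntegral a (t / T)
      _ ≤ Real.exp (θ * T) * t ^ p * (B * (1 - t / T) ^ (-(1/2 : ℝ))) := by
        gcongr
        · exact ht.2.le
        · exact kernelIntegral_le_mul_rpow ha (div_pos ht.1 hT).le ((div_lt_one hT).2 ht.2)
      _ = _ := by field_simp

lemma iterated_integral_eq {a β θ T : ℝ} (ha : -1 < a) (hp : -1 < a + β + 1/2) (hθ : 0 < θ)
    (hT : 0 < T) :
    ∫ s in (0:ℝ)..T, s ^ a * (T - s) ^ (-(1/2 : ℝ)) *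
        (∫ t in s..T, Real.exp (θ * t) * t ^ β * (t - s) ^ (-(1/2 : ℝ))) =
      T ^ (-(1/2 : ℝ)) *
        ∫ t in Set.Ioo 0 T, Real.exp (θ * t) * t ^ (a + β + 1/2) * kernelIntegral a (t / T) := by
  let F : ℝ → ℝ → ℝ := fun s t => s ^ a * (T - s) ^ (-(1/2 : ℝ)) *
    (Real.exp (θ * t) * t ^ β * (t - s) ^ (-(1/2 : ℝ)))
  have hF : ∀ s t, F s t = Real.exp (θ * t) * t ^ β *
      (s ^ a * (T - s) ^ (-(1/2 : ℝ)) * (t - s) ^ (-(1/2 : ℝ))) := fun s t => by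
    simp only [F]; ring
  have hinner : ∀ t ∈ Set.Ioo 0 T, ∫ s in Set.Ioc 0 T, F s t =
      T ^ (-(1/2 : ℝ)) *
        (Real.exp (θ * t) * t ^ (a + β + 1/2) * kernelIntegral a (t / T)) := fun t ht => by
    simp_rw [hF]
    rw [MeasureTheory.integral_const_mul, setIntegral_scaled_kernel ht.1 ht.2,
      show a + β + 1/2 = β + (a + 1/2) by ring, Real.rpow_add ht.1 β (a + 1/2)]
    ring
  have hFmeas : Measurable (Function.uncurry F) := by
    simp only [Function.uncurry_def, F]; fun_prop
  have hint : Integrable (Function.uncurry F)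
      ((volume.restrict (Set.Ioc 0 T)).prod (volume.restrict (Set.Ioo 0 T))) := by
    rw [integrable_prod_iff' hFmeas.aestronglyMeasurable]
    constructor
    · refine ae_restrict_of_forall_mem measurableSet_Ioo fun t ht => ?_
      simp only [Function.uncurry_apply_pair, hF]
      exact (integrableOn_scaled_kernel ha ht.1 ht.2).const_mul _
    · refine ((integrableOn_exp_mul_rpow_mul_kernelIntegral ha hp hθ hT).const_mul
        (T ^ (-(1/2 : ℝ)))).congr (ae_restrict_of_forall_mem measurableSet_Ioo fun t ht => ?_)
      simp only [Function.uncurry_apply_pair]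
      rw [← hinner t ht]
      refine setIntegral_congr_fun measurableSet_Ioc fun s hs => (Real.norm_of_nonneg ?_).symm
      exact mul_nonneg (mul_nonneg (Real.rpow_nonneg hs.1.le _) (rpow_neg_half_nonneg _))
        (mul_nonneg (mul_nonneg (Real.exp_nonneg _) (Real.rpow_nonneg ht.1.le _))
          (rpow_neg_half_nonneg _))
  calc _ = ∫ s in Set.Ioc 0 T, ∫ t in Set.Ioo 0 T, F s t := by
        rw [integral_of_le hT.le]
        refine setIntegral_congr_fun measurableSet_Ioc fun s hs => ?_
        simp only [F]
        rw [MeasureTheory.integral_const_mul, ← integral_Ioc_eq_integral_Ioo,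
          integral_of_le hs.2, setIntegral_eq_of_subset_of_forall_sdiff_eq_zero measurableSet_Ioc
            (Set.Ioc_subset_Ioc_left hs.1.le)]
        intro t ht
        have : t ≤ s := by by_contra! hc; exact ht.2 ⟨hc, ht.1.2⟩
        rw [rpow_neg_half_eq_zero (by linarith : t - s ≤ 0), mul_zero]
    _ = ∫ t in Set.Ioo 0 T, ∫ s in Set.Ioc 0 T, F s t := integral_integral_swap hint
    _ = _ := by
        rw [setIntegral_congr_fun measurableSet_Ioo hinner, MeasureTheory.integral_const_mul]

lemma exists_kernelIntegral_le {a : ℝ} (ha : -1 < a) :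
    ∃ K, 0 ≤ K ∧ ∀ δ, 1/2 ≤ δ → δ < 1 → kernelIntegral a δ ≤ K - 2 * Real.log (1 - δ) := by
  set C := ∫ y in Set.Ioc (0 : ℝ) 1, (1 + |a|) * (1 + y ^ a)
  have hC : 0 ≤ C := setIntegral_nonneg measurableSet_Ioc fun y hy => by
    have := Real.rpow_pos_of_pos hy.1 a
    positivity
  have hlog2 := Real.log_nonneg (one_le_two (α := ℝ))
  refine ⟨C + 4 * Real.log 2, by positivity, fun δ h h1 => ?_⟩
  have h0 : 0 < δ := by linarith
  have hdiff := (abs_le.1 (abs_kernelIntegral_sub_le ha h0.le h1)).2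
  have hs : 1/2 ≤ √δ := Real.le_sqrt_of_sq_le (by linarith)
  have hs1 : √δ ≤ 1 := Real.sqrt_le_one.2 h1.le
  have hlog : Real.log (1 + √δ) ≤ Real.log 2 := Real.log_le_log (by linarith) (by linarith)
  have hlog' : Real.log (1 - δ) ≤ 0 := Real.log_nonpos (by linarith) (by linarith)
  have hM : kernelIntegral 0 δ ≤ 4 * Real.log 2 - 2 * Real.log (1 - δ) := by
    rw [kernelIntegral_zero_left h0 h1, div_le_iff₀ (by linarith)]
    nlinarith
  linarith

lemma tendsto_kernelIntegral_div_log {a u : ℝ} (ha : -1 < a) (hu : 0 < u) :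
    Tendsto (fun T => kernelIntegral a (1 - u / T) / Real.log T) atTop (nhds 1) := by
  have hδ : Tendsto (fun T : ℝ => 1 - u / T) atTop (nhds 1) := by
    simpa using (tendsto_const_nhds (x := (1:ℝ))).sub
      (tendsto_const_nhds (x := u) |>.div_atTop tendsto_id)
  have hsqrt : Tendsto (fun T : ℝ => √(1 - u / T)) atTop (nhds 1) := by
    simpa using hδ.sqrt
  have hdiff : Tendsto (fun T => (kernelIntegral a (1 - u / T) - kernelIntegral 0 (1 - u / T)) /
      Real.log T) atTop (nhds 0) := by
    refine squeeze_zero_norm' ?_ ((tendsto_const_nhds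
      (x := ∫ y in Set.Ioc (0 : ℝ) 1, (1 + |a|) * (1 + y ^ a))).div_atTop Real.tendsto_log_atTop)
    filter_upwards [eventually_gt_atTop u, eventually_gt_atTop 1] with T hT hT1
    have hlog := Real.log_pos hT1
    have h1 : u / T < 1 := (div_lt_one (hu.trans hT)).2 hT
    have h0 : 0 < u / T := div_pos hu (hu.trans hT)
    rw [norm_div, Real.norm_of_nonneg hlog.le, Real.norm_eq_abs]
    gcongr
    exact abs_kernelIntegral_sub_le ha (by linarith) (by linarith)
  have hlim : Tendsto (fun T => ((2 * Real.log (1 + √(1 - u / T)) - Real.log u) / Real.log T + 1) /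
      √(1 - u / T)) atTop (nhds 1) := by
    have h := (((hsqrt.const_add 1).log (by norm_num)).const_mul 2).sub_const (Real.log u)
    have h' := ((h.div_atTop Real.tendsto_log_atTop).add_const 1).div hsqrt one_ne_zero
    rwa [zero_add, div_one] at h'
  have hsum := hdiff.add hlim
  rw [zero_add] at hsum
  refine hsum.congr' ?_
  filter_upwards [eventually_gt_atTop u, eventually_gt_atTop 1] with T hT hT1
  have hlog := Real.log_pos hT1
  have hT0 : 0 < T := hu.trans hT
  have h1 : u / T < 1 := (div_lt_one hT0).2 hT
  have h0 : 0 < u / T := div_pos hu hT0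
  have hs : 0 < √(1 - u / T) := Real.sqrt_pos.2 (by linarith)
  rw [kernelIntegral_zero_left (by linarith) (by linarith), sub_sub_cancel,
    Real.log_div hu.ne' hT0.ne']
  field_simp
  ring

lemma abs_log_le_add_rpow {u : ℝ} (hu : 0 < u) : |Real.log u| ≤ u + 2 * u ^ (-(1/2 : ℝ)) := by
  have hr := Real.rpow_pos_of_pos hu (-(1/2))
  refine abs_le.2 ⟨?_, ?_⟩
  · have h := Real.log_le_rpow_div (inv_pos.2 hu).le (ε := 1/2) (by norm_num)
    rw [Real.log_inv, Real.inv_rpow hu.le, ← Real.rpow_neg hu.le] at h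
    linarith
  · linarith [Real.log_le_self hu.le]

lemma rpow_le_two_rpow_abs {x : ℝ} (p : ℝ) (h : 1/2 ≤ x) (h1 : x ≤ 1) : x ^ p ≤ 2 ^ |p| := by
  have h0 : 0 < x := by linarith
  calc x ^ p ≤ x ^ (-|p|) := Real.rpow_le_rpow_of_exponent_ge h0 h1 (neg_abs_le p)
    _ = x⁻¹ ^ |p| := by rw [Real.rpow_neg h0.le, Real.inv_rpow h0.le]
    _ ≤ 2 ^ |p| := Real.rpow_le_rpow (by positivity)
      ((inv_le_comm₀ two_pos h0).1 (by linarith)) (abs_nonneg p)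

/-- The part `t > T / 2` of the integral, after the substitution `t = T - u`. -/
lemma tendsto_setIntegral_upper {a p θ : ℝ} (ha : -1 < a) (hθ : 0 < θ) :
    Tendsto (fun T => ∫ u in Set.Ioc 0 (T / 2), Real.exp (-θ * u) * (1 - u / T) ^ p *
      (kernelIntegral a (1 - u / T) / Real.log T)) atTop (nhds (1 / θ)) := by
  obtain ⟨K, hK, hM⟩ := exists_kernelIntegral_le ha
  have hexp : ∫ u in Set.Ioi (0:ℝ), Real.exp (-θ * u) = 1 / θ := by
    rw [integral_exp_mul_Ioi (by linarith)]
    simp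
  have key : Tendsto (fun T => ∫ u in Set.Ioi (0:ℝ), (Set.Ioc 0 (T / 2)).indicator
      (fun u => Real.exp (-θ * u) * (1 - u / T) ^ p *
        (kernelIntegral a (1 - u / T) / Real.log T)) u) atTop
      (nhds (∫ u in Set.Ioi (0:ℝ), Real.exp (-θ * u))) := by
    refine tendsto_integral_filter_of_dominated_convergence
      (fun u => (2 ^ |p| * (K + 2)) * (u ^ (0:ℝ) * Real.exp (-θ * u ^ (1:ℝ))) +
        (2 ^ |p| * 2) * (u ^ (1:ℝ) * Real.exp (-θ * u ^ (1:ℝ))) +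
        (2 ^ |p| * 4) * (u ^ (-(1/2:ℝ)) * Real.exp (-θ * u ^ (1:ℝ)))) ?_ ?_ ?_ ?_
    · refine Eventually.of_forall fun T => ?_
      have := (measurable_kernelIntegral a).comp
        (measurable_const.sub (measurable_id.div_const T) : Measurable fun u : ℝ => 1 - u / T)
      exact (Measurable.indicator (by fun_prop) measurableSet_Ioc).aestronglyMeasurable
    · filter_upwards [eventually_ge_atTop (Real.exp 1)] with T hT
      have hT0 : 0 < T := (Real.exp_pos 1).trans_le hT
      have hlog : 1 ≤ Real.log T := (Real.le_log_iff_exp_le hT0).2 hT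
      refine ae_restrict_of_forall_mem measurableSet_Ioi fun u (hu : 0 < u) => ?_
      have hr := Real.rpow_pos_of_pos hu (-(1/2))
      have hc : (0:ℝ) < 2 ^ |p| := by positivity
      by_cases hmem : u ∈ Set.Ioc 0 (T / 2)
      · have hle : u / T ≤ 1/2 := by rw [div_le_iff₀ hT0]; linarith [hmem.2]
        have hpos : 0 < u / T := div_pos hu hT0
        have hM0 := kernelIntegral_nonneg a (1 - u / T)
        have hbase : 0 < 1 - u / T := by linarith
        rw [Set.indicator_of_mem hmem, Real.norm_of_nonneg (by positivity)]
        have hM1 : kernelIntegral a (1 - u / T) / Real.log T ≤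
            K + 2 + 2 * u + 4 * u ^ (-(1/2:ℝ)) := by
          have h1 := hM (1 - u / T) (by linarith) (by linarith)
          rw [sub_sub_cancel, Real.log_div hu.ne' hT0.ne'] at h1
          have h2 := abs_log_le_add_rpow hu
          have h3 := neg_abs_le (Real.log u)
          rw [div_le_iff₀ (by linarith)]
          nlinarith [mul_nonneg (by positivity : 0 ≤ K + 2 * u + 4 * u ^ (-(1/2:ℝ)))
            (sub_nonneg.2 hlog)]
        calc _ ≤ Real.exp (-θ * u) * 2 ^ |p| * (K + 2 + 2 * u + 4 * u ^ (-(1/2:ℝ))) := by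
              gcongr
              exact rpow_le_two_rpow_abs p (by linarith) (by linarith)
          _ = _ := by
              rw [Real.rpow_zero, Real.rpow_one]
              ring
      · rw [Set.indicator_of_notMem hmem, norm_zero]
        positivity
    · exact ((((integrableOn_rpow_mul_exp_neg_mul_rpow (by norm_num) one_pos hθ).const_mul _).add
        ((integrableOn_rpow_mul_exp_neg_mul_rpow (by norm_num) one_pos hθ).const_mul _)).add
        ((integrableOn_rpow_mul_exp_neg_mul_rpow (by norm_num) one_pos hθ).const_mul _))
    · refine ae_restrict_of_forall_mem measurableSet_Ioi fun u (hu : 0 < u) => ?_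
      have hδ : Tendsto (fun T : ℝ => 1 - u / T) atTop (nhds 1) := by
        simpa using (tendsto_const_nhds (x := (1:ℝ))).sub
          (tendsto_const_nhds (x := u) |>.div_atTop tendsto_id)
      have h := ((hδ.rpow_const (p := p) (Or.inl one_ne_zero)).const_mul (Real.exp (-θ * u))).mul
        (tendsto_kernelIntegral_div_log ha hu)
      rw [Real.one_rpow, mul_one, mul_one] at h
      refine h.congr' ?_
      filter_upwards [eventually_ge_atTop (2 * u)] with T hT
      have hmem : u ∈ Set.Ioc 0 (T / 2) := ⟨hu, by linarith⟩
      rw [Set.indicator_of_mem hmem]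
  rw [hexp] at key
  refine key.congr fun T => ?_
  rw [setIntegral_indicator measurableSet_Ioc, Set.inter_eq_self_of_subset_right
    Set.Ioc_subset_Ioi_self]

lemma tendsto_setIntegral_lower {a p θ : ℝ} (ha : -1 < a) (hp : -1 < p) (hθ : 0 < θ) :
    Tendsto (fun T => (∫ t in Set.Ioc 0 (T / 2),
      Real.exp (θ * t) * t ^ p * kernelIntegral a (t / T)) /
        (T ^ p * Real.exp (θ * T) * Real.log T)) atTop (nhds 0) := by
  set D := (∫ y in Set.Ioc (0 : ℝ) 1, y ^ a * (1 - y) ^ (-(1/2 : ℝ))) * (1/2) ^ (-(1/2 : ℝ))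
  have hlim := (tendsto_rpow_mul_exp_neg_mul_atTop_nhds_zero 1 (θ / 2)
    (by positivity)).const_mul (D / (p + 1))
  rw [mul_zero] at hlim
  refine squeeze_zero' ?_ ?_ hlim
  · filter_upwards [eventually_gt_atTop 1] with T hT
    have hlog := Real.log_pos hT
    refine div_nonneg (setIntegral_nonneg measurableSet_Ioc fun t ht => ?_) (by positivity)
    have := kernelIntegral_nonneg a (t / T)
    have := Real.rpow_pos_of_pos ht.1 p
    positivity
  · filter_upwards [eventually_ge_atTop (Real.exp 1)] with T hT
    have hT0 : 0 < T := (Real.exp_pos 1).trans_le hT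
    have hlog : 1 ≤ Real.log T := (Real.le_log_iff_exp_le hT0).2 hT
    have hTp := Real.rpow_pos_of_pos hT0 p
    have hpint : IntervalIntegrable (fun t : ℝ => t ^ p) volume 0 T := intervalIntegrable_rpow' hp
    rw [intervalIntegrable_iff_integrableOn_Ioc_of_le hT0.le] at hpint
    have hsub : Set.Ioc 0 (T / 2) ⊆ Set.Ioc 0 T := Set.Ioc_subset_Ioc_right (by linarith)
    have hbound : ∀ t ∈ Set.Ioc 0 (T / 2), Real.exp (θ * t) * t ^ p * kernelIntegral a (t / T) ≤
        Real.exp (θ * (T / 2)) * D * t ^ p := fun t ht => by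
      have htT : t / T ≤ 1/2 := by rw [div_le_iff₀ hT0]; linarith [ht.2]
      have htp := Real.rpow_pos_of_pos ht.1 p
      have hM0 := kernelIntegral_nonneg a (t / T)
      have hM : kernelIntegral a (t / T) ≤ D := by
        refine (kernelIntegral_le_mul_rpow ha (div_pos ht.1 hT0).le (by linarith)).trans
          (mul_le_mul_of_nonneg_left (rpow_neg_half_anti (by norm_num) (by linarith)) ?_)
        exact setIntegral_nonneg measurableSet_Ioc fun y hy =>
          mul_nonneg (Real.rpow_nonneg hy.1.le _) (rpow_neg_half_nonneg _)
      calc _ ≤ Real.exp (θ * (T / 2)) * t ^ p * D := by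
            gcongr
            exact ht.2
        _ = _ := by ring
    have hD : 0 ≤ D := mul_nonneg (setIntegral_nonneg measurableSet_Ioc fun y hy =>
      mul_nonneg (Real.rpow_nonneg hy.1.le _) (rpow_neg_half_nonneg _)) (by positivity)
    have hI : ∫ t in Set.Ioc 0 (T / 2), Real.exp (θ * t) * t ^ p * kernelIntegral a (t / T) ≤
        Real.exp (θ * (T / 2)) * D * (T ^ (p + 1) / (p + 1)) := by
      calc _ ≤ ∫ t in Set.Ioc 0 (T / 2), Real.exp (θ * (T / 2)) * D * t ^ p :=
            setIntegral_mono_on ((integrableOn_exp_mul_rpow_mul_kernelIntegral ha hp hθ hT0).mono_set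
              fun t ht => ⟨ht.1, by linarith [ht.2]⟩)
              ((hpint.mono_set hsub).const_mul _) measurableSet_Ioc hbound
        _ ≤ ∫ t in Set.Ioc 0 T, Real.exp (θ * (T / 2)) * D * t ^ p := by
            refine setIntegral_mono_set (hpint.const_mul _)
              (ae_restrict_of_forall_mem measurableSet_Ioc fun t ht => ?_) hsub.eventuallyLE
            have := Real.rpow_nonneg ht.1.le p
            simp only [Pi.zero_apply]
            positivity
        _ = _ := by
            rw [MeasureTheory.integral_const_mul, ← integral_of_le hT0.le,
              integral_rpow (Or.inl hp), Real.zero_rpow (by linarith), sub_zero]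
    have hp1 : 0 < p + 1 := by linarith
    rw [div_le_iff₀ (by positivity)]
    have hexp : Real.exp (-(θ / 2) * T) * Real.exp (θ * T) = Real.exp (θ * (T / 2)) := by
      rw [← Real.exp_add]; ring_nf
    calc _ ≤ _ := hI
      _ = D / (p + 1) * (T ^ (1:ℝ) * Real.exp (-(θ / 2) * T)) *
          (T ^ p * Real.exp (θ * T) * 1) := by
        rw [← hexp, Real.rpow_add hT0]
        ring
      _ ≤ _ := by gcongr

lemma setIntegral_eq_lower_add_upper {a p θ T : ℝ} (ha : -1 < a) (hp : -1 < p) (hθ : 0 < θ)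
    (hT : 1 < T) :
    (∫ t in Set.Ioo 0 T, Real.exp (θ * t) * t ^ p * kernelIntegral a (t / T)) /
        (T ^ p * Real.exp (θ * T) * Real.log T) =
      (∫ t in Set.Ioc 0 (T / 2), Real.exp (θ * t) * t ^ p * kernelIntegral a (t / T)) /
        (T ^ p * Real.exp (θ * T) * Real.log T) +
      ∫ u in Set.Ioc 0 (T / 2), Real.exp (-θ * u) * (1 - u / T) ^ p *
        (kernelIntegral a (1 - u / T) / Real.log T) := by
  have hT0 : 0 < T := by linarith
  have hlog := Real.log_pos hT
  have hTp := Real.rpow_pos_of_pos hT0 p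
  have hint := integrableOn_exp_mul_rpow_mul_kernelIntegral ha hp hθ hT0
  rw [← integrableOn_Ioc_iff_integrableOn_Ioo] at hint
  rw [← integral_Ioc_eq_integral_Ioo, ← Set.Ioc_union_Ioc_eq_Ioc (by linarith : 0 ≤ T / 2)
    (by linarith : T / 2 ≤ T), setIntegral_union (Set.Ioc_disjoint_Ioc_of_le le_rfl)
      measurableSet_Ioc (hint.mono_set (Set.Ioc_subset_Ioc_right (by linarith)))
      (hint.mono_set (Set.Ioc_subset_Ioc_left (by linarith))), add_div]
  congr 1
  have h := integral_comp_sub_left (a := 0) (b := T / 2)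
    (fun t => Real.exp (θ * t) * t ^ p * kernelIntegral a (t / T)) T
  rw [sub_zero, sub_half, integral_of_le (by linarith), integral_of_le (by linarith)] at h
  rw [← h, ← MeasureTheory.integral_div]
  refine setIntegral_congr_fun measurableSet_Ioc fun u hu => ?_
  have hle : u / T ≤ 1 := by rw [div_le_one hT0]; linarith [hu.2]
  have hexp : Real.exp (θ * (T - u)) = Real.exp (θ * T) * Real.exp (-θ * u) := by
    rw [← Real.exp_add]; ring_nf
  rw [hexp, show (T - u) / T = 1 - u / T by field_simp, show T - u = T * (1 - u / T) by field_simp,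
    Real.mul_rpow hT0.le (by linarith)]
  field_simp

/-- Lemma B.2, case `γ = -1/2`. -/
theorem stmt_13 (α β θ : ℝ) (hα : -(1/2 : ℝ) < α)
    (hαβγ : -(3/2 : ℝ) < α + β - 1/2) (hθ : 0 < θ)
    (h : ℝ → ℝ)
    (hdef : ∀ T : ℝ, h T = ∫ s in (0:ℝ)..T, s ^ (2*α) * (T - s) ^ (-(1/2 : ℝ)) *
      (∫ t in s..T, Real.exp (θ * t) * t ^ β * (t - s) ^ (-(1/2 : ℝ)))) :
    Tendsto (fun T : ℝ => h T / (T ^ (2*α+β) * Real.exp (θ * T) * Real.log T))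
      atTop (nhds (1 / θ)) := by
  have ha : -1 < 2 * α := by linarith
  have hp : -1 < 2 * α + β + 1/2 := by linarith
  have hlim := (tendsto_setIntegral_lower ha hp hθ).add
    (tendsto_setIntegral_upper (p := 2 * α + β + 1/2) ha hθ)
  rw [zero_add] at hlim
  refine hlim.congr' ?_
  filter_upwards [eventually_gt_atTop 1] with T hT
  have hT0 : 0 < T := by linarith
  have hpow : T ^ (2 * α + β) = T ^ (2 * α + β + 1/2) * T ^ (-(1/2 : ℝ)) := by
    rw [← Real.rpow_add hT0]; ring_nf
  have := Real.rpow_pos_of_pos hT0 (-(1/2))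
  rw [← setIntegral_eq_lower_add_upper ha hp hθ hT, hdef, iterated_integral_eq ha hp hθ hT0, hpow,
    mul_comm (T ^ (2 * α + β + 1/2)) (T ^ (-(1/2 : ℝ))), mul_assoc (T ^ (-(1/2 : ℝ))),
    mul_assoc (T ^ (-(1/2 : ℝ))), mul_div_mul_left _ _ this.ne']
end

section
/- Let α, β, γ be real numbers with α > -1/2, α + β + γ > -3/2, γ > −1/2, and let θ > 0. Define h(T) = ∫₀ᵀ s^{2α}(T−s)^γ (∫ₛᵀ e^{θt} t^β (t−s)^γ dt) ds for T > 0. Then lim_{T→+∞} h(T) / (T^{2α+β+2γ+1} e^{θT}) = ς² / θ, where ς² = Γ(2α+1)Γ(2γ+1) / Γ(2α+2γ+2). -/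
open MeasureTheory Filter intervalIntegral

lemma intervalIntegrable_rpow_mul_one_sub_rpow {a b : ℝ} (ha : -1 < a) (hb : -1 < b) :
    IntervalIntegrable (fun w : ℝ => w ^ a * (1 - w) ^ b) volume 0 1 := by
  have h := (Complex.betaIntegral_convergent (u := ((a + 1 : ℝ) : ℂ)) (v := ((b + 1 : ℝ) : ℂ))
    (by simpa using by linarith) (by simpa using by linarith)).norm
  refine h.congr fun w hw => ?_
  rw [Set.uIoc_of_le zero_le_one] at hw
  have h1 : 0 ≤ 1 - w := by linarith [hw.2]
  have e1 : ((a + 1 : ℝ) : ℂ) - 1 = (a : ℂ) := by push_cast; ring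
  have e2 : ((b + 1 : ℝ) : ℂ) - 1 = (b : ℂ) := by push_cast; ring
  have e3 : (1 : ℂ) - w = ((1 - w : ℝ) : ℂ) := by push_cast; ring
  simp only [e1, e2, e3, ← Complex.ofReal_cpow hw.1.le, ← Complex.ofReal_cpow h1,
    ← Complex.ofReal_mul, Complex.norm_real]
  exact Real.norm_of_nonneg (mul_nonneg (Real.rpow_nonneg hw.1.le _) (Real.rpow_nonneg h1 _))

lemma integral_rpow_mul_one_sub_rpow {a b : ℝ} (ha : -1 < a) (hb : -1 < b) :
    ∫ w in (0:ℝ)..1, w ^ a * (1 - w) ^ b =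
      Real.Gamma (a + 1) * Real.Gamma (b + 1) / Real.Gamma (a + b + 2) := by
  have h := Complex.betaIntegral_eq_Gamma_mul_div ((a + 1 : ℝ) : ℂ) ((b + 1 : ℝ) : ℂ)
    (by simpa using by linarith) (by simpa using by linarith)
  have e1 : ((a + 1 : ℝ) : ℂ) - 1 = (a : ℂ) := by push_cast; ring
  have e2 : ((b + 1 : ℝ) : ℂ) - 1 = (b : ℂ) := by push_cast; ring
  rw [Complex.betaIntegral, ← Complex.ofReal_add, Complex.Gamma_ofReal, Complex.Gamma_ofReal,
    Complex.Gamma_ofReal, e1, e2, show a + 1 + (b + 1) = a + b + 2 by ring] at h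
  rw [← Complex.ofReal_inj]
  push_cast
  rw [← h, ← intervalIntegral.integral_ofReal]
  refine intervalIntegral.integral_congr fun w hw => ?_
  rw [Set.uIcc_of_le zero_le_one] at hw
  have h1 : 0 ≤ 1 - w := by linarith [hw.2]
  have e3 : (1 : ℂ) - w = ((1 - w : ℝ) : ℂ) := by push_cast; ring
  simp only [e3]
  rw [← Complex.ofReal_cpow hw.1, ← Complex.ofReal_cpow h1, ← Complex.ofReal_mul]

lemma one_sub_mul_rpow_le {c x w : ℝ} (hx : x ∈ Set.Icc (0:ℝ) 1) (hw : w ∈ Set.Ico (0:ℝ) 1) :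
    (1 - x * w) ^ c ≤ 1 + (1 - w) ^ c := by
  have hxw : x * w ≤ w := mul_le_of_le_one_left hw.1 hx.2
  have hxw0 : 0 ≤ x * w := mul_nonneg hx.1 hw.1
  have hw1 : 0 < 1 - w := by linarith [hw.2]
  rcases le_total 0 c with hc | hc
  · have h1 : (1 - x * w) ^ c ≤ 1 := Real.rpow_le_one (by linarith) (by linarith) hc
    linarith [Real.rpow_nonneg hw1.le c]
  · have h1 : (1 - x * w) ^ c ≤ (1 - w) ^ c :=
      Real.rpow_le_rpow_of_nonpos hw1 (by linarith) hc
    linarith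

/-- The integrand `w ^ a * (1 - x * w) ^ c * (1 - w) ^ c`, a deformation of the beta integrand. -/
noncomputable def kernelIntegrand (a c x w : ℝ) : ℝ := w ^ a * (1 - x * w) ^ c * (1 - w) ^ c

lemma kernelIntegrand_nonneg {a c x w : ℝ} (hx : x ∈ Set.Icc (0:ℝ) 1) (hw : w ∈ Set.Icc (0:ℝ) 1) :
    0 ≤ kernelIntegrand a c x w := by
  have hxw : x * w ≤ 1 := mul_le_one₀ hx.2 hw.1 hw.2
  exact mul_nonneg (mul_nonneg (Real.rpow_nonneg hw.1 _)
    (Real.rpow_nonneg (by linarith) _)) (Real.rpow_nonneg (by linarith [hw.2]) _)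

lemma kernelIntegrand_le {a c x w : ℝ} (hx : x ∈ Set.Icc (0:ℝ) 1) (hw : w ∈ Set.Ico (0:ℝ) 1) :
    kernelIntegrand a c x w ≤ w ^ a * (1 - w) ^ c + w ^ a * (1 - w) ^ (2 * c) := by
  have hw1 : 0 < 1 - w := by linarith [hw.2]
  rw [two_mul, Real.rpow_add hw1]
  have := mul_le_mul_of_nonneg_left (one_sub_mul_rpow_le (c := c) hx hw)
    (mul_nonneg (Real.rpow_nonneg hw.1 a) (Real.rpow_nonneg hw1.le c))
  unfold kernelIntegrand
  linarith

lemma measurable_kernelIntegrand (a c x : ℝ) : Measurable (kernelIntegrand a c x) := by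
  unfold kernelIntegrand
  fun_prop

lemma intervalIntegrable_kernelBound {a c : ℝ} (ha : -1 < a) (hc : -(1/2) < c) :
    IntervalIntegrable (fun w : ℝ => w ^ a * (1 - w) ^ c + w ^ a * (1 - w) ^ (2 * c))
      volume 0 1 :=
  (intervalIntegrable_rpow_mul_one_sub_rpow ha (by linarith)).add
    (intervalIntegrable_rpow_mul_one_sub_rpow ha (by linarith))

lemma ae_norm_kernelIntegrand_le (a c : ℝ) :
    ∀ᵐ w : ℝ, ∀ x ∈ Set.Icc (0:ℝ) 1, w ∈ Set.uIoc (0:ℝ) 1 →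
      ‖kernelIntegrand a c x w‖ ≤ w ^ a * (1 - w) ^ c + w ^ a * (1 - w) ^ (2 * c) := by
  filter_upwards [Measure.ae_ne volume (1:ℝ)] with w hw1 x hx hw
  rw [Set.uIoc_of_le zero_le_one] at hw
  rw [Real.norm_of_nonneg (kernelIntegrand_nonneg hx ⟨hw.1.le, hw.2⟩)]
  exact kernelIntegrand_le hx ⟨hw.1.le, lt_of_le_of_ne hw.2 hw1⟩

lemma intervalIntegrable_kernelIntegrand {a c x : ℝ} (ha : -1 < a) (hc : -(1/2) < c)
    (hx : x ∈ Set.Icc (0:ℝ) 1) :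
    IntervalIntegrable (kernelIntegrand a c x) volume 0 1 := by
  refine (intervalIntegrable_kernelBound ha hc).mono_fun
    (measurable_kernelIntegrand a c x).aestronglyMeasurable ?_
  rw [EventuallyLE, ae_restrict_iff' measurableSet_uIoc]
  filter_upwards [ae_norm_kernelIntegrand_le a c] with w h hw
  exact (h x hx hw).trans (le_abs_self _)

lemma continuousOn_integral_kernelIntegrand {a c : ℝ} (ha : -1 < a) (hc : -(1/2) < c) :
    ContinuousOn (fun x => ∫ w in (0:ℝ)..1, kernelIntegrand a c x w) (Set.Icc 0 1) := by
  intro x₀ hx₀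
  refine intervalIntegral.continuousWithinAt_of_dominated_interval
    (.of_forall fun x => (measurable_kernelIntegrand a c x).aestronglyMeasurable)
    ?_ (intervalIntegrable_kernelBound ha hc) ?_
  · filter_upwards [self_mem_nhdsWithin] with x hx
    filter_upwards [ae_norm_kernelIntegrand_le a c] with w h hw
    exact h x hx hw
  · filter_upwards [Measure.ae_ne volume (1:ℝ)] with w hw1 hw
    rw [Set.uIoc_of_le zero_le_one] at hw
    have hw2 : w < 1 := lt_of_le_of_ne hw.2 hw1
    have hne : 1 - x₀ * w ≠ 0 := by nlinarith [hx₀.1, hx₀.2, hw.1]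
    unfold kernelIntegrand
    refine ContinuousAt.continuousWithinAt ?_
    have : ContinuousAt (fun x : ℝ => (1 - x * w) ^ c) x₀ :=
      ContinuousAt.rpow_const (by fun_prop) (Or.inl hne)
    exact (continuousAt_const.mul this).mul continuousAt_const

lemma integral_kernelIntegrand_one {a c : ℝ} (ha : -1 < a) (hc : -(1/2) < c) :
    ∫ w in (0:ℝ)..1, kernelIntegrand a c 1 w =
      Real.Gamma (a + 1) * Real.Gamma (2 * c + 1) / Real.Gamma (a + 2 * c + 2) := by
  rw [← integral_rpow_mul_one_sub_rpow ha (by linarith)]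
  refine intervalIntegral.integral_congr_ae ?_
  filter_upwards [Measure.ae_ne volume (1:ℝ)] with w hw1 hw
  rw [Set.uIoc_of_le zero_le_one] at hw
  have hw2 : 0 < 1 - w := sub_pos.2 (lt_of_le_of_ne hw.2 hw1)
  rw [kernelIntegrand, one_mul, mul_assoc, ← Real.rpow_add hw2, two_mul]

lemma tendsto_integral_exp_peak {g : ℝ → ℝ} {L θ : ℝ} (hθ : 0 < θ)
    (hg : IntegrableOn g (Set.Ioc 0 1)) (hL : Tendsto g (nhdsWithin 1 (Set.Ioc 0 1)) (nhds L)) :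
    Tendsto (fun T : ℝ => ∫ x in Set.Ioc (0:ℝ) 1, (θ * T * Real.exp (θ * T * (x - 1))) • g x)
      atTop (nhds L) := by
  have hθT : Tendsto (fun T : ℝ => θ * T) atTop atTop := tendsto_id.const_mul_atTop hθ
  refine tendsto_setIntegral_peak_smul_of_integrableOn_of_tendsto measurableSet_Ioc
    (t := Set.Ioc (0:ℝ) 1) measurableSet_Ioc subset_rfl self_mem_nhdsWithin (by simp)
    ?_ ?_ ?_ (.of_forall fun T => (by fun_prop : Continuous _).aestronglyMeasurable) hg hL
  · filter_upwards [eventually_ge_atTop 0] with T hT x _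
    positivity
  · intro u hu h1
    obtain ⟨ε, hε, hεu⟩ := Metric.isOpen_iff.1 hu 1 h1
    have hlim : Tendsto (fun T : ℝ => θ * T * Real.exp (-ε * (θ * T))) atTop (nhds 0) := by
      have := (tendsto_rpow_mul_exp_neg_mul_atTop_nhds_zero 1 ε hε).comp hθT
      simpa [Function.comp_def] using this
    rw [Metric.tendstoUniformlyOn_iff]
    intro δ hδ
    filter_upwards [hlim.eventually (gt_mem_nhds hδ), eventually_ge_atTop 0] with T hT hT0 x hx
    have hx1 : x - 1 ≤ -ε := by
      by_contra! hcon
      exact hx.2 (hεu (by rw [Metric.mem_ball, Real.dist_eq, abs_lt]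
                          constructor <;> linarith [hx.1.2]))
    have hT' : 0 ≤ θ * T := by positivity
    rw [Pi.zero_apply, dist_zero_left, Real.norm_of_nonneg (by positivity)]
    refine lt_of_le_of_lt (mul_le_mul_of_nonneg_left (Real.exp_le_exp.2 ?_) hT') hT
    nlinarith
  · have hcalc : ∀ T > 0, ∫ x in Set.Ioc (0:ℝ) 1, θ * T * Real.exp (θ * T * (x - 1)) =
        1 - Real.exp (-(θ * T)) := by
      intro T hT
      rw [← intervalIntegral.integral_of_le zero_le_one]
      rw [intervalIntegral.integral_eq_sub_of_hasDerivAt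
        (f := fun x => Real.exp (θ * T * (x - 1)))]
      · simp
      · intro x _
        convert! (((hasDerivAt_id x).sub_const 1).const_mul (θ * T)).exp using 1
        simp; ring
      · exact (by fun_prop : Continuous _).intervalIntegrable _ _
    have hlim : Tendsto (fun T : ℝ => 1 - Real.exp (-(θ * T))) atTop (nhds (1 - 0)) :=
      tendsto_const_nhds.sub (Real.tendsto_exp_neg_atTop_nhds_zero.comp hθT)
    rw [sub_zero] at hlim
    refine hlim.congr' ?_
    filter_upwards [eventually_gt_atTop 0] with T hT
    exact (hcalc T hT).symm

/-- Tonelli's theorem on the triangle `0 < s < t ≤ T`. -/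
lemma integral_triangle_swap {f : ℝ → ℝ → ℝ} {T : ℝ} (hT : 0 ≤ T)
    (hf : Measurable (Function.uncurry f))
    (hf0 : ∀ s t, 0 < s → s < t → t ≤ T → 0 ≤ f s t)
    (hs : ∀ t ∈ Set.Ioc 0 T, IntervalIntegrable (fun s => f s t) volume 0 t)
    (ht : IntervalIntegrable (fun t => ∫ s in (0:ℝ)..t, f s t) volume 0 T) :
    ∫ s in (0:ℝ)..T, ∫ t in s..T, f s t = ∫ t in (0:ℝ)..T, ∫ s in (0:ℝ)..t, f s t := by
  set A : Set (ℝ × ℝ) := {p | 0 < p.1 ∧ p.1 < p.2 ∧ p.2 ≤ T} with hA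
  have hAm : MeasurableSet A :=
    (measurableSet_lt measurable_const measurable_fst).inter
      ((measurableSet_lt measurable_fst measurable_snd).inter
        (measurableSet_le measurable_snd measurable_const))
  set K : ℝ × ℝ → ℝ := A.indicator (Function.uncurry f) with hK
  have hK0 : ∀ p, 0 ≤ K p := fun p =>
    Set.indicator_nonneg (fun q hq => hf0 q.1 q.2 hq.1 hq.2.1 hq.2.2) p
  have hsec1 : ∀ s, (fun t => K (s, t)) =
      (Set.Ioc 0 T).indicator (fun s => (Set.Ioc s T).indicator (f s)) s := by
    intro s; ext t
    simp only [hK, hA, Set.indicator, Set.mem_Ioc, Set.mem_ofPred_eq, Function.uncurry]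
    by_cases h1 : 0 < s <;> by_cases h2 : s < t <;> by_cases h3 : t ≤ T <;>
      by_cases h4 : s ≤ T <;> simp [h1, h2, h3, h4]
    exact absurd (h2.le.trans h3) h4
  have hsec2 : ∀ t, (fun s => K (s, t)) =
      (Set.Ioc 0 T).indicator (fun t => (Set.Ioo 0 t).indicator (fun s => f s t)) t := by
    intro t; ext s
    simp only [hK, hA, Set.indicator, Set.mem_Ioc, Set.mem_ofPred_eq, Function.uncurry]
    by_cases h1 : 0 < s <;> by_cases h2 : s < t <;> by_cases h3 : t ≤ T <;>
      by_cases h4 : 0 < t <;> simp [h1, h2, h3, h4]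
    exact absurd (h1.trans h2) h4
  have hint1 : ∀ s, ∫ t, K (s, t) = (Set.Ioc 0 T).indicator (fun s => ∫ t in s..T, f s t) s := by
    intro s
    rw [hsec1]
    by_cases h : s ∈ Set.Ioc 0 T
    · rw [Set.indicator_of_mem h, Set.indicator_of_mem h,
        MeasureTheory.integral_indicator measurableSet_Ioc, intervalIntegral.integral_of_le h.2]
    · rw [Set.indicator_of_notMem h, Set.indicator_of_notMem h]
      simp
  have hint2 : ∀ t, ∫ s, K (s, t) =
      (Set.Ioc 0 T).indicator (fun t => ∫ s in (0:ℝ)..t, f s t) t := by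
    intro t
    rw [hsec2]
    by_cases h : t ∈ Set.Ioc 0 T
    · rw [Set.indicator_of_mem h, Set.indicator_of_mem h,
        MeasureTheory.integral_indicator measurableSet_Ioo, intervalIntegral.integral_of_le h.1.le,
        integral_Ioc_eq_integral_Ioo]
    · rw [Set.indicator_of_notMem h, Set.indicator_of_notMem h]
      simp
  have hKint : Integrable K (volume.prod volume) := by
    rw [integrable_prod_iff' (hf.indicator hAm).aestronglyMeasurable]
    constructor
    · refine .of_forall fun t => ?_
      rw [hsec2]
      by_cases h : t ∈ Set.Ioc 0 T
      · rw [Set.indicator_of_mem h, integrable_indicator_iff measurableSet_Ioo]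
        exact ((intervalIntegrable_iff_integrableOn_Ioc_of_le h.1.le).1 (hs t h)).mono_set
          Set.Ioo_subset_Ioc_self
      · rw [Set.indicator_of_notMem h]
        exact integrable_zero _ _ _
    · have hnorm : ∀ p, ‖K p‖ = K p := fun p => Real.norm_of_nonneg (hK0 p)
      change Integrable (fun t => ∫ s, ‖K (s, t)‖) volume
      simp only [hnorm, hint2]
      exact (integrable_indicator_iff measurableSet_Ioc).2
        ((intervalIntegrable_iff_integrableOn_Ioc_of_le hT).1 ht)
  have hswap := integral_integral_swap (f := fun s t => K (s, t)) hKint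
  simp only [hint1, hint2, MeasureTheory.integral_indicator measurableSet_Ioc] at hswap
  rwa [intervalIntegral.integral_of_le hT, intervalIntegral.integral_of_le hT]

/-- The integrand of the double integral over the triangle `0 < s < t ≤ T`. -/
noncomputable def triangleIntegrand (a b c θ T s t : ℝ) : ℝ :=
  s ^ a * (T - s) ^ c * (Real.exp (θ * t) * t ^ b * (t - s) ^ c)

lemma triangleIntegrand_mul {a b c θ T x w : ℝ} (hT : 0 < T) (hx : x ∈ Set.Ioc (0:ℝ) 1)
    (hw : w ∈ Set.Ioo (0:ℝ) 1) :
    T * x * triangleIntegrand a b c θ T (T * x * w) (T * x) =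
      T ^ (a + b + 2 * c + 1) *
        (Real.exp (θ * (T * x)) * x ^ (a + b + c + 1) * kernelIntegrand a c x w) := by
  have hxw : 0 ≤ 1 - x * w := sub_nonneg.2 (mul_le_one₀ hx.2 hw.1.le hw.2.le)
  have hx0 := hx.1
  have hw0 := hw.1
  have hw1 : 0 ≤ 1 - w := by linarith [hw.2]
  rw [triangleIntegrand, show T - T * x * w = T * (1 - x * w) by ring,
    show T * x - T * x * w = T * x * (1 - w) by ring,
    Real.mul_rpow (by positivity) hw0.le, Real.mul_rpow hT.le hxw,
    Real.mul_rpow (by positivity) hw1, Real.mul_rpow hT.le hx0.le, Real.mul_rpow hT.le hx0.le,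
    Real.mul_rpow hT.le hx0.le, kernelIntegrand,
    show a + b + 2 * c + 1 = a + b + c + c + 1 by ring]
  simp only [Real.rpow_add hT, Real.rpow_add hx0, Real.rpow_one]
  ring

lemma integral_triangleIntegrand {a b c θ T x : ℝ} (hT : 0 < T) (hx : x ∈ Set.Ioc (0:ℝ) 1) :
    ∫ s in (0:ℝ)..(T * x), triangleIntegrand a b c θ T s (T * x) =
      T ^ (a + b + 2 * c + 1) * (Real.exp (θ * (T * x)) *
        (x ^ (a + b + c + 1) * ∫ w in (0:ℝ)..1, kernelIntegrand a c x w)) := by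
  have h := intervalIntegral.smul_integral_comp_mul_left (a := 0) (b := 1)
    (fun s => triangleIntegrand a b c θ T s (T * x)) (T * x)
  rw [mul_zero, mul_one] at h
  rw [← h, smul_eq_mul, ← intervalIntegral.integral_const_mul,
    intervalIntegral.integral_congr_Ioo_of_le zero_le_one
      fun w hw => triangleIntegrand_mul hT hx hw,
    intervalIntegral.integral_const_mul, intervalIntegral.integral_const_mul]
  ring

lemma intervalIntegrable_triangleIntegrand {a b c θ T t : ℝ} (ha : -1 < a) (hc : -(1/2) < c)
    (hT : 0 < T) (ht : t ∈ Set.Ioc 0 T) :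
    IntervalIntegrable (fun s => triangleIntegrand a b c θ T s t) volume 0 t := by
  obtain ⟨x, rfl⟩ : ∃ x, t = T * x := ⟨t / T, by field_simp⟩
  have hx : x ∈ Set.Ioc (0:ℝ) 1 :=
    ⟨pos_of_mul_pos_right ht.1 hT.le, le_of_mul_le_mul_left (by linarith [ht.2]) hT⟩
  have htx : T * x ≠ 0 := ht.1.ne'
  rw [← IntervalIntegrable.comp_mul_left_iff htx, zero_div, div_self htx]
  have h : IntervalIntegrable
      (fun w => T * x * triangleIntegrand a b c θ T (T * x * w) (T * x)) volume 0 1 := by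
    refine (((intervalIntegrable_kernelIntegrand ha hc (Set.Ioc_subset_Icc_self hx)).const_mul
      (Real.exp (θ * (T * x)) * x ^ (a + b + c + 1))).const_mul
        (T ^ (a + b + 2 * c + 1))).congr_uIoo fun w hw => ?_
    rw [Set.uIoo_of_le zero_le_one] at hw
    exact (triangleIntegrand_mul hT hx hw).symm
  simpa only [inv_mul_cancel_left₀ htx] using h.const_mul (T * x)⁻¹

lemma intervalIntegrable_rpow_mul_kernel {a b c : ℝ} (ha : -1 < a) (hc : -(1/2) < c)
    (hp : -1 < a + b + c + 1) :
    IntervalIntegrable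
      (fun x => x ^ (a + b + c + 1) * ∫ w in (0:ℝ)..1, kernelIntegrand a c x w) volume 0 1 := by
  refine (intervalIntegral.intervalIntegrable_rpow' hp).mul_continuousOn ?_
  rw [Set.uIcc_of_le zero_le_one]
  exact continuousOn_integral_kernelIntegrand ha hc

lemma integral_triangle_eq {a b c θ T : ℝ} (ha : -1 < a) (hc : -(1/2) < c)
    (hp : -1 < a + b + c + 1) (hT : 0 < T) :
    ∫ s in (0:ℝ)..T, ∫ t in s..T, triangleIntegrand a b c θ T s t =
      T * T ^ (a + b + 2 * c + 1) * ∫ x in (0:ℝ)..1, Real.exp (θ * (T * x)) *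
        (x ^ (a + b + c + 1) * ∫ w in (0:ℝ)..1, kernelIntegrand a c x w) := by
  set H : ℝ → ℝ := fun t => ∫ s in (0:ℝ)..t, triangleIntegrand a b c θ T s t with hH
  have hHx : Set.EqOn (fun x => T ^ (a + b + 2 * c + 1) * (Real.exp (θ * (T * x)) *
        (x ^ (a + b + c + 1) * ∫ w in (0:ℝ)..1, kernelIntegrand a c x w)))
      (fun x => H (T * x)) (Set.uIoc 0 1) := by
    intro x hx
    rw [Set.uIoc_of_le zero_le_one] at hx
    exact (integral_triangleIntegrand hT hx).symm
  have hHint : IntervalIntegrable H volume 0 T := by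
    rw [← IntervalIntegrable.comp_mul_left_iff hT.ne', zero_div, div_self hT.ne']
    refine IntervalIntegrable.congr hHx ?_
    exact ((intervalIntegrable_rpow_mul_kernel ha hc hp).continuousOn_mul
      (by fun_prop)).const_mul _
  rw [integral_triangle_swap hT.le ?_ ?_
    (fun t ht => intervalIntegrable_triangleIntegrand ha hc hT ht) hHint]
  · have h := intervalIntegral.smul_integral_comp_mul_left (a := 0) (b := 1) H T
    rw [mul_zero, mul_one] at h
    change ∫ t in (0:ℝ)..T, H t = _
    rw [← h, smul_eq_mul, mul_assoc, ← intervalIntegral.integral_congr_ae (.of_forall hHx),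
      intervalIntegral.integral_const_mul]
  · unfold triangleIntegrand Function.uncurry
    fun_prop
  · intro s t hs hst htT
    have h1 : 0 ≤ T - s := by linarith
    have h2 : 0 ≤ t - s := by linarith
    have h3 : 0 < t := by linarith
    unfold triangleIntegrand
    positivity

/-- Lemma B.2, case `γ > -1/2`. -/
theorem stmt_14 (α β γ θ : ℝ) (hα : -(1/2 : ℝ) < α)
    (hαβγ : -(3/2 : ℝ) < α + β + γ) (hγ' : -(1/2 : ℝ) < γ) (hθ : 0 < θ)
    (h : ℝ → ℝ)
    (hdef : ∀ T : ℝ, h T = ∫ s in (0:ℝ)..T, s ^ (2*α) * (T - s) ^ γ *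
      (∫ t in s..T, Real.exp (θ * t) * t ^ β * (t - s) ^ γ)) :
    Tendsto (fun T : ℝ => h T / (T ^ (2*α+β+2*γ+1) * Real.exp (θ * T))) atTop
      (nhds ((Real.Gamma (2*α+1) * Real.Gamma (2*γ+1) / Real.Gamma (2*α+2*γ+2))
        / θ)) := by
  have ha : -1 < 2 * α := by linarith
  have hp : -1 < 2 * α + β + γ + 1 := by linarith
  set g : ℝ → ℝ := fun x =>
    x ^ (2 * α + β + γ + 1) * ∫ w in (0:ℝ)..1, kernelIntegrand (2 * α) γ x w with hg
  have hgint : IntegrableOn g (Set.Ioc 0 1) :=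
    (intervalIntegrable_iff_integrableOn_Ioc_of_le zero_le_one).1
      (intervalIntegrable_rpow_mul_kernel ha hγ' hp)
  have hglim : Tendsto g (nhdsWithin 1 (Set.Ioc 0 1))
      (nhds (Real.Gamma (2*α+1) * Real.Gamma (2*γ+1) / Real.Gamma (2*α+2*γ+2))) := by
    have h1 : ContinuousWithinAt g (Set.Icc 0 1) 1 :=
      (Real.continuousAt_rpow_const 1 _ (Or.inl one_ne_zero)).continuousWithinAt.mul
        (continuousOn_integral_kernelIntegrand ha hγ' 1 (by simp))
    have h2 : g 1 = Real.Gamma (2*α+1) * Real.Gamma (2*γ+1) / Real.Gamma (2*α+2*γ+2) := by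
      rw [hg]
      simp only [Real.one_rpow, one_mul]
      exact integral_kernelIntegrand_one ha hγ'
    rw [← h2]
    exact h1.mono Set.Ioc_subset_Icc_self
  refine ((tendsto_integral_exp_peak hθ hgint hglim).div_const θ).congr' ?_
  filter_upwards [eventually_gt_atTop 0] with T hT
  have hT' : h T = T * T ^ (2 * α + β + 2 * γ + 1) *
      ∫ x in (0:ℝ)..1, Real.exp (θ * (T * x)) * g x := by
    rw [hdef, ← integral_triangle_eq ha hγ' hp hT]
    simp only [triangleIntegrand, intervalIntegral.integral_const_mul]
  have hexp : ∀ x, (θ * T * Real.exp (θ * T * (x - 1))) • g x =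
      θ * T * Real.exp (-(θ * T)) * (Real.exp (θ * (T * x)) * g x) := by
    intro x
    rw [show θ * T * (x - 1) = -(θ * T) + θ * (T * x) by ring, Real.exp_add, smul_eq_mul]
    ring
  have hTp := (Real.rpow_pos_of_pos hT (2 * α + β + 2 * γ + 1)).ne'
  simp only [hexp]
  rw [← intervalIntegral.integral_of_le zero_le_one, intervalIntegral.integral_const_mul, hT',
    Real.exp_neg]
  field_simp
end

section
/- Let α, β, γ be real numbers with α > -1/2, α + β + γ > -3/2, γ ∈ (−1, −1/2), and let θ > 0. Define G(T) = e^{−2θT} ∫₀ᵀ s^{2α} (∫ₛᵀ e^{θt} t^β (t−s)^γ dt)² ds for T > 0. Then lim_{T→+∞} G(T) / T^{2α+2β} = σ² / θ^{2γ+3}, where σ² = Γ(γ+1)Γ(−2γ−1)Γ(2γ+2) / Γ(−γ). -/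
open MeasureTheory Filter intervalIntegral

/-- The `ℝ≥0∞`-valued function `x ↦ x₊ ^ r`. -/
noncomputable def posRpow (r x : ℝ) : ENNReal :=
  if 0 < x then ENNReal.ofReal (x ^ r) else 0

/-- The `ℝ≥0∞`-valued function `x ↦ exp (-r x)` on the positive half-line, extended by zero. -/
noncomputable def posExp (r x : ℝ) : ENNReal :=
  if 0 < x then ENNReal.ofReal (Real.exp (-(r * x))) else 0

@[fun_prop]
lemma measurable_posRpow (r : ℝ) : Measurable (posRpow r) :=
  Measurable.ite measurableSet_Ioi (by fun_prop) measurable_const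

lemma measurable_posExp_uncurry : Measurable (fun p : ℝ × ℝ => posExp p.1 p.2) :=
  Measurable.ite (measurableSet_Ioi.preimage measurable_snd) (by fun_prop) measurable_const

@[fun_prop]
lemma measurable_posExp (r : ℝ) : Measurable (posExp r) :=
  measurable_posExp_uncurry.comp measurable_prodMk_left

lemma posExp_add (r q x : ℝ) : posExp (r + q) x = posExp r x * posExp q x := by
  unfold posExp
  split_ifs
  · rw [← ENNReal.ofReal_mul (Real.exp_pos _).le, ← Real.exp_add]
    ring_nf
  · simp

lemma lintegral_posRpow_mul_posExp {s r : ℝ} (hs : 0 < s) (hr : 0 < r) :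
    ∫⁻ x, posRpow (s - 1) x * posExp r x = ENNReal.ofReal ((1 / r) ^ s * Real.Gamma s) := by
  rw [← Real.integral_rpow_mul_exp_neg_mul_Ioi hs hr, ofReal_integral_eq_lintegral_ofReal]
  · rw [← lintegral_indicator measurableSet_Ioi]
    congr 1 with x
    by_cases hx : 0 < x
    · simp [posRpow, posExp, hx, ENNReal.ofReal_mul (Real.rpow_nonneg hx.le _)]
    · simp [posRpow, posExp, hx]
  · have := integrableOn_rpow_mul_exp_neg_mul_rpow (p := 1) (s := s - 1) (b := r)
      (by linarith) one_pos hr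
    simpa [IntegrableOn] using this
  · refine (ae_restrict_mem measurableSet_Ioi).mono fun x hx => ?_
    exact mul_nonneg (Real.rpow_nonneg (le_of_lt hx) _) (Real.exp_pos _).le

lemma lintegral_posRpow_mul_posRpow_add {γ h : ℝ} (hγ : -1 < γ) (hγ' : γ < -(1/2 : ℝ))
    (hh : 0 < h) :
    ∫⁻ x, posRpow γ x * posRpow γ (x + h) =
      ENNReal.ofReal (Real.Gamma (γ+1) * Real.Gamma (-2*γ-1) / Real.Gamma (-γ)) *
        posRpow (2*γ+1) h := by
  have hG : 0 < Real.Gamma (-γ) := Real.Gamma_pos_of_pos (by linarith)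
  have hG1 : 0 < Real.Gamma (γ+1) := Real.Gamma_pos_of_pos (by linarith)
  have hG2 : 0 < Real.Gamma (-2*γ-1) := Real.Gamma_pos_of_pos (by linarith)
  have hexp : ∀ x l : ℝ, 0 < x → 0 < l → posExp (x + h) l = posExp l x * posExp h l := by
    intro x l hx hl
    rw [posExp_add]
    simp [posExp, hx, hl, mul_comm]
  have h1 : ∀ x : ℝ, ENNReal.ofReal (Real.Gamma (-γ)) * (posRpow γ x * posRpow γ (x + h)) =
      ∫⁻ l, posRpow γ x * posExp l x * (posRpow (-γ - 1) l * posExp h l) := by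
    intro x
    by_cases hx : 0 < x
    · have hxh : 0 < x + h := by linarith
      have e1 : ENNReal.ofReal (Real.Gamma (-γ)) * posRpow γ (x + h) =
          ∫⁻ l, posRpow (-γ - 1) l * posExp (x + h) l := by
        rw [lintegral_posRpow_mul_posExp (by linarith) hxh, posRpow, if_pos hxh,
          ← ENNReal.ofReal_mul hG.le, mul_comm, one_div, Real.inv_rpow hxh.le,
          Real.rpow_neg hxh.le, inv_inv]
      rw [mul_left_comm, e1, ← lintegral_const_mul _ (by fun_prop)]
      congr 1 with l
      by_cases hl : 0 < l
      · rw [hexp x l hx hl]; ring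
      · simp [posRpow, hl]
    · simp [posRpow, hx]
  have h2 : ∀ l : ℝ, ∫⁻ x, posRpow γ x * posExp l x * (posRpow (-γ - 1) l * posExp h l) =
      ENNReal.ofReal (Real.Gamma (γ+1)) * (posRpow ((-2*γ-1) - 1) l * posExp h l) := by
    intro l
    rw [lintegral_mul_const _ (by fun_prop)]
    by_cases hl : 0 < l
    · have := lintegral_posRpow_mul_posExp (s := γ + 1) (r := l) (by linarith) hl
      rw [add_sub_cancel_right] at this
      rw [this, ← mul_assoc, ← mul_assoc]
      congr 1
      simp only [posRpow, if_pos hl]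
      rw [← ENNReal.ofReal_mul (by positivity), ← ENNReal.ofReal_mul (by positivity)]
      congr 1
      rw [one_div, Real.inv_rpow hl.le, ← Real.rpow_neg hl.le, mul_right_comm,
        ← Real.rpow_add hl, mul_comm]
      ring_nf
    · simp [posRpow, hl]
  have h3 : ENNReal.ofReal (Real.Gamma (-γ)) * ∫⁻ x, posRpow γ x * posRpow γ (x + h) =
      ENNReal.ofReal (Real.Gamma (γ+1)) *
        ENNReal.ofReal ((1 / h) ^ (-2*γ-1) * Real.Gamma (-2*γ-1)) := by
    rw [← lintegral_const_mul _ (by fun_prop)]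
    simp_rw [h1]
    rw [lintegral_lintegral_swap]
    · simp_rw [h2]
      rw [lintegral_const_mul _ (by fun_prop),
        lintegral_posRpow_mul_posExp (by linarith) hh]
    · refine Measurable.aemeasurable ?_
      exact (((measurable_posRpow _).comp measurable_fst).mul
        (measurable_posExp_uncurry.comp measurable_swap)).mul
        (((measurable_posRpow _).comp measurable_snd).mul
        ((measurable_posExp _).comp measurable_snd))
  have hne : ENNReal.ofReal (Real.Gamma (-γ)) ≠ 0 := by simpa using hG
  rw [← ENNReal.mul_right_inj hne ENNReal.ofReal_ne_top, h3, posRpow, if_pos hh,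
    ← ENNReal.ofReal_mul hG1.le, ← ENNReal.ofReal_mul (by positivity),
    ← ENNReal.ofReal_mul hG.le]
  congr 1
  rw [one_div, Real.inv_rpow hh.le, ← Real.rpow_neg hh.le, show -(-2*γ-1) = 2*γ+1 by ring]
  field_simp

lemma lintegral_posRpow_sub_mul_posRpow_sub {γ v w : ℝ} (hγ : -1 < γ) (hγ' : γ < -(1/2 : ℝ))
    (hvw : w ≠ v) :
    ∫⁻ u, posRpow γ (u - v) * posRpow γ (u - w) =
      ENNReal.ofReal (Real.Gamma (γ+1) * Real.Gamma (-2*γ-1) / Real.Gamma (-γ)) *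
        (posRpow (2*γ+1) (w - v) + posRpow (2*γ+1) (v - w)) := by
  rcases hvw.lt_or_gt with h | h
  · rw [← lintegral_add_right_eq_self _ v]
    have := lintegral_posRpow_mul_posRpow_add hγ hγ' (sub_pos.2 h)
    simp only [add_sub_cancel_right, add_sub_assoc]
    rw [this]
    congr 1
    simp [posRpow, h.not_gt]
  · rw [← lintegral_add_right_eq_self _ w]
    have := lintegral_posRpow_mul_posRpow_add hγ hγ' (sub_pos.2 h)
    simp only [add_sub_cancel_right, add_sub_assoc]
    simp_rw [mul_comm (posRpow γ (_ + (w - v)))]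
    rw [this]
    congr 1
    simp [posRpow, h.not_gt]

lemma lintegral_posExp {r : ℝ} (hr : 0 < r) : ∫⁻ x, posExp r x = ENNReal.ofReal (1 / r) := by
  have := lintegral_posRpow_mul_posExp one_pos hr
  simp only [Real.rpow_one, Real.Gamma_one, mul_one] at this
  rw [← this]
  congr 1 with x
  by_cases hx : 0 < x <;> simp [posRpow, posExp, hx]

lemma lintegral_posExp_mul_posExp_mul_posRpow_sub {θ s : ℝ} (hθ : 0 < θ) (hs : 0 < s) :
    ∫⁻ v, ∫⁻ w, posExp θ v * posExp θ w * posRpow (s - 1) (w - v) =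
      ENNReal.ofReal (Real.Gamma s / (2 * θ ^ (s + 1))) := by
  have h1 : ∀ v, ∫⁻ w, posExp θ v * posExp θ w * posRpow (s - 1) (w - v) =
      posExp (2 * θ) v * ENNReal.ofReal ((1 / θ) ^ s * Real.Gamma s) := by
    intro v
    rw [← lintegral_posRpow_mul_posExp hs hθ, ← lintegral_add_right_eq_self _ v,
      ← lintegral_const_mul _ (by fun_prop)]
    congr 1 with h
    by_cases hv : 0 < v
    · by_cases hh : 0 < h
      · have : posExp θ (h + v) = posExp θ h * posExp θ v := by
          simp only [posExp, hv, hh, add_pos hh hv, if_true]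
          rw [← ENNReal.ofReal_mul (Real.exp_pos _).le, ← Real.exp_add]
          ring_nf
        rw [this, two_mul, posExp_add, add_sub_cancel_right]
        ring
      · simp [posRpow, hh]
    · simp [posExp, hv]
  simp_rw [h1]
  rw [lintegral_mul_const _ (measurable_posExp _), lintegral_posExp (by positivity),
    ← ENNReal.ofReal_mul (by positivity)]
  congr 1
  rw [one_div θ, Real.inv_rpow hθ.le, Real.rpow_add hθ, Real.rpow_one]
  have := Real.rpow_pos_of_pos hθ s
  field_simp

lemma lintegral_convolution_sq {γ θ : ℝ} (hγ : -1 < γ) (hγ' : γ < -(1/2 : ℝ)) (hθ : 0 < θ) :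
    ∫⁻ u, (∫⁻ v, posExp θ v * posRpow γ (u - v)) ^ 2 =
      ENNReal.ofReal ((Real.Gamma (γ+1) * Real.Gamma (-2*γ-1) * Real.Gamma (2*γ+2)
        / Real.Gamma (-γ)) / θ ^ (2*γ+3)) := by
  set C := Real.Gamma (γ+1) * Real.Gamma (-2*γ-1) / Real.Gamma (-γ) with hC
  have hC0 : 0 ≤ C := by
    have hG : 0 < Real.Gamma (-γ) := Real.Gamma_pos_of_pos (by linarith)
    have hG1 : 0 < Real.Gamma (γ+1) := Real.Gamma_pos_of_pos (by linarith)
    have hG2 : 0 < Real.Gamma (-2*γ-1) := Real.Gamma_pos_of_pos (by linarith)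
    positivity
  have h1 : ∀ u, (∫⁻ v, posExp θ v * posRpow γ (u - v)) ^ 2 =
      ∫⁻ v, ∫⁻ w, posExp θ v * posRpow γ (u - v) * (posExp θ w * posRpow γ (u - w)) := by
    intro u
    rw [lintegral_lintegral_mul, sq]
    all_goals fun_prop
  have h2 : ∀ v, ∫⁻ u, ∫⁻ w, posExp θ v * posRpow γ (u - v) * (posExp θ w * posRpow γ (u - w)) =
      ENNReal.ofReal C * ((∫⁻ w, posExp θ v * posExp θ w * posRpow (2*γ+1) (w - v)) +
        ∫⁻ w, posExp θ v * posExp θ w * posRpow (2*γ+1) (v - w)) := by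
    intro v
    rw [lintegral_lintegral_swap (by fun_prop), ← lintegral_add_left (by fun_prop),
      ← lintegral_const_mul _ (by fun_prop)]
    refine lintegral_congr_ae ?_
    have hae : ∀ᵐ w : ℝ, w ≠ v := by
      simp [ae_iff]
    filter_upwards [hae] with w hw
    have := lintegral_posRpow_sub_mul_posRpow_sub hγ hγ' hw
    rw [← hC] at this
    rw [← mul_add, mul_left_comm, ← this, ← lintegral_const_mul _ (by fun_prop)]
    congr 1 with u
    ring
  simp_rw [h1]
  rw [lintegral_lintegral_swap]
  swap
  · refine Measurable.aemeasurable (Measurable.lintegral_prod_right' (f := fun (p : (ℝ × ℝ) × ℝ) =>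
      posExp θ p.1.2 * posRpow γ (p.1.1 - p.1.2) * (posExp θ p.2 * posRpow γ (p.1.1 - p.2))) ?_)
    fun_prop
  simp_rw [h2]
  have m1 : Measurable fun v => ∫⁻ w, posExp θ v * posExp θ w * posRpow (2*γ+1) (w - v) :=
    Measurable.lintegral_prod_right' (f := fun (p : ℝ × ℝ) =>
      posExp θ p.1 * posExp θ p.2 * posRpow (2*γ+1) (p.2 - p.1)) (by fun_prop)
  have m2 : Measurable fun v => ∫⁻ w, posExp θ v * posExp θ w * posRpow (2*γ+1) (v - w) :=
    Measurable.lintegral_prod_right' (f := fun (p : ℝ × ℝ) =>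
      posExp θ p.1 * posExp θ p.2 * posRpow (2*γ+1) (p.1 - p.2)) (by fun_prop)
  rw [lintegral_const_mul _ (by fun_prop), lintegral_add_left m1,
    lintegral_lintegral_swap (f := fun v w => posExp θ v * posExp θ w * posRpow (2*γ+1) (v - w))
      (by fun_prop)]
  have h3 := lintegral_posExp_mul_posExp_mul_posRpow_sub (s := 2 * γ + 2) hθ (by linarith)
  rw [show 2 * γ + 2 - 1 = 2 * γ + 1 by ring, show 2 * γ + 2 + 1 = 2 * γ + 3 by ring] at h3
  have h4 : ∫⁻ w, ∫⁻ v, posExp θ v * posExp θ w * posRpow (2*γ+1) (v - w) =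
      ENNReal.ofReal (Real.Gamma (2*γ+2) / (2 * θ ^ (2*γ+3))) := by
    rw [← h3]
    congr! 5
    rw [mul_comm]
  have hG3 : 0 < Real.Gamma (2*γ+2) := Real.Gamma_pos_of_pos (by linarith)
  have := Real.rpow_pos_of_pos hθ (2*γ+3)
  rw [h3, h4, ← ENNReal.ofReal_add (by positivity) (by positivity), ← ENNReal.ofReal_mul hC0]
  congr 1
  rw [hC]
  field_simp
  ring

lemma aestronglyMeasurable_intervalIntegral_zero {f : ℝ → ℝ → ℝ}
    (hf : Measurable (Function.uncurry f)) :
    AEStronglyMeasurable (fun u => ∫ v in (0:ℝ)..u, f u v)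
      (volume.restrict (Set.Ioi (0:ℝ))) := by
  have hmeas : StronglyMeasurable
      (fun u : ℝ => ∫ v : ℝ, if 0 < v ∧ v ≤ u then f u v else 0) := by
    refine StronglyMeasurable.integral_prod_right (Measurable.stronglyMeasurable ?_)
    refine Measurable.ite ?_ hf measurable_const
    exact (measurableSet_lt measurable_const measurable_snd).inter
      (measurableSet_le measurable_snd measurable_fst)
  refine hmeas.aestronglyMeasurable.congr ?_
  filter_upwards [ae_restrict_mem measurableSet_Ioi] with u hu
  rw [intervalIntegral.integral_of_le (le_of_lt hu), ← MeasureTheory.integral_indicator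
    measurableSet_Ioc]
  simp only [Set.indicator, Set.mem_Ioc]

lemma intervalIntegral_le_of_nonneg_of_le_Ioo {f g : ℝ → ℝ} {a b : ℝ} (hab : a ≤ b)
    (hf : ∀ x ∈ Set.Ioo a b, 0 ≤ f x) (hg : IntervalIntegrable g volume a b)
    (hfg : ∀ x ∈ Set.Ioo a b, f x ≤ g x) : ∫ x in a..b, f x ≤ ∫ x in a..b, g x := by
  rw [integral_of_le hab, integral_of_le hab, integral_Ioc_eq_integral_Ioo,
    integral_Ioc_eq_integral_Ioo]
  refine integral_mono_of_nonneg ?_ ?_ ?_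
  · exact (ae_restrict_mem measurableSet_Ioo).mono hf
  · exact ((intervalIntegrable_iff_integrableOn_Ioo_of_le hab).1 hg)
  · exact (ae_restrict_mem measurableSet_Ioo).mono hfg

lemma intervalIntegral_nonneg_of_Ioo {f : ℝ → ℝ} {a b : ℝ} (hab : a ≤ b)
    (hf : ∀ x ∈ Set.Ioo a b, 0 ≤ f x) : 0 ≤ ∫ x in a..b, f x := by
  rw [integral_of_le hab, integral_Ioc_eq_integral_Ioo]
  exact setIntegral_nonneg measurableSet_Ioo hf

lemma intervalIntegrable_of_nonneg_of_le_Ioo {f g : ℝ → ℝ} {a b : ℝ} (hab : a ≤ b)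
    (hm : AEStronglyMeasurable f (volume.restrict (Set.Ioo a b)))
    (hf : ∀ x ∈ Set.Ioo a b, 0 ≤ f x) (hg : IntervalIntegrable g volume a b)
    (hfg : ∀ x ∈ Set.Ioo a b, f x ≤ g x) : IntervalIntegrable f volume a b := by
  rw [intervalIntegrable_iff_integrableOn_Ioo_of_le hab] at hg ⊢
  refine hg.mono' hm ((ae_restrict_mem measurableSet_Ioo).mono fun x hx => ?_)
  rw [Real.norm_of_nonneg (hf x hx)]
  exact hfg x hx

lemma rpow_le_two_rpow_abs_s15 {x : ℝ} (hx : 1 / 2 ≤ x) (hx1 : x ≤ 1) (r : ℝ) :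
    x ^ r ≤ 2 ^ |r| := by
  rcases le_total 0 r with hr | hr
  · exact (Real.rpow_le_one (by linarith) hx1 hr).trans
      (Real.one_le_rpow one_le_two (abs_nonneg r))
  · refine (Real.rpow_le_rpow_of_nonpos (by norm_num) hx hr).trans_eq ?_
    rw [abs_of_nonpos hr, one_div, Real.inv_rpow two_pos.le, Real.rpow_neg two_pos.le]

lemma exp_neg_mul_le_rpow {θ v p : ℝ} (hθ : 0 < θ) (hv : 0 < v) (hp : 0 ≤ p) (hp1 : p ≤ 1) :
    Real.exp (-(θ * v)) ≤ θ ^ (-p) * v ^ (-p) := by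
  have hx : 0 < θ * v := mul_pos hθ hv
  rw [← Real.mul_rpow hθ.le hv.le, Real.exp_neg, Real.rpow_neg hx.le]
  refine inv_anti₀ (Real.rpow_pos_of_pos hx p) ?_
  calc (θ * v) ^ p ≤ (Real.exp (θ * v)) ^ p :=
        Real.rpow_le_rpow hx.le (by linarith [Real.add_one_le_exp (θ * v)]) hp
    _ ≤ (Real.exp (θ * v)) ^ (1:ℝ) :=
        Real.rpow_le_rpow_of_exponent_le (Real.one_le_exp hx.le) hp1
    _ = _ := Real.rpow_one _

/-- The convolution of `v ↦ exp (-θ v)` and `v ↦ v ^ γ` on the half-line. -/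
noncomputable def expConv (θ γ u : ℝ) : ℝ :=
  ∫ v in (0:ℝ)..u, Real.exp (-(θ * v)) * (u - v) ^ γ

/-- The convolution of `v ↦ exp (-θ v) (1 - v / T) ^ β` and `v ↦ v ^ γ` on the half-line. -/
noncomputable def weightedConv (θ β γ T u : ℝ) : ℝ :=
  ∫ v in (0:ℝ)..u, Real.exp (-(θ * v)) * (1 - v / T) ^ β * (u - v) ^ γ

lemma intervalIntegrable_exp_mul_sub_rpow (θ : ℝ) {γ : ℝ} (hγ : -1 < γ) (u : ℝ) :
    IntervalIntegrable (fun v => Real.exp (-(θ * v)) * (u - v) ^ γ) volume 0 u := by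
  have := (intervalIntegrable_rpow' (a := u) (b := 0) hγ).comp_sub_left u
  rw [sub_self, sub_zero] at this
  exact this.continuousOn_mul (by fun_prop)

lemma expConv_nonneg (θ γ : ℝ) {u : ℝ} (hu : 0 ≤ u) : 0 ≤ expConv θ γ u :=
  intervalIntegral_nonneg_of_Ioo hu fun v hv =>
    mul_nonneg (Real.exp_pos _).le (Real.rpow_nonneg (by linarith [hv.2]) _)

lemma one_sub_div_nonneg {T v : ℝ} (hT : 0 < T) (hv : v ≤ T) : 0 ≤ 1 - v / T := by
  have := (div_le_one hT).2 hv
  linarith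

lemma weightedConv_nonneg (θ β γ : ℝ) {T u : ℝ} (hu : 0 < u) (huT : u ≤ T) :
    0 ≤ weightedConv θ β γ T u :=
  intervalIntegral_nonneg_of_Ioo hu.le fun v hv =>
    mul_nonneg (mul_nonneg (Real.exp_pos _).le (Real.rpow_nonneg
      (one_sub_div_nonneg (hu.trans_le huT) (by linarith [hv.2])) _))
      (Real.rpow_nonneg (by linarith [hv.2]) _)

lemma aestronglyMeasurable_expConv (θ γ : ℝ) :
    AEStronglyMeasurable (expConv θ γ) (volume.restrict (Set.Ioi (0:ℝ))) :=
  aestronglyMeasurable_intervalIntegral_zero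
    (f := fun u v => Real.exp (-(θ * v)) * (u - v) ^ γ) (by fun_prop)

lemma aestronglyMeasurable_weightedConv (θ β γ T : ℝ) :
    AEStronglyMeasurable (weightedConv θ β γ T) (volume.restrict (Set.Ioi (0:ℝ))) :=
  aestronglyMeasurable_intervalIntegral_zero
    (f := fun u v => Real.exp (-(θ * v)) * (1 - v / T) ^ β * (u - v) ^ γ) (by fun_prop)

lemma ofReal_expConv (θ : ℝ) {γ : ℝ} (hγ : -1 < γ) {u : ℝ} (hu : 0 < u) :
    ENNReal.ofReal (expConv θ γ u) = ∫⁻ v, posExp θ v * posRpow γ (u - v) := by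
  have hi := (intervalIntegrable_iff_integrableOn_Ioo_of_le hu.le).1
    (intervalIntegrable_exp_mul_sub_rpow θ hγ u)
  rw [expConv, integral_of_le hu.le, integral_Ioc_eq_integral_Ioo,
    ofReal_integral_eq_lintegral_ofReal hi, ← lintegral_indicator measurableSet_Ioo]
  · congr 1 with v
    by_cases h1 : 0 < v <;> by_cases h2 : v < u <;>
      simp [posExp, posRpow, h1, h2, ENNReal.ofReal_mul (Real.exp_pos _).le]
  · exact (ae_restrict_mem measurableSet_Ioo).mono fun v hv =>
      mul_nonneg (Real.exp_pos _).le (Real.rpow_nonneg (by linarith [hv.2]) _)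

lemma lintegral_expConv_sq {γ θ : ℝ} (hγ : -1 < γ) (hγ' : γ < -(1/2 : ℝ)) (hθ : 0 < θ) :
    ∫⁻ u in Set.Ioi (0:ℝ), ENNReal.ofReal (expConv θ γ u ^ 2) =
      ENNReal.ofReal ((Real.Gamma (γ+1) * Real.Gamma (-2*γ-1) * Real.Gamma (2*γ+2)
        / Real.Gamma (-γ)) / θ ^ (2*γ+3)) := by
  rw [← lintegral_convolution_sq hγ hγ' hθ, ← lintegral_indicator measurableSet_Ioi]
  congr 1 with u
  by_cases hu : 0 < u
  · rw [Set.indicator_of_mem (Set.mem_Ioi.2 hu), ENNReal.ofReal_pow (expConv_nonneg _ _ hu.le),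
      ofReal_expConv θ hγ hu]
  · rw [Set.indicator_of_notMem (by simpa using hu)]
    have : ∀ v, posExp θ v * posRpow γ (u - v) = 0 := by
      intro v
      by_cases hv : 0 < v
      · have : ¬ v < u := by linarith
        simp [posRpow, this]
      · simp [posExp, hv]
    simp [this]

lemma integrableOn_expConv_sq {γ θ : ℝ} (hγ : -1 < γ) (hγ' : γ < -(1/2 : ℝ)) (hθ : 0 < θ) :
    IntegrableOn (fun u => expConv θ γ u ^ 2) (Set.Ioi 0) := by
  refine ⟨(aestronglyMeasurable_expConv θ γ).pow 2, ?_⟩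
  rw [hasFiniteIntegral_iff_ofReal (ae_of_all _ fun u => sq_nonneg _),
    lintegral_expConv_sq hγ hγ' hθ]
  exact ENNReal.ofReal_lt_top

lemma integral_expConv_sq {γ θ : ℝ} (hγ : -1 < γ) (hγ' : γ < -(1/2 : ℝ)) (hθ : 0 < θ) :
    ∫ u in Set.Ioi (0:ℝ), expConv θ γ u ^ 2 =
      (Real.Gamma (γ+1) * Real.Gamma (-2*γ-1) * Real.Gamma (2*γ+2)
        / Real.Gamma (-γ)) / θ ^ (2*γ+3) := by
  rw [integral_eq_lintegral_of_nonneg_ae (ae_of_all _ fun u => sq_nonneg _)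
    (integrableOn_expConv_sq hγ hγ' hθ).aestronglyMeasurable, lintegral_expConv_sq hγ hγ' hθ,
    ENNReal.toReal_ofReal]
  have hG : 0 < Real.Gamma (-γ) := Real.Gamma_pos_of_pos (by linarith)
  have hG1 : 0 < Real.Gamma (γ+1) := Real.Gamma_pos_of_pos (by linarith)
  have hG2 : 0 < Real.Gamma (-2*γ-1) := Real.Gamma_pos_of_pos (by linarith)
  have hG3 : 0 < Real.Gamma (2*γ+2) := Real.Gamma_pos_of_pos (by linarith)
  positivity

lemma half_le_one_sub_div {T v : ℝ} (hT : 0 < T) (hv : v ≤ T / 2) : 1 / 2 ≤ 1 - v / T := by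
  have : v / T ≤ 1 / 2 := by rw [div_le_iff₀ hT]; linarith
  linarith

lemma weightedConv_le_expConv (θ β : ℝ) {γ T u : ℝ} (hγ : -1 < γ) (hu : 0 < u)
    (huT : u ≤ T / 2) : weightedConv θ β γ T u ≤ 2 ^ |β| * expConv θ γ u := by
  have hT : 0 < T := by linarith
  rw [expConv, ← intervalIntegral.integral_const_mul]
  refine intervalIntegral_le_of_nonneg_of_le_Ioo hu.le (fun v hv => ?_)
    ((intervalIntegrable_exp_mul_sub_rpow θ hγ u).const_mul _) (fun v hv => ?_)
  · exact mul_nonneg (mul_nonneg (Real.exp_pos _).le (Real.rpow_nonneg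
      (one_sub_div_nonneg hT (by linarith [hv.2])) _)) (Real.rpow_nonneg (by linarith [hv.2]) _)
  · have h0 := Real.exp_pos (-(θ * v))
    have h1 : 0 ≤ (u - v) ^ γ := Real.rpow_nonneg (by linarith [hv.2]) _
    have h2 : (1 - v / T) ^ β ≤ 2 ^ |β| := rpow_le_two_rpow_abs_s15
      (half_le_one_sub_div hT (by linarith [hv.2])) (by linarith [div_nonneg hv.1.le hT.le]) β
    calc Real.exp (-(θ * v)) * (1 - v / T) ^ β * (u - v) ^ γ
        ≤ Real.exp (-(θ * v)) * 2 ^ |β| * (u - v) ^ γ := by gcongr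
      _ = _ := by ring

lemma tendsto_one_sub_div_rpow (v r : ℝ) :
    Tendsto (fun T : ℝ => (1 - v / T) ^ r) atTop (nhds 1) := by
  have h : Tendsto (fun T : ℝ => 1 - v / T) atTop (nhds 1) := by
    simpa using (tendsto_const_nhds (x := (1:ℝ))).sub (tendsto_const_nhds.div_atTop tendsto_id)
  simpa using h.rpow_const (p := r) (Or.inl one_ne_zero)

lemma tendsto_weightedConv (θ β : ℝ) {γ u : ℝ} (hγ : -1 < γ) (hu : 0 < u) :
    Tendsto (fun T => weightedConv θ β γ T u) atTop (nhds (expConv θ γ u)) := by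
  refine intervalIntegral.tendsto_integral_filter_of_dominated_convergence
    (fun v => 2 ^ |β| * (Real.exp (-(θ * v)) * (u - v) ^ γ)) ?_ ?_
    ((intervalIntegrable_exp_mul_sub_rpow θ hγ u).const_mul _) ?_
  · exact Eventually.of_forall fun T => Measurable.aestronglyMeasurable (by fun_prop)
  · filter_upwards [eventually_ge_atTop (2 * u)] with T hT
    refine ae_of_all _ fun v hv => ?_
    rw [Set.uIoc_of_le hu.le] at hv
    have hT0 : 0 < T := by linarith
    have h0 := Real.exp_pos (-(θ * v))
    have h1 : 0 ≤ (u - v) ^ γ := Real.rpow_nonneg (by linarith [hv.2]) _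
    have h3 : 0 ≤ (1 - v / T) ^ β :=
      Real.rpow_nonneg (one_sub_div_nonneg hT0 (by linarith [hv.2])) _
    have h2 : (1 - v / T) ^ β ≤ 2 ^ |β| := rpow_le_two_rpow_abs_s15
      (half_le_one_sub_div hT0 (by linarith [hv.2])) (by linarith [div_nonneg hv.1.le hT0.le]) β
    rw [Real.norm_of_nonneg (by positivity)]
    calc Real.exp (-(θ * v)) * (1 - v / T) ^ β * (u - v) ^ γ
        ≤ Real.exp (-(θ * v)) * 2 ^ |β| * (u - v) ^ γ := by gcongr
      _ = _ := by ring
  · refine ae_of_all _ fun v _ => ?_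
    simpa using ((tendsto_one_sub_div_rpow v β).const_mul (Real.exp (-(θ * v)))).mul_const
      ((u - v) ^ γ)

/-- The normalized second moment as an integral over the time to the horizon. -/
lemma secondMoment_div_rpow (α β γ θ : ℝ) {T : ℝ} (hT : 0 < T) :
    (Real.exp (-(2 * θ * T)) * ∫ s in (0:ℝ)..T, s ^ (2*α) *
      (∫ t in s..T, Real.exp (θ * t) * t ^ β * (t - s) ^ γ) ^ 2) / T ^ (2*α+2*β) =
    ∫ u in (0:ℝ)..T, (1 - u / T) ^ (2*α) * weightedConv θ β γ T u ^ 2 := by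
  have hsub := intervalIntegral.integral_comp_sub_left (a := 0) (b := T) (fun s => s ^ (2*α) *
      (∫ t in s..T, Real.exp (θ * t) * t ^ β * (t - s) ^ γ) ^ 2) T
  rw [sub_self, sub_zero] at hsub
  rw [← hsub, mul_div_right_comm, ← intervalIntegral.integral_const_mul]
  refine intervalIntegral.integral_congr fun u hu => ?_
  rw [Set.uIcc_of_le hT.le] at hu
  have hinner : ∫ t in (T - u)..T, Real.exp (θ * t) * t ^ β * (t - (T - u)) ^ γ =
      Real.exp (θ * T) * T ^ β * weightedConv θ β γ T u := by
    have h := intervalIntegral.integral_comp_sub_left (a := 0) (b := u)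
      (fun t => Real.exp (θ * t) * t ^ β * (t - (T - u)) ^ γ) T
    rw [sub_zero] at h
    rw [← h, weightedConv, ← intervalIntegral.integral_const_mul]
    refine intervalIntegral.integral_congr fun v hv => ?_
    rw [Set.uIcc_of_le hu.1] at hv
    have e1 : T - v = T * (1 - v / T) := by field_simp
    have e2 : T - v - (T - u) = u - v := by ring
    have e3 : Real.exp (θ * (T - v)) = Real.exp (θ * T) * Real.exp (-(θ * v)) := by
      rw [← Real.exp_add]; ring_nf
    have e4 : (T - v) ^ β = T ^ β * (1 - v / T) ^ β := by
      rw [e1, Real.mul_rpow hT.le (one_sub_div_nonneg hT (hv.2.trans hu.2))]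
    simp only [e2, e3, e4]
    ring
  have e5 : (T - u) ^ (2*α) = T ^ (2*α) * (1 - u / T) ^ (2*α) := by
    rw [← Real.mul_rpow hT.le (one_sub_div_nonneg hT hu.2)]
    congr 1
    field_simp
  have e6 : Real.exp (-(2 * θ * T)) * Real.exp (θ * T) ^ 2 = 1 := by
    rw [← Real.exp_nat_mul, ← Real.exp_add]
    simp; ring
  have e7 : T ^ (2*α+2*β) = T ^ (2*α) * (T ^ β) ^ 2 := by
    rw [Real.rpow_add hT, ← Real.rpow_natCast (T ^ β), ← Real.rpow_mul hT.le]
    push_cast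
    ring_nf
  have hA := Real.rpow_pos_of_pos hT (2*α)
  have hB := Real.rpow_pos_of_pos hT β
  simp only [hinner, e5, e7]
  rw [div_mul_eq_mul_div, div_eq_iff (by positivity)]
  linear_combination (T ^ (2*α) * (1 - u / T) ^ (2*α) * (T ^ β) ^ 2 *
    weightedConv θ β γ T u ^ 2) * e6

lemma intervalIntegrable_rpow_mul_one_sub_rpow_s15 {r c : ℝ} (hr : -1 < r) (hc : -1 < c) :
    IntervalIntegrable (fun x : ℝ => x ^ r * (1 - x) ^ c) volume 0 1 := by
  have h := (Complex.betaIntegral_convergent (u := ((r + 1 : ℝ) : ℂ)) (v := ((c + 1 : ℝ) : ℂ))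
    (by rw [Complex.ofReal_re]; linarith) (by rw [Complex.ofReal_re]; linarith)).norm
  refine h.congr_uIoo fun x hx => ?_
  rw [Set.uIoo_of_le zero_le_one] at hx
  have e1 : (1 - x : ℂ) = ((1 - x : ℝ) : ℂ) := by push_cast; rfl
  simp only [norm_mul]
  rw [e1, Complex.norm_cpow_eq_rpow_re_of_pos hx.1,
    Complex.norm_cpow_eq_rpow_re_of_pos (sub_pos.2 hx.2)]
  simp

lemma rpow_mul_sub_rpow_eq {r c u v : ℝ} (hu : 0 < u) (hv : 0 ≤ v) (hvu : v ≤ u) :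
    v ^ r * (u - v) ^ c = u ^ (r + c) * ((v / u) ^ r * (1 - v / u) ^ c) := by
  rw [Real.rpow_add hu, mul_mul_mul_comm, ← Real.mul_rpow hu.le (div_nonneg hv hu.le),
    ← Real.mul_rpow hu.le (one_sub_div_nonneg hu hvu)]
  congr 2 <;> field_simp

lemma intervalIntegrable_rpow_mul_sub_rpow {r c u : ℝ} (hr : -1 < r) (hc : -1 < c)
    (hu : 0 < u) :
    IntervalIntegrable (fun v : ℝ => v ^ r * (u - v) ^ c) volume 0 u := by
  have h := ((intervalIntegrable_rpow_mul_one_sub_rpow_s15 hr hc).comp_mul_right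
    (c := u⁻¹)).const_mul (u ^ (r + c))
  rw [zero_div, one_div, inv_inv] at h
  refine h.congr_uIoo fun v hv => ?_
  rw [Set.uIoo_of_le hu.le] at hv
  exact (rpow_mul_sub_rpow_eq hu hv.1.le hv.2.le).symm

lemma integral_rpow_mul_sub_rpow {r c u : ℝ} (hu : 0 < u) :
    ∫ v in (0:ℝ)..u, v ^ r * (u - v) ^ c =
      u ^ (r + c + 1) * ∫ x in (0:ℝ)..1, x ^ r * (1 - x) ^ c := by
  have h := intervalIntegral.integral_comp_div (a := 0) (b := u)
    (fun x : ℝ => x ^ r * (1 - x) ^ c) hu.ne'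
  rw [zero_div, div_self hu.ne', smul_eq_mul] at h
  rw [Real.rpow_add hu, Real.rpow_one, mul_assoc, ← h, ← intervalIntegral.integral_const_mul]
  refine intervalIntegral.integral_congr fun v hv => ?_
  rw [Set.uIcc_of_le hu.le] at hv
  exact rpow_mul_sub_rpow_eq hu hv.1 hv.2

lemma one_sub_div_rpow_le {T u v a b : ℝ} (ha : 0 ≤ a) (hv : 0 < v) (hvu : v < u) (huT : u < T) :
    (1 - v / T) ^ (b - a) ≤
      (1 - u / T) ^ (-a) * (T ^ (-min b 0) * (u - v) ^ min b 0) := by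
  have hT : 0 < T := by linarith
  have hq : 0 < 1 - u / T := sub_pos.2 ((div_lt_one hT).2 huT)
  have hqv : 1 - u / T ≤ 1 - v / T := by gcongr
  have hqv0 : 0 < 1 - v / T := hq.trans_le hqv
  have h1 : (1 - v / T) ^ (-a) ≤ (1 - u / T) ^ (-a) :=
    Real.rpow_le_rpow_of_nonpos hq hqv (by linarith)
  have huv : 0 < u - v := by linarith
  have h2 : (1 - v / T) ^ b ≤ T ^ (-min b 0) * (u - v) ^ min b 0 := by
    rcases le_total 0 b with hb | hb
    · rw [min_eq_right hb]
      simpa using Real.rpow_le_one hqv0.le (by linarith [div_nonneg hv.le hT.le]) hb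
    · rw [min_eq_left hb, Real.rpow_neg hT.le, ← Real.inv_rpow hT.le,
        ← Real.mul_rpow (inv_nonneg.2 hT.le) huv.le]
      refine Real.rpow_le_rpow_of_nonpos (by positivity) ?_ hb
      rw [← sub_nonneg]
      have : 1 - v / T - T⁻¹ * (u - v) = 1 - u / T := by field_simp; ring
      rw [this]
      exact hq.le
  rw [sub_eq_neg_add b, Real.rpow_add hqv0]
  have := Real.rpow_nonneg hqv0.le b
  have := Real.rpow_nonneg hq.le (-a)
  gcongr

lemma exists_weightedConv_le {θ β γ a p : ℝ} (hθ : 0 < θ) (hγ : -1 < γ) (hp : 0 < p)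
    (hp1 : p < 1) (ha : 0 ≤ a) (haβγ : -1 < β + a + γ) :
    ∃ K : ℝ, 0 ≤ K ∧ ∀ T u : ℝ, 0 < T → T / 2 ≤ u → u < T →
      weightedConv θ β γ T u ≤ K * T ^ (γ + 1 - p) * (1 - u / T) ^ (-a) := by
  set m := min (β + a) 0 with hm
  have hmγ : -1 < m + γ := by
    rw [hm, min_add]; exact lt_min haβγ (by linarith)
  set D := ∫ x in (0:ℝ)..1, x ^ (-p) * (1 - x) ^ (m + γ) with hD
  have hD0 : 0 ≤ D := intervalIntegral_nonneg_of_Ioo zero_le_one fun x hx =>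
    mul_nonneg (Real.rpow_nonneg hx.1.le _) (Real.rpow_nonneg (by linarith [hx.2]) _)
  set r := -p + (m + γ) + 1 with hr
  refine ⟨θ ^ (-p) * 2 ^ |r| * D, by positivity, fun T u hT hTu huT => ?_⟩
  have hu : 0 < u := by linarith
  have hq : 0 < 1 - u / T := sub_pos.2 ((div_lt_one hT).2 huT)
  have hi := intervalIntegrable_rpow_mul_sub_rpow (r := -p) (c := m + γ) (by linarith) hmγ hu
  calc weightedConv θ β γ T u
      ≤ ∫ v in (0:ℝ)..u, (θ ^ (-p) * (1 - u / T) ^ (-a) * T ^ (-m)) *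
          (v ^ (-p) * (u - v) ^ (m + γ)) := by
        refine intervalIntegral_le_of_nonneg_of_le_Ioo hu.le (fun v hv => ?_)
          (hi.const_mul _) (fun v hv => ?_)
        · exact mul_nonneg (mul_nonneg (Real.exp_pos _).le (Real.rpow_nonneg
            (one_sub_div_nonneg hT (by linarith [hv.2])) _))
            (Real.rpow_nonneg (by linarith [hv.2]) _)
        · have huv : 0 < u - v := by linarith [hv.2]
          have h1 := exp_neg_mul_le_rpow hθ hv.1 hp.le hp1.le
          have h2 := one_sub_div_rpow_le (b := β + a) ha hv.1 hv.2 huT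
          rw [add_sub_cancel_right, ← hm] at h2
          have h3 : 0 ≤ (1 - v / T) ^ β :=
            Real.rpow_nonneg (one_sub_div_nonneg hT (by linarith [hv.2])) _
          have h4 : 0 ≤ v ^ (-p) := Real.rpow_nonneg hv.1.le _
          calc Real.exp (-(θ * v)) * (1 - v / T) ^ β * (u - v) ^ γ
              ≤ (θ ^ (-p) * v ^ (-p)) * ((1 - u / T) ^ (-a) * (T ^ (-m) * (u - v) ^ m)) *
                (u - v) ^ γ := by gcongr
            _ = _ := by rw [Real.rpow_add huv]; ring
    _ = θ ^ (-p) * (1 - u / T) ^ (-a) * T ^ (-m) * (u ^ r * D) := by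
        rw [intervalIntegral.integral_const_mul, integral_rpow_mul_sub_rpow hu]
    _ ≤ θ ^ (-p) * (1 - u / T) ^ (-a) * T ^ (-m) * (T ^ r * 2 ^ |r| * D) := by
        have h5 : u ^ r ≤ T ^ r * 2 ^ |r| := by
          have : u = T * (u / T) := by field_simp
          rw [this, Real.mul_rpow hT.le (by positivity)]
          gcongr
          refine rpow_le_two_rpow_abs_s15 ?_ ((div_le_one hT).2 huT.le) r
          rw [le_div_iff₀ hT]; linarith
        gcongr
    _ = _ := by
        have : T ^ (γ + 1 - p) = T ^ (-m) * T ^ r := by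
          rw [← Real.rpow_add hT]; congr 1; rw [hr]; ring
        rw [this]; ring

lemma aestronglyMeasurable_integrand (α β γ θ T : ℝ) :
    AEStronglyMeasurable (fun u => (1 - u / T) ^ (2*α) * weightedConv θ β γ T u ^ 2)
      (volume.restrict (Set.Ioi (0:ℝ))) :=
  (Measurable.aestronglyMeasurable (by fun_prop)).mul
    ((aestronglyMeasurable_weightedConv θ β γ T).pow 2)

lemma integrand_nonneg (α β γ θ : ℝ) {T u : ℝ} (hT : 0 < T) (huT : u ≤ T) :
    0 ≤ (1 - u / T) ^ (2*α) * weightedConv θ β γ T u ^ 2 :=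
  mul_nonneg (Real.rpow_nonneg (one_sub_div_nonneg hT huT) _) (sq_nonneg _)

lemma integrand_le_expConv_sq (α β θ : ℝ) {γ T u : ℝ} (hγ : -1 < γ) (hu : 0 < u)
    (huT : u ≤ T / 2) :
    (1 - u / T) ^ (2*α) * weightedConv θ β γ T u ^ 2 ≤
      2 ^ |2*α| * (2 ^ |β|) ^ 2 * expConv θ γ u ^ 2 := by
  have hT : 0 < T := by linarith
  have h1 : (1 - u / T) ^ (2*α) ≤ 2 ^ |2*α| := rpow_le_two_rpow_abs_s15
    (half_le_one_sub_div hT huT) (by linarith [div_nonneg hu.le hT.le]) _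
  have h2 := weightedConv_le_expConv θ β hγ hu huT
  have h3 := weightedConv_nonneg θ β γ hu (by linarith : u ≤ T)
  rw [mul_assoc, ← mul_pow]
  gcongr

lemma intervalIntegrable_integrand_zero_half (α β : ℝ) {γ θ T : ℝ} (hγ : -1 < γ)
    (hγ' : γ < -(1/2 : ℝ)) (hθ : 0 < θ) (hT : 0 < T) :
    IntervalIntegrable (fun u => (1 - u / T) ^ (2*α) * weightedConv θ β γ T u ^ 2)
      volume 0 (T / 2) := by
  have hT2 : 0 ≤ T / 2 := by linarith
  refine intervalIntegrable_of_nonneg_of_le_Ioo hT2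
    ((aestronglyMeasurable_integrand α β γ θ T).mono_set Set.Ioo_subset_Ioi_self)
    (fun u hu => integrand_nonneg α β γ θ hT (by linarith [hu.2])) ?_
    (fun u hu => integrand_le_expConv_sq α β θ hγ hu.1 hu.2.le)
  rw [intervalIntegrable_iff_integrableOn_Ioo_of_le hT2]
  exact ((integrableOn_expConv_sq hγ hγ' hθ).mono_set Set.Ioo_subset_Ioi_self).const_mul _

lemma tendsto_integral_integrand_zero_half (α β : ℝ) {γ θ : ℝ} (hγ : -1 < γ)
    (hγ' : γ < -(1/2 : ℝ)) (hθ : 0 < θ) :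
    Tendsto (fun T : ℝ => ∫ u in (0:ℝ)..T / 2,
      (1 - u / T) ^ (2*α) * weightedConv θ β γ T u ^ 2) atTop
      (nhds (∫ u in Set.Ioi (0:ℝ), expConv θ γ u ^ 2)) := by
  have hlim : Tendsto (fun T : ℝ => ∫ u in Set.Ioi (0:ℝ), (Set.Iic (T / 2)).indicator
      (fun u => (1 - u / T) ^ (2*α) * weightedConv θ β γ T u ^ 2) u) atTop
      (nhds (∫ u in Set.Ioi (0:ℝ), expConv θ γ u ^ 2)) := by
    refine MeasureTheory.tendsto_integral_filter_of_dominated_convergence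
      (fun u => 2 ^ |2*α| * (2 ^ |β|) ^ 2 * expConv θ γ u ^ 2) ?_ ?_
      ((integrableOn_expConv_sq hγ hγ' hθ).const_mul _) ?_
    · exact Eventually.of_forall fun T =>
        (aestronglyMeasurable_integrand α β γ θ T).indicator measurableSet_Iic
    · refine Eventually.of_forall fun T => ?_
      filter_upwards [ae_restrict_mem measurableSet_Ioi] with u hu
      have hu0 : 0 < u := hu
      by_cases h : u ≤ T / 2
      · rw [Set.indicator_of_mem (Set.mem_Iic.2 h), Real.norm_of_nonneg
          (integrand_nonneg α β γ θ (by linarith) (by linarith))]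
        exact integrand_le_expConv_sq α β θ hγ hu h
      · rw [Set.indicator_of_notMem (by simpa using h), norm_zero]
        positivity
    · filter_upwards [ae_restrict_mem measurableSet_Ioi] with u hu
      have h := (tendsto_one_sub_div_rpow u (2*α)).mul ((tendsto_weightedConv θ β hγ hu).pow 2)
      rw [one_mul] at h
      refine h.congr' ?_
      filter_upwards [eventually_ge_atTop (2 * u)] with T hT
      rw [Set.indicator_of_mem (Set.mem_Iic.2 (by linarith))]
  refine hlim.congr' ?_
  filter_upwards [eventually_ge_atTop 0] with T hT
  rw [setIntegral_indicator measurableSet_Iic, integral_of_le (by linarith), Set.Ioi_inter_Iic]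

lemma exists_integrand_half_le {α β γ θ : ℝ} (hα : -(1/2 : ℝ) < α)
    (hαβγ : -(3/2 : ℝ) < α + β + γ) (hγ : -1 < γ) (hγ' : γ < -(1/2 : ℝ)) (hθ : 0 < θ) :
    ∃ K a e : ℝ, a < α + 1 / 2 ∧ e < -1 ∧ ∀ T u : ℝ, 0 < T → T / 2 ≤ u → u < T →
      (1 - u / T) ^ (2*α) * weightedConv θ β γ T u ^ 2 ≤
        K * T ^ e * (1 - u / T) ^ (2*α - 2*a) := by
  obtain ⟨a, ha, haα⟩ : ∃ a, max 0 (-(β + γ + 1)) < a ∧ a < α + 1 / 2 :=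
    exists_between (max_lt (by linarith) (by linarith))
  have ha0 : 0 < a := (le_max_left _ _).trans_lt ha
  have haβγ : -(β + γ + 1) < a := (le_max_right _ _).trans_lt ha
  obtain ⟨p, hp, hp1⟩ : ∃ p, γ + 3 / 2 < p ∧ p < 1 := exists_between (by linarith)
  obtain ⟨K, hK, hle⟩ := exists_weightedConv_le (β := β) (a := a) (p := p) hθ hγ
    (by linarith) hp1 ha0.le (by linarith)
  refine ⟨K ^ 2, a, 2 * (γ + 1 - p), haα, by linarith, fun T u hT hTu huT => ?_⟩
  have hq : 0 < 1 - u / T := sub_pos.2 ((div_lt_one hT).2 huT)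
  have h0 := weightedConv_nonneg θ β γ (by linarith : 0 < u) huT.le
  have h1 := hle T u hT hTu huT
  have h2 : ∀ x y : ℝ, 0 ≤ x → (x ^ y) ^ 2 = x ^ (2 * y) := fun x y hx => by
    rw [← Real.rpow_natCast (x ^ y), ← Real.rpow_mul hx, mul_comm]
    norm_num
  calc (1 - u / T) ^ (2*α) * weightedConv θ β γ T u ^ 2
      ≤ (1 - u / T) ^ (2*α) * (K * T ^ (γ + 1 - p) * (1 - u / T) ^ (-a)) ^ 2 := by
        gcongr
    _ = _ := by
        rw [mul_pow, mul_pow, h2 _ _ hT.le, h2 _ _ hq.le, sub_eq_add_neg (2*α),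
          Real.rpow_add hq]
        ring_nf

lemma intervalIntegrable_one_sub_div_rpow {r T : ℝ} (hr : -1 < r) (a b : ℝ) (hT : 0 < T) :
    IntervalIntegrable (fun u : ℝ => (1 - u / T) ^ r) volume a b := by
  have h := ((intervalIntegrable_rpow' (a := 1 - a / T) (b := 1 - b / T) hr).comp_sub_left
    1).comp_mul_right (c := T⁻¹)
  simpa [div_eq_mul_inv, mul_assoc, hT.ne'] using h

lemma intervalIntegrable_integrand_half {α β γ θ T : ℝ} (hα : -(1/2 : ℝ) < α)
    (hαβγ : -(3/2 : ℝ) < α + β + γ) (hγ : -1 < γ) (hγ' : γ < -(1/2 : ℝ)) (hθ : 0 < θ)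
    (hT : 0 < T) :
    IntervalIntegrable (fun u => (1 - u / T) ^ (2*α) * weightedConv θ β γ T u ^ 2)
      volume (T / 2) T := by
  obtain ⟨K, a, e, ha, -, hle⟩ := exists_integrand_half_le hα hαβγ hγ hγ' hθ
  exact intervalIntegrable_of_nonneg_of_le_Ioo (by linarith)
    ((aestronglyMeasurable_integrand α β γ θ T).mono_set fun u hu =>
      (by linarith [hu.1] : 0 < u))
    (fun u hu => integrand_nonneg α β γ θ hT hu.2.le)
    ((intervalIntegrable_one_sub_div_rpow (r := 2*α - 2*a) (by linarith) _ _ hT).const_mul _)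
    (fun u hu => hle T u hT hu.1.le hu.2)

lemma tendsto_integral_integrand_half {α β γ θ : ℝ} (hα : -(1/2 : ℝ) < α)
    (hαβγ : -(3/2 : ℝ) < α + β + γ) (hγ : -1 < γ) (hγ' : γ < -(1/2 : ℝ)) (hθ : 0 < θ) :
    Tendsto (fun T : ℝ => ∫ u in (T / 2)..T,
      (1 - u / T) ^ (2*α) * weightedConv θ β γ T u ^ 2) atTop (nhds 0) := by
  obtain ⟨K, a, e, ha, he, hle⟩ := exists_integrand_half_le hα hαβγ hγ hγ' hθ
  set E := ∫ x in (1 / 2 : ℝ)..1, (1 - x) ^ (2*α - 2*a)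
  have hlim : Tendsto (fun T : ℝ => K * E * T ^ (e + 1)) atTop (nhds 0) := by
    have := (tendsto_rpow_neg_atTop (y := -(e + 1)) (by linarith)).const_mul (K * E)
    simpa using this
  refine squeeze_zero' ?_ ?_ hlim
  · filter_upwards [eventually_gt_atTop 0] with T hT
    exact intervalIntegral_nonneg_of_Ioo (by linarith) fun u hu =>
      integrand_nonneg α β γ θ hT hu.2.le
  · filter_upwards [eventually_gt_atTop 0] with T hT
    refine (intervalIntegral_le_of_nonneg_of_le_Ioo (by linarith)
      (fun u hu => integrand_nonneg α β γ θ hT hu.2.le)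
      ((intervalIntegrable_one_sub_div_rpow (r := 2*α - 2*a) (by linarith) _ _ hT).const_mul _)
      (fun u hu => hle T u hT hu.1.le hu.2)).trans_eq ?_
    have h := intervalIntegral.integral_comp_div (a := T / 2) (b := T)
      (fun x : ℝ => (1 - x) ^ (2*α - 2*a)) hT.ne'
    rw [div_self hT.ne', show T / 2 / T = 1 / 2 by field_simp, smul_eq_mul] at h
    rw [intervalIntegral.integral_const_mul, h, Real.rpow_add hT, Real.rpow_one]
    ring

/-- Lemma 4.5, case `γ ∈ (-1, -1/2)`: asymptotics of
`E(e^{-θT} ∫₀ᵀ e^{θs} dX_s)²`. -/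
theorem stmt_15 (α β γ θ : ℝ) (hα : -(1/2 : ℝ) < α)
    (hαβγ : -(3/2 : ℝ) < α + β + γ) (hγ : -1 < γ) (hγ' : γ < -(1/2 : ℝ))
    (hθ : 0 < θ)
    (G : ℝ → ℝ)
    (hG : ∀ T : ℝ, G T = Real.exp (-(2 * θ * T)) * ∫ s in (0:ℝ)..T, s ^ (2*α) *
      (∫ t in s..T, Real.exp (θ * t) * t ^ β * (t - s) ^ γ) ^ 2) :
    Tendsto (fun T : ℝ => G T / T ^ (2*α+2*β)) atTop
      (nhds ((Real.Gamma (γ+1) * Real.Gamma (-2*γ-1) * Real.Gamma (2*γ+2)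
        / Real.Gamma (-γ)) / θ ^ (2*γ+3))) := by
  have hlim := (tendsto_integral_integrand_zero_half α β hγ hγ' hθ).add
    (tendsto_integral_integrand_half hα hαβγ hγ hγ' hθ)
  rw [integral_expConv_sq hγ hγ' hθ, add_zero] at hlim
  refine hlim.congr' ?_
  filter_upwards [eventually_gt_atTop 0] with T hT
  rw [hG, secondMoment_div_rpow α β γ θ hT]
  exact intervalIntegral.integral_add_adjacent_intervals
    (intervalIntegrable_integrand_zero_half α β hγ hγ' hθ hT)
    (intervalIntegrable_integrand_half hα hαβγ hγ hγ' hθ hT)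
end

section
/- Let α, β be real numbers with α > -1/2 and α + β > −1, let γ = −1/2, and let θ > 0. Define G(T) = e^{−2θT} ∫₀ᵀ s^{2α} (∫ₛᵀ e^{θt} t^β (t−s)^{−1/2} dt)² ds for T > 0. Then lim_{T→+∞} G(T) / (T^{2α+2β} log T) = 1/θ². -/
open MeasureTheory Filter intervalIntegral

theorem abs_integral_le_integral_of_Ioo {f g : ℝ → ℝ} {a b : ℝ} (hab : a ≤ b)
    (h : ∀ x ∈ Set.Ioo a b, |f x| ≤ g x) (hg : IntervalIntegrable g volume a b) :
    |∫ x in a..b, f x| ≤ ∫ x in a..b, g x := by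
  rw [← Real.norm_eq_abs]
  refine norm_integral_le_of_norm_le hab ?_ hg
  filter_upwards [volume.ae_ne b] with x hx hx'
  exact h x ⟨hx'.1, lt_of_le_of_ne hx'.2 hx⟩

theorem intervalIntegrable_of_abs_le_Ioo {f g : ℝ → ℝ} {a b : ℝ} (hab : a ≤ b)
    (hf : Measurable f) (h : ∀ x ∈ Set.Ioo a b, |f x| ≤ g x)
    (hg : IntervalIntegrable g volume a b) : IntervalIntegrable f volume a b := by
  refine hg.mono_fun' hf.aestronglyMeasurable ?_
  rw [Set.uIoc_of_le hab, EventuallyLE, ae_restrict_iff' measurableSet_Ioc]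
  filter_upwards [volume.ae_ne b] with x hx hx'
  exact h x ⟨hx'.1, lt_of_le_of_ne hx'.2 hx⟩

theorem intervalIntegrable_one_sub_rpow {e : ℝ} (he : 0 < e) :
    IntervalIntegrable (fun v : ℝ => (1 - v) ^ (e - 1)) volume 0 1 := by
  have h := (intervalIntegrable_rpow' (a := 0) (b := 1) (r := e - 1) (by linarith)).comp_sub_left 1
  simpa using h.symm

theorem integral_one_sub_rpow {e : ℝ} (he : 0 < e) :
    ∫ v in (0:ℝ)..1, (1 - v) ^ (e - 1) = 1 / e := by
  rw [integral_comp_sub_left (fun v : ℝ => v ^ (e - 1)) 1]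
  rw [integral_rpow (Or.inl (by linarith))]
  simp [he.ne']

theorem mul_integral_exp_neg_mul {c x : ℝ} (hc : 0 < c) (hx : 0 < x) :
    x * ∫ v in (0:ℝ)..1, Real.exp (-(c * x * v)) = (1 - Real.exp (-(c * x))) / c := by
  have hcx : c * x ≠ 0 := by positivity
  have := integral_comp_mul_left (a := 0) (b := 1) (c := -(c * x)) (fun v : ℝ => Real.exp v)
    (by simpa using ⟨hc.ne', hx.ne'⟩)
  simp only [neg_mul] at this
  rw [this, integral_exp]
  simp only [smul_eq_mul, mul_one, mul_zero, neg_zero, Real.exp_zero]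
  field_simp
  ring

theorem mul_exp_neg_le {c x : ℝ} (hc : 0 < c) : x * Real.exp (-(c * x)) ≤ 1 / c := by
  have h := Real.add_one_le_exp (c * x)
  rw [Real.exp_neg, ← div_eq_mul_inv, div_le_div_iff₀ (Real.exp_pos _) hc]
  nlinarith

/-- The truncated Laplace transform of `(1 - v) ^ (e - 1)`, multiplied by its argument. -/
noncomputable def expBeta (c e x : ℝ) : ℝ :=
  x * ∫ v in (0:ℝ)..1, Real.exp (-(c * x * v)) * (1 - v) ^ (e - 1)

theorem intervalIntegrable_expBeta (c x : ℝ) {e : ℝ} (he : 0 < e) :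
    IntervalIntegrable (fun v : ℝ => Real.exp (-(c * x * v)) * (1 - v) ^ (e - 1)) volume 0 1 :=
  (intervalIntegrable_one_sub_rpow he).continuousOn_mul (by fun_prop)

theorem expBeta_le_div {c e x : ℝ} (hc : 0 < c) (he : 0 < e) (hx : 0 < x) :
    expBeta c e x ≤ x / e := by
  have h : ∫ v in (0:ℝ)..1, Real.exp (-(c * x * v)) * (1 - v) ^ (e - 1) ≤ 1 / e := by
    rw [← integral_one_sub_rpow he]
    refine integral_mono_on zero_le_one (intervalIntegrable_expBeta c x he)
      (intervalIntegrable_one_sub_rpow he) fun v hv => ?_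
    refine mul_le_of_le_one_left (Real.rpow_nonneg (by linarith [hv.2]) _) ?_
    have := mul_nonneg (mul_pos hc hx).le hv.1
    exact Real.exp_le_one_iff.2 (by linarith)
  calc expBeta c e x ≤ x * (1 / e) := mul_le_mul_of_nonneg_left h hx.le
    _ = x / e := by ring

theorem expBeta_le {c e x : ℝ} (hc : 0 < c) (he : 0 < e) (hx : 0 < x) :
    expBeta c e x ≤ 2 / c + 2 / (c * e) := by
  have hcx := mul_pos hc hx
  have i1 : IntervalIntegrable (fun v : ℝ => 2 * Real.exp (-(c * x * v))) volume 0 1 :=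
    Continuous.intervalIntegrable (by fun_prop) _ _
  have i2 : IntervalIntegrable (fun v : ℝ => Real.exp (-(c / 2 * x)) * (1 - v) ^ (e - 1))
      volume 0 1 := (intervalIntegrable_one_sub_rpow he).const_mul _
  have h : ∫ v in (0:ℝ)..1, Real.exp (-(c * x * v)) * (1 - v) ^ (e - 1) ≤
      ∫ v in (0:ℝ)..1, (2 * Real.exp (-(c * x * v)) +
        Real.exp (-(c / 2 * x)) * (1 - v) ^ (e - 1)) := by
    refine integral_mono_on_of_le_Ioo zero_le_one (intervalIntegrable_expBeta c x he)
      (i1.add i2) fun v hv => ?_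
    have hv1 : 0 < 1 - v := by linarith [hv.2]
    have hp := Real.rpow_nonneg hv1.le (e - 1)
    rcases le_total v (1 / 2) with h2 | h2
    · have : (1 - v) ^ (e - 1) ≤ 2 := by
        calc (1 - v) ^ (e - 1) ≤ (1 - v) ^ (-1 : ℝ) :=
              Real.rpow_le_rpow_of_exponent_ge hv1 (by linarith [hv.1]) (by linarith)
          _ = (1 - v)⁻¹ := Real.rpow_neg_one _
          _ ≤ (1 / 2 : ℝ)⁻¹ := inv_anti₀ (by norm_num) (by linarith)
          _ = 2 := by norm_num
      have := mul_le_mul_of_nonneg_left this (Real.exp_pos (-(c * x * v))).le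
      have := mul_nonneg (Real.exp_pos (-(c / 2 * x))).le hp
      linarith
    · have : Real.exp (-(c * x * v)) ≤ Real.exp (-(c / 2 * x)) :=
        Real.exp_le_exp.2 (by nlinarith)
      have := mul_le_mul_of_nonneg_right this hp
      have := Real.exp_pos (-(c * x * v))
      linarith
  rw [integral_add i1 i2, intervalIntegral.integral_const_mul,
    intervalIntegral.integral_const_mul, integral_one_sub_rpow he] at h
  have h1 := mul_integral_exp_neg_mul hc hx
  have h2 : x * Real.exp (-(c / 2 * x)) ≤ 1 / (c / 2) := mul_exp_neg_le (by positivity)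
  calc expBeta c e x ≤ x * (2 * (∫ v in (0:ℝ)..1, Real.exp (-(c * x * v))) +
        Real.exp (-(c / 2 * x)) * (1 / e)) := mul_le_mul_of_nonneg_left h hx.le
    _ = 2 * ((1 - Real.exp (-(c * x))) / c) + x * Real.exp (-(c / 2 * x)) * (1 / e) := by
        rw [← h1]; ring
    _ ≤ 2 * (1 / c) + 1 / (c / 2) * (1 / e) := by
        have := Real.exp_pos (-(c * x))
        gcongr
        linarith
    _ = 2 / c + 2 / (c * e) := by field_simp

/-- The integrand of the inner integral over `[s, T]`, after substituting `t = T - x * v` with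
`x = T - s` and normalizing. -/
noncomputable def innerIntegrand (β θ T x v : ℝ) : ℝ :=
  Real.exp (-(θ * x * v)) * (1 - x * v / T) ^ β * (1 - v) ^ (-(1 / 2 : ℝ))

/-- The normalized inner integral over `[s, T]`, multiplied by the square root of `x = T - s`. -/
noncomputable def innerIntegral (β θ T x : ℝ) : ℝ :=
  x * ∫ v in (0:ℝ)..1, innerIntegrand β θ T x v

theorem measurable_innerIntegrand (β θ T : ℝ) :
    Measurable fun p : ℝ × ℝ => innerIntegrand β θ T p.1 p.2 := by
  unfold innerIntegrand
  fun_prop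

theorem measurable_innerIntegral (β θ T : ℝ) : Measurable (innerIntegral β θ T) := by
  unfold innerIntegral
  refine measurable_id.mul ?_
  simp only [integral_of_le (zero_le_one (α := ℝ))]
  exact ((measurable_innerIntegrand β θ T).stronglyMeasurable.integral_prod_right'
    (ν := volume.restrict (Set.Ioc 0 1))).measurable

theorem abs_innerIntegrand_le {β q η θ T x v : ℝ} (hq : 0 ≤ q) (hη2 : η ≤ 1 / 2)
    (hβ : η - 1 / 2 - q ≤ β) (hx : 0 < x) (hxT : x < T) (hv : v ∈ Set.Ioo (0:ℝ) 1) :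
    |innerIntegrand β θ T x v| ≤
      (1 - x / T) ^ (-q) * (Real.exp (-(θ * x * v)) * (1 - v) ^ (η - 1)) := by
  obtain ⟨hv0, hv1⟩ := hv
  have hT : 0 < T := hx.trans hxT
  have hz : x / T < 1 := (div_lt_one hT).2 hxT
  have hz0 : 0 < x / T := by positivity
  have e1 : x * v / T = x / T * v := by ring
  have hb1 : 1 - x / T * v ≤ 1 := by nlinarith
  have hb2 : 1 - x / T ≤ 1 - x / T * v := by nlinarith
  have hb3 : 1 - v ≤ 1 - x / T * v := by nlinarith
  have hb0 : 0 < 1 - x / T * v := by linarith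
  have hv' : 0 < 1 - v := by linarith
  have key : (1 - x / T * v) ^ β ≤ (1 - x / T) ^ (-q) * (1 - v) ^ (η - 1 / 2) :=
    calc (1 - x / T * v) ^ β ≤ (1 - x / T * v) ^ (-q + (η - 1 / 2)) :=
          Real.rpow_le_rpow_of_exponent_ge hb0 hb1 (by linarith)
      _ = (1 - x / T * v) ^ (-q) * (1 - x / T * v) ^ (η - 1 / 2) := Real.rpow_add hb0 _ _
      _ ≤ _ := mul_le_mul
          (Real.rpow_le_rpow_of_nonpos (by linarith) hb2 (by linarith))
          (Real.rpow_le_rpow_of_nonpos hv' hb3 (by linarith))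
          (Real.rpow_nonneg hb0.le _) (Real.rpow_nonneg (by linarith) _)
  unfold innerIntegrand
  rw [e1, abs_of_nonneg (by positivity)]
  have e2 : (1 - v) ^ (η - 1) = (1 - v) ^ (η - 1 / 2) * (1 - v) ^ (-(1 / 2 : ℝ)) := by
    rw [← Real.rpow_add hv']; congr 1; ring
  calc Real.exp (-(θ * x * v)) * (1 - x / T * v) ^ β * (1 - v) ^ (-(1 / 2 : ℝ))
      ≤ Real.exp (-(θ * x * v)) * ((1 - x / T) ^ (-q) * (1 - v) ^ (η - 1 / 2)) *
        (1 - v) ^ (-(1 / 2 : ℝ)) := by gcongr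
    _ = _ := by rw [e2]; ring

theorem intervalIntegrable_innerIntegrand {β q η θ T x : ℝ} (hq : 0 ≤ q) (hη : 0 < η)
    (hη2 : η ≤ 1 / 2) (hβ : η - 1 / 2 - q ≤ β) (hx : 0 < x) (hxT : x < T) :
    IntervalIntegrable (innerIntegrand β θ T x) volume 0 1 :=
  intervalIntegrable_of_abs_le_Ioo zero_le_one
    ((measurable_innerIntegrand β θ T).comp (measurable_const.prodMk measurable_id))
    (fun _ hv => abs_innerIntegrand_le hq hη2 hβ hx hxT hv)
    ((intervalIntegrable_expBeta θ x hη).const_mul _)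

theorem abs_innerIntegral_le {β q η θ T x : ℝ} (hq : 0 ≤ q) (hη : 0 < η) (hη2 : η ≤ 1 / 2)
    (hβ : η - 1 / 2 - q ≤ β) (hx : 0 < x) (hxT : x < T) :
    |innerIntegral β θ T x| ≤ (1 - x / T) ^ (-q) * expBeta θ η x := by
  have h := abs_integral_le_integral_of_Ioo zero_le_one
    (fun _ hv => abs_innerIntegrand_le hq hη2 hβ hx hxT hv)
    ((intervalIntegrable_expBeta θ x hη).const_mul ((1 - x / T) ^ (-q)))
  rw [intervalIntegral.integral_const_mul] at h
  unfold innerIntegral expBeta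
  rw [abs_mul, abs_of_pos hx]
  calc _ ≤ x * _ := mul_le_mul_of_nonneg_left h hx.le
    _ = _ := by ring

/-- On `[0, 1/2]`, `z ↦ (1 - z) ^ b` differs from `1` by a multiple of `z`. -/
theorem exists_abs_one_sub_rpow_sub_one_le (b : ℝ) :
    ∃ C, 0 ≤ C ∧ ∀ z ∈ Set.Icc (0:ℝ) (1 / 2), |(1 - z) ^ b - 1| ≤ C * z := by
  have hd : ∀ z ∈ Set.Icc (0:ℝ) (1 / 2), HasDerivWithinAt (fun z : ℝ => (1 - z) ^ b)
      (-1 * b * (1 - z) ^ (b - 1)) (Set.Icc 0 (1 / 2)) z := fun z hz =>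
    (((hasDerivAt_id z).const_sub 1).rpow_const
      (Or.inl (sub_pos.2 (hz.2.trans_lt (by norm_num))).ne')).hasDerivWithinAt
  obtain ⟨C, hC⟩ := (isCompact_Icc (a := (0:ℝ)) (b := 1 / 2)).exists_bound_of_continuousOn
    (f := fun z : ℝ => -1 * b * (1 - z) ^ (b - 1))
    (continuousOn_const.mul ((continuousOn_const.sub continuousOn_id).rpow_const
      fun z hz => Or.inl (sub_pos.2 (hz.2.trans_lt (by norm_num))).ne'))
  refine ⟨C, (norm_nonneg _).trans (hC 0 ⟨le_rfl, by norm_num⟩), fun z hz => ?_⟩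
  have := (convex_Icc (0:ℝ) (1 / 2)).norm_image_sub_le_of_norm_hasDerivWithin_le hd hC
    ⟨le_rfl, by norm_num⟩ hz
  simpa [abs_of_nonneg hz.1] using this

theorem exists_abs_innerIntegral_sub_le {β q η θ : ℝ} (hθ : 0 < θ) (hq : 0 ≤ q) (hη : 0 < η)
    (hη2 : η ≤ 1 / 2) (hβ : η - 1 / 2 - q ≤ β) :
    ∃ C, 0 ≤ C ∧ ∀ T x, 0 < x → x ≤ T / 2 → |innerIntegral β θ T x - 1 / θ| ≤ C / x := by
  obtain ⟨B, hB0, hB⟩ := exists_abs_one_sub_rpow_sub_one_le β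
  refine ⟨(B + 1) * (2 / θ) * (2 / (θ / 2) + 2 / (θ / 2 * (1 / 2))) + 1 / θ ^ 2,
    by positivity, fun T x hx hxT => ?_⟩
  have hT : 0 < T := by linarith
  have hz : x / T ≤ 1 / 2 := by rw [div_le_iff₀ hT]; linarith
  have hz0 : 0 < x / T := by positivity
  have pt : ∀ v ∈ Set.Ioo (0:ℝ) 1, |innerIntegrand β θ T x v - Real.exp (-(θ * x * v))| ≤
      (B + 1) * (2 / θ) / x * (Real.exp (-(θ / 2 * x * v)) * (1 - v) ^ ((1 / 2 : ℝ) - 1)) := by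
    rintro v ⟨hv0, hv1⟩
    have hv' : 0 < 1 - v := by linarith
    have e1 : x * v / T = x / T * v := by ring
    have b1 := hB (x / T * v) ⟨by positivity, by nlinarith⟩
    have b1' : |(1 - x / T * v) ^ β - 1| ≤ B * v := by
      refine b1.trans (mul_le_mul_of_nonneg_left ?_ hB0)
      nlinarith
    set w : ℝ := (1 - v) ^ ((1 / 2 : ℝ) - 1) with hw
    have hw0 : 0 < w := Real.rpow_pos_of_pos hv' _
    have hwe : (1 - v) ^ (-(1 / 2 : ℝ)) = w := by rw [hw]; norm_num
    have hw1 : 1 ≤ w := Real.one_le_rpow_of_pos_of_le_one_of_nonpos hv' (by linarith) (by norm_num)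
    have hw2 : w * (1 - v) ≤ 1 := by
      have : w * (1 - v) = (1 - v) ^ (1 / 2 : ℝ) := by
        rw [hw, ← Real.rpow_add_one hv'.ne']; norm_num
      rw [this]
      exact Real.rpow_le_one hv'.le (by linarith) (by norm_num)
    have hsum : |(1 - x / T * v) ^ β * w - 1| ≤ (B + 1) * v * w := by
      have : (1 - x / T * v) ^ β * w - 1 = ((1 - x / T * v) ^ β - 1) * w + (w - 1) := by ring
      rw [this]
      refine (abs_add_le _ _).trans ?_
      rw [abs_mul, abs_of_pos hw0, abs_of_nonneg (by linarith : 0 ≤ w - 1)]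
      have := mul_le_mul_of_nonneg_right b1' hw0.le
      nlinarith
    have hexp : v * Real.exp (-(θ * x * v)) ≤ 2 / θ / x * Real.exp (-(θ / 2 * x * v)) := by
      have h := mul_exp_neg_le (c := θ / 2 * x) (x := v) (by positivity)
      have e : Real.exp (-(θ * x * v)) =
          Real.exp (-(θ / 2 * x * v)) * Real.exp (-(θ / 2 * x * v)) := by
        rw [← Real.exp_add]; congr 1; ring
      rw [e, ← mul_assoc]
      refine mul_le_mul_of_nonneg_right (h.trans_eq ?_) (Real.exp_pos _).le
      field_simp
    unfold innerIntegrand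
    rw [e1, hwe]
    have : Real.exp (-(θ * x * v)) * (1 - x / T * v) ^ β * w - Real.exp (-(θ * x * v)) =
      Real.exp (-(θ * x * v)) * ((1 - x / T * v) ^ β * w - 1) := by ring
    rw [this, abs_mul, abs_of_pos (Real.exp_pos _)]
    calc _ ≤ Real.exp (-(θ * x * v)) * ((B + 1) * v * w) :=
          mul_le_mul_of_nonneg_left hsum (Real.exp_pos _).le
      _ = (B + 1) * w * (v * Real.exp (-(θ * x * v))) := by ring
      _ ≤ (B + 1) * w * (2 / θ / x * Real.exp (-(θ / 2 * x * v))) :=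
          mul_le_mul_of_nonneg_left hexp (by positivity)
      _ = _ := by ring
  have hI := abs_integral_le_integral_of_Ioo zero_le_one pt
    ((intervalIntegrable_expBeta (θ / 2) x (by norm_num : (0:ℝ) < 1 / 2)).const_mul _)
  rw [intervalIntegral.integral_const_mul, integral_sub
    (intervalIntegrable_innerIntegrand hq hη hη2 hβ hx (by linarith))
    (Continuous.intervalIntegrable (by fun_prop) _ _)] at hI
  have hE := expBeta_le (c := θ / 2) (e := 1 / 2) (x := x) (by positivity) (by norm_num) hx
  have h0 := mul_integral_exp_neg_mul hθ hx
  have h1 := mul_exp_neg_le (x := x) hθ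
  have hA : |innerIntegral β θ T x - (1 - Real.exp (-(θ * x))) / θ| ≤
      (B + 1) * (2 / θ) * (2 / (θ / 2) + 2 / (θ / 2 * (1 / 2))) / x := by
    rw [← h0, innerIntegral, ← mul_sub, abs_mul, abs_of_pos hx]
    calc _ ≤ x * _ := mul_le_mul_of_nonneg_left hI hx.le
      _ = (B + 1) * (2 / θ) * expBeta (θ / 2) (1 / 2) x / x := by unfold expBeta; ring
      _ ≤ _ := by gcongr
  have hD : |(1 - Real.exp (-(θ * x))) / θ - 1 / θ| ≤ 1 / θ ^ 2 / x := by
    have : (1 - Real.exp (-(θ * x))) / θ - 1 / θ = -(Real.exp (-(θ * x)) / θ) := by ring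
    rw [this, abs_neg, abs_of_pos (by positivity), le_div_iff₀ hx]
    calc Real.exp (-(θ * x)) / θ * x = x * Real.exp (-(θ * x)) / θ := by ring
      _ ≤ 1 / θ / θ := by gcongr
      _ = _ := by field_simp
  calc _ ≤ _ := abs_sub_le _ _ _
    _ ≤ _ := add_le_add hA hD
    _ = _ := by ring

/-- The normalized integrand of the outer integral over `[0, T]`, as a function of `x = T - s`. -/
noncomputable def outerIntegrand (α β θ T x : ℝ) : ℝ :=
  (1 - x / T) ^ (2 * α) * (innerIntegral β θ T x ^ 2 / x)

theorem measurable_outerIntegrand (α β θ T : ℝ) : Measurable (outerIntegrand α β θ T) := by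
  unfold outerIntegrand
  have := measurable_innerIntegral β θ T
  fun_prop

theorem exists_abs_outerIntegrand_le {α β q η θ : ℝ} (hθ : 0 < θ) (hq : 0 ≤ q) (hη : 0 < η)
    (hη2 : η ≤ 1 / 2) (hβ : η - 1 / 2 - q ≤ β) (hα : 2 * α - 2 * q = 2 * η - 1) :
    ∃ C, 0 ≤ C ∧ ∀ T x, 0 < x → x < T →
      |outerIntegrand α β θ T x| ≤ C * (1 - x / T) ^ (2 * η - 1) ∧
      |outerIntegrand α β θ T x| ≤ C * (1 - x / T) ^ (2 * η - 1) / x := by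
  set D : ℝ := 2 / θ + 2 / (θ * η) with hD
  have hD0 : 0 < D := by positivity
  refine ⟨D * (1 / η) + D ^ 2, by positivity, fun T x hx hxT => ?_⟩
  have hσ : 0 < 1 - x / T := sub_pos.2 ((div_lt_one (hx.trans hxT)).2 hxT)
  have hM := abs_innerIntegral_le (θ := θ) hq hη hη2 hβ hx hxT
  have hE1 := expBeta_le_div hθ hη hx
  have hE2 := expBeta_le hθ hη hx
  set σ := 1 - x / T
  have hσq : 0 < σ ^ (-q) := Real.rpow_pos_of_pos hσ _
  have hpow : σ ^ (2 * α) * (σ ^ (-q)) ^ 2 = σ ^ (2 * η - 1) := by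
    rw [← Real.rpow_natCast, ← Real.rpow_mul hσ.le, ← Real.rpow_add hσ]
    congr 1
    push_cast
    linarith
  have hE0 : 0 ≤ expBeta θ η x := by
    have := (abs_nonneg _).trans hM
    exact nonneg_of_mul_nonneg_right this hσq
  have hMsq : innerIntegral β θ T x ^ 2 ≤ (σ ^ (-q)) ^ 2 * expBeta θ η x ^ 2 := by
    rw [← sq_abs, ← mul_pow]
    exact pow_le_pow_left₀ (abs_nonneg _) hM 2
  have hg0 : 0 ≤ outerIntegrand α β θ T x := by unfold outerIntegrand; positivity
  have hg : outerIntegrand α β θ T x ≤ σ ^ (2 * η - 1) * (expBeta θ η x ^ 2 / x) :=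
    calc outerIntegrand α β θ T x
        ≤ σ ^ (2 * α) * ((σ ^ (-q)) ^ 2 * expBeta θ η x ^ 2 / x) := by
          unfold outerIntegrand; gcongr
      _ = _ := by rw [← hpow]; ring
  have hs : 0 < σ ^ (2 * η - 1) := Real.rpow_pos_of_pos hσ _
  rw [abs_of_nonneg hg0]
  constructor
  · refine hg.trans ?_
    have : expBeta θ η x ^ 2 / x ≤ D * (1 / η) + D ^ 2 := by
      rw [div_le_iff₀ hx]
      have : expBeta θ η x ^ 2 ≤ D * (x / η) := by
        rw [sq]; exact mul_le_mul hE2 hE1 hE0 hD0.le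
      have h2 : 0 ≤ D ^ 2 * x := by positivity
      calc _ ≤ _ := this
        _ = D * (1 / η) * x := by ring
        _ ≤ _ := by linarith
    rw [mul_comm]
    gcongr
  · refine hg.trans ?_
    have : expBeta θ η x ^ 2 ≤ D * (1 / η) + D ^ 2 := by
      have := pow_le_pow_left₀ hE0 hE2 2
      have : 0 ≤ D * (1 / η) := by positivity
      linarith
    rw [mul_comm, div_mul_eq_mul_div]
    gcongr

theorem exists_abs_outerIntegrand_sub_le_of_le_half {α β q η θ : ℝ} (hθ : 0 < θ) (hq : 0 ≤ q)
    (hη : 0 < η) (hη2 : η ≤ 1 / 2) (hβ : η - 1 / 2 - q ≤ β) :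
    ∃ C, 0 ≤ C ∧ ∀ T x, 1 ≤ x → x ≤ T / 2 →
      |outerIntegrand α β θ T x - 1 / θ ^ 2 * x⁻¹| ≤ C * (x ^ (-2 : ℝ) + 1 / T) := by
  obtain ⟨A, hA0, hA⟩ := exists_abs_innerIntegral_sub_le hθ hq hη hη2 hβ
  obtain ⟨B, hB0, hB⟩ := exists_abs_one_sub_rpow_sub_one_le (2 * α)
  refine ⟨B * (A + 1 / θ) ^ 2 + A * (A + 2 / θ), by positivity, fun T x hx1 hxT => ?_⟩
  have hx : 0 < x := by linarith
  have hT : 0 < T := by linarith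
  have hz : x / T ≤ 1 / 2 := by rw [div_le_iff₀ hT]; linarith
  have hM := hA T x hx hxT
  have hw := hB (x / T) ⟨by positivity, hz⟩
  set M := innerIntegral β θ T x with hMdef
  set w := (1 - x / T) ^ (2 * α) with hwdef
  have hAx : A / x ≤ A := div_le_self hA0 hx1
  have hi : 0 < 1 / θ := by positivity
  have hMa : |M| ≤ A + 1 / θ := by
    have := abs_add_le (M - 1 / θ) (1 / θ)
    rw [sub_add_cancel, abs_of_pos hi] at this
    linarith
  have hMp : |M + 1 / θ| ≤ A + 2 / θ := by
    have := abs_add_le M (1 / θ)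
    rw [abs_of_pos hi] at this
    have e : 2 / θ = 1 / θ + 1 / θ := by ring
    linarith
  have hM2 : M ^ 2 ≤ (A + 1 / θ) ^ 2 := by
    rw [← sq_abs]; exact pow_le_pow_left₀ (abs_nonneg _) hMa 2
  have hsq : |M ^ 2 - 1 / θ ^ 2| ≤ A / x * (A + 2 / θ) := by
    have : M ^ 2 - 1 / θ ^ 2 = (M - 1 / θ) * (M + 1 / θ) := by ring
    rw [this, abs_mul]
    exact mul_le_mul hM hMp (abs_nonneg _) (by positivity)
  have hsum : |w * M ^ 2 - 1 / θ ^ 2| ≤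
      B * (x / T) * (A + 1 / θ) ^ 2 + A / x * (A + 2 / θ) := by
    have : w * M ^ 2 - 1 / θ ^ 2 = (w - 1) * M ^ 2 + (M ^ 2 - 1 / θ ^ 2) := by ring
    rw [this]
    refine (abs_add_le _ _).trans (add_le_add ?_ hsq)
    rw [abs_mul, abs_of_nonneg (sq_nonneg M)]
    exact mul_le_mul hw hM2 (sq_nonneg _) (by positivity)
  have hpow : x ^ (-2 : ℝ) = 1 / x ^ 2 := by
    rw [Real.rpow_neg hx.le, one_div]; norm_num
  have : outerIntegrand α β θ T x - 1 / θ ^ 2 * x⁻¹ = (w * M ^ 2 - 1 / θ ^ 2) / x := by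
    unfold outerIntegrand; rw [← hMdef, ← hwdef]; ring
  rw [this, abs_div, abs_of_pos hx, hpow]
  calc _ ≤ (B * (x / T) * (A + 1 / θ) ^ 2 + A / x * (A + 2 / θ)) / x := by gcongr
    _ = B * (A + 1 / θ) ^ 2 * (1 / T) + A * (A + 2 / θ) * (1 / x ^ 2) := by field_simp
    _ ≤ B * (A + 1 / θ) ^ 2 * (1 / x ^ 2 + 1 / T) + A * (A + 2 / θ) * (1 / x ^ 2 + 1 / T) := by
        gcongr
        · have : 0 < 1 / x ^ 2 := by positivity
          linarith
        · have : 0 < 1 / T := by positivity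
          linarith
    _ = _ := by ring

theorem exists_abs_outerIntegrand_sub_le {α β q η θ : ℝ} (hθ : 0 < θ) (hq : 0 ≤ q) (hη : 0 < η)
    (hη2 : η ≤ 1 / 2) (hβ : η - 1 / 2 - q ≤ β) (hα : 2 * α - 2 * q = 2 * η - 1) :
    ∃ C, 0 ≤ C ∧ ∀ T x, 1 ≤ x → x < T →
      |outerIntegrand α β θ T x - 1 / θ ^ 2 * x⁻¹| ≤
        C * (x ^ (-2 : ℝ) + 1 / T + 1 / T * (1 - x / T) ^ (2 * η - 1)) := by
  obtain ⟨A, hA0, hA⟩ := exists_abs_outerIntegrand_le hθ hq hη hη2 hβ hα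
  obtain ⟨B, hB0, hB⟩ :=
    exists_abs_outerIntegrand_sub_le_of_le_half (α := α) hθ hq hη hη2 hβ
  refine ⟨B + 2 * A + 2 / θ ^ 2, by positivity, fun T x hx1 hxT => ?_⟩
  have hx : 0 < x := by linarith
  have hT : 0 < T := by linarith
  have hσ : 0 < 1 - x / T := sub_pos.2 ((div_lt_one hT).2 hxT)
  have hs : 0 < (1 - x / T) ^ (2 * η - 1) := Real.rpow_pos_of_pos hσ _
  have hp : 0 < x ^ (-2 : ℝ) := Real.rpow_pos_of_pos hx _
  have hT1 : 0 < 1 / T := by positivity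
  rcases le_total x (T / 2) with h | h
  · refine (hB T x hx1 h).trans ?_
    have : 0 ≤ 2 * A + 2 / θ ^ 2 := by positivity
    have : 0 < 1 / T * (1 - x / T) ^ (2 * η - 1) := by positivity
    exact mul_le_mul (by linarith) (by linarith) (by positivity) (by linarith)
  · have hxi : x⁻¹ ≤ 2 * (1 / T) := by
      rw [inv_le_comm₀ hx (by positivity)]
      refine le_trans (le_of_eq ?_) h
      field_simp
    have h1 := (hA T x hx hxT).2
    have h2 : |1 / θ ^ 2 * x⁻¹| = 1 / θ ^ 2 * x⁻¹ := abs_of_pos (by positivity)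
    set s := (1 - x / T) ^ (2 * η - 1)
    calc _ ≤ _ := abs_sub _ _
      _ ≤ A * s * x⁻¹ + 1 / θ ^ 2 * x⁻¹ := by
          rw [h2, ← div_eq_mul_inv (A * s)]; gcongr
      _ ≤ A * s * (2 * (1 / T)) + 1 / θ ^ 2 * (2 * (1 / T)) := by gcongr
      _ = 2 * A * (1 / T * s) + 2 / θ ^ 2 * (1 / T) := by ring
      _ ≤ (B + 2 * A + 2 / θ ^ 2) * (1 / T * s) + (B + 2 * A + 2 / θ ^ 2) * (1 / T) +
          (B + 2 * A + 2 / θ ^ 2) * x ^ (-2 : ℝ) := by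
          have : 0 ≤ (B + 2 * A + 2 / θ ^ 2) * x ^ (-2 : ℝ) := by positivity
          have : 2 * A * (1 / T * s) ≤ (B + 2 * A + 2 / θ ^ 2) * (1 / T * s) := by
            gcongr
            have : 0 ≤ 2 / θ ^ 2 := by positivity
            linarith
          have : 2 / θ ^ 2 * (1 / T) ≤ (B + 2 * A + 2 / θ ^ 2) * (1 / T) := by
            gcongr
            linarith
          linarith
      _ = _ := by ring

theorem intervalIntegrable_one_sub_div_rpow_s16 {e T : ℝ} (he : 0 < e) :
    IntervalIntegrable (fun x : ℝ => (1 - x / T) ^ (e - 1)) volume 0 T := by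
  have := (intervalIntegrable_one_sub_rpow he).comp_mul_left (c := T⁻¹)
  simpa [div_eq_inv_mul] using this

theorem exists_abs_integral_outerIntegrand_sub_log_le {α β θ : ℝ} (hα : -(1 / 2 : ℝ) < α)
    (hαβ : -1 < α + β) (hθ : 0 < θ) :
    ∃ C, ∀ T, 2 ≤ T →
      |(∫ x in (0:ℝ)..T, outerIntegrand α β θ T x) - 1 / θ ^ 2 * Real.log T| ≤ C := by
  obtain ⟨η, hη, hηl⟩ : ∃ η : ℝ, 0 < η ∧ η ≤ min (1 / 2) (min (α + 1 / 2) ((α + β + 1) / 2)) :=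
    ⟨_, lt_min (by norm_num) (lt_min (by linarith) (by linarith)), le_rfl⟩
  obtain ⟨hη2, hη3, hη4⟩ : η ≤ 1 / 2 ∧ η ≤ α + 1 / 2 ∧ η ≤ (α + β + 1) / 2 := by
    simpa only [le_min_iff] using hηl
  have hq : 0 ≤ α + 1 / 2 - η := by linarith
  have hβ : η - 1 / 2 - (α + 1 / 2 - η) ≤ β := by linarith
  have hαq : 2 * α - 2 * (α + 1 / 2 - η) = 2 * η - 1 := by ring
  obtain ⟨A, hA0, hA⟩ := exists_abs_outerIntegrand_le hθ hq hη hη2 hβ hαq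
  obtain ⟨B, hB0, hB⟩ := exists_abs_outerIntegrand_sub_le hθ hq hη hη2 hβ hαq
  refine ⟨A * 2 + B * (1 + 1 + 1 / (2 * η)), fun T hT => ?_⟩
  have hT0 : 0 < T := by linarith
  have hT1 : 1 ≤ T := by linarith
  have hbound := intervalIntegrable_one_sub_div_rpow_s16 (e := 2 * η) (T := T) (by positivity)
  have hint : IntervalIntegrable (outerIntegrand α β θ T) volume 0 T :=
    intervalIntegrable_of_abs_le_Ioo hT0.le (measurable_outerIntegrand α β θ T)
      (fun x hx => (hA T x hx.1 hx.2).1) (hbound.const_mul A)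
  have hint0 : IntervalIntegrable (outerIntegrand α β θ T) volume 0 1 :=
    hint.mono_set (Set.uIcc_subset_uIcc_left (Set.mem_uIcc_of_le zero_le_one hT1))
  have hsub : Set.uIcc 1 T ⊆ Set.uIcc 0 T :=
    Set.uIcc_subset_uIcc_right (Set.mem_uIcc_of_le zero_le_one hT1)
  have hint1 : IntervalIntegrable (outerIntegrand α β θ T) volume 1 T := hint.mono_set hsub
  have hnot : (0:ℝ) ∉ Set.uIcc 1 T := by
    rw [Set.uIcc_of_le hT1]; exact fun h => by linarith [h.1]
  have hinv : IntervalIntegrable (fun x : ℝ => 1 / θ ^ 2 * x⁻¹) volume 1 T :=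
    (intervalIntegrable_inv (fun x hx h => hnot (h ▸ hx)) continuousOn_id).const_mul _
  have hlog : ∫ x in (1:ℝ)..T, 1 / θ ^ 2 * x⁻¹ = 1 / θ ^ 2 * Real.log T := by
    rw [intervalIntegral.integral_const_mul, integral_inv hnot, div_one]
  have hfirst : |∫ x in (0:ℝ)..1, outerIntegrand α β θ T x| ≤ A * 2 := by
    have h := abs_integral_le_integral_of_Ioo (g := fun _ => A * 2)
      (f := outerIntegrand α β θ T) zero_le_one (fun x hx => ?_) intervalIntegrable_const
    · simpa using h
    · refine ((hA T x hx.1 (by linarith [hx.2])).1).trans (mul_le_mul_of_nonneg_left ?_ hA0)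
      have hz : x / T ≤ 1 / 2 := by rw [div_le_iff₀ hT0]; linarith [hx.2]
      have hz0 : 0 < x / T := div_pos hx.1 hT0
      calc (1 - x / T) ^ (2 * η - 1) ≤ (1 - x / T) ^ (-1 : ℝ) :=
            Real.rpow_le_rpow_of_exponent_ge (by linarith) (by linarith) (by linarith)
        _ = (1 - x / T)⁻¹ := Real.rpow_neg_one _
        _ ≤ (1 / 2 : ℝ)⁻¹ := inv_anti₀ (by norm_num) (by linarith)
        _ = 2 := by norm_num
  have i1 : IntervalIntegrable (fun x : ℝ => x ^ (-2 : ℝ)) volume 1 T :=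
    intervalIntegrable_rpow (Or.inr hnot)
  have i2 : IntervalIntegrable (fun _ : ℝ => 1 / T) volume 1 T := intervalIntegrable_const
  have i3 : IntervalIntegrable (fun x : ℝ => 1 / T * (1 - x / T) ^ (2 * η - 1)) volume 1 T :=
    (hbound.mono_set hsub).const_mul _
  have v1 : ∫ x in (1:ℝ)..T, x ^ (-2 : ℝ) ≤ 1 := by
    rw [integral_rpow (Or.inr ⟨by norm_num, hnot⟩)]
    have : 0 < T ^ (-2 + 1 : ℝ) := Real.rpow_pos_of_pos hT0 _
    rw [Real.one_rpow, div_le_iff_of_neg (by norm_num)]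
    linarith
  have v2 : ∫ _ in (1:ℝ)..T, 1 / T ≤ 1 := by
    rw [intervalIntegral.integral_const, smul_eq_mul, mul_one_div, div_le_one hT0]
    linarith
  have v3 : ∫ x in (1:ℝ)..T, 1 / T * (1 - x / T) ^ (2 * η - 1) ≤ 1 / (2 * η) := by
    rw [intervalIntegral.integral_const_mul,
      integral_comp_sub_div (fun u : ℝ => u ^ (2 * η - 1)) hT0.ne' 1,
      integral_rpow (Or.inl (by linarith)), div_self hT0.ne', sub_self, smul_eq_mul,
      sub_add_cancel, Real.zero_rpow (by positivity), sub_zero, ← mul_assoc,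
      one_div_mul_cancel hT0.ne', one_mul]
    have h1 : 1 / T ≤ 1 := (div_le_one hT0).2 hT1
    have h2 : 0 < 1 / T := by positivity
    gcongr
    exact Real.rpow_le_one (by linarith) (by linarith) (by positivity)
  have hsecond : |∫ x in (1:ℝ)..T, (outerIntegrand α β θ T x - 1 / θ ^ 2 * x⁻¹)| ≤
      B * (1 + 1 + 1 / (2 * η)) := by
    refine (abs_integral_le_integral_of_Ioo hT1 (fun x hx => hB T x hx.1.le hx.2)
      (((i1.add i2).add i3).const_mul B)).trans ?_
    rw [intervalIntegral.integral_const_mul, integral_add (i1.add i2) i3, integral_add i1 i2]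
    gcongr
  rw [← integral_add_adjacent_intervals hint0 hint1, ← hlog, add_sub_assoc,
    ← integral_sub hint1 hinv]
  exact (abs_add_le _ _).trans (add_le_add hfirst hsecond)

theorem integral_exp_mul_rpow_eq {β θ T x : ℝ} (hx : 0 < x) (hxT : x < T) :
    ∫ t in (T - x)..T, Real.exp (θ * t) * t ^ β * (t - (T - x)) ^ (-(1 / 2 : ℝ)) =
      Real.exp (θ * T) * T ^ β * x ^ (-(1 / 2 : ℝ)) * innerIntegral β θ T x := by
  have hT : 0 < T := hx.trans hxT
  have h := integral_comp_sub_mul (a := 0) (b := 1)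
    (fun t : ℝ => Real.exp (θ * t) * t ^ β * (t - (T - x)) ^ (-(1 / 2 : ℝ))) hx.ne' T
  rw [mul_one, mul_zero, sub_zero, smul_eq_mul] at h
  rw [eq_inv_mul_iff_mul_eq₀ hx.ne'] at h
  rw [← h, innerIntegral, mul_left_comm]
  refine congrArg (x * ·) ?_
  rw [← intervalIntegral.integral_const_mul]
  refine integral_congr_Ioo_of_le zero_le_one fun v hv => ?_
  have hv' : 0 < 1 - v := by linarith [hv.2]
  have hz : x / T < 1 := (div_lt_one hT).2 hxT
  have hz0 : 0 < x / T := by positivity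
  have hw : 0 < 1 - x * v / T := by
    have : x * v / T = x / T * v := by ring
    rw [this]; nlinarith [hv.1, hv.2]
  have e1 : T - x * v = T * (1 - x * v / T) := by field_simp
  have e2 : T - x * v - (T - x) = x * (1 - v) := by ring
  have e3 : θ * (T - x * v) = θ * T + -(θ * x * v) := by ring
  simp only [innerIntegrand]
  rw [e2, e3, e1, Real.exp_add, Real.mul_rpow hT.le hw.le, Real.mul_rpow hx.le hv'.le]
  ring

theorem exp_mul_integral_eq {α β θ T : ℝ} (hT : 0 < T) :
    Real.exp (-(2 * θ * T)) * ∫ s in (0:ℝ)..T, s ^ (2 * α) *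
      (∫ t in s..T, Real.exp (θ * t) * t ^ β * (t - s) ^ (-(1 / 2 : ℝ))) ^ 2 =
    T ^ (2 * α + 2 * β) * ∫ x in (0:ℝ)..T, outerIntegrand α β θ T x := by
  have h := integral_comp_sub_left (a := 0) (b := T) (fun s : ℝ => s ^ (2 * α) *
    (∫ t in s..T, Real.exp (θ * t) * t ^ β * (t - s) ^ (-(1 / 2 : ℝ))) ^ 2) T
  rw [sub_self, sub_zero] at h
  rw [← h, ← intervalIntegral.integral_const_mul, ← intervalIntegral.integral_const_mul]
  refine integral_congr_Ioo_of_le hT.le fun x hx => ?_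
  have hz : x / T < 1 := (div_lt_one hT).2 hx.2
  have e1 : T - x = T * (1 - x / T) := by field_simp
  have e2 : (x ^ (-(1 / 2 : ℝ))) ^ 2 = x⁻¹ := by
    rw [← Real.rpow_natCast, ← Real.rpow_mul hx.1.le, ← Real.rpow_neg_one]
    norm_num
  have e3 : Real.exp (-(2 * θ * T)) * Real.exp (θ * T) ^ 2 = 1 := by
    rw [← Real.exp_nat_mul, ← Real.exp_add]
    simp only [Real.exp_eq_one_iff]
    push_cast
    ring
  have e4 : T ^ (2 * α + 2 * β) = T ^ (2 * α) * (T ^ β) ^ 2 := by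
    rw [Real.rpow_add hT, ← Real.rpow_natCast (T ^ β), ← Real.rpow_mul hT.le]
    congr 2
    push_cast
    ring
  have e5 : (T - x) ^ (2 * α) = T ^ (2 * α) * (1 - x / T) ^ (2 * α) := by
    rw [e1, Real.mul_rpow hT.le (by linarith)]
  simp only [outerIntegrand]
  rw [integral_exp_mul_rpow_eq hx.1 hx.2, e5, e4, div_eq_mul_inv _ x, ← e2]
  linear_combination T ^ (2 * α) * (1 - x / T) ^ (2 * α) * (T ^ β) ^ 2 *
    (x ^ (-(1 / 2 : ℝ))) ^ 2 * innerIntegral β θ T x ^ 2 * e3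

/-- Lemma 4.5, case `γ = -1/2`: asymptotics of
`E(e^{-θT} ∫₀ᵀ e^{θs} dX_s)²`. -/
theorem stmt_16 (α β θ : ℝ) (hα : -(1/2 : ℝ) < α) (hαβ : -1 < α + β)
    (hθ : 0 < θ)
    (G : ℝ → ℝ)
    (hG : ∀ T : ℝ, G T = Real.exp (-(2 * θ * T)) * ∫ s in (0:ℝ)..T, s ^ (2*α) *
      (∫ t in s..T, Real.exp (θ * t) * t ^ β * (t - s) ^ (-(1/2 : ℝ))) ^ 2) :
    Tendsto (fun T : ℝ => G T / (T ^ (2*α+2*β) * Real.log T)) atTop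
      (nhds (1 / θ ^ (2 : ℕ))) := by
  obtain ⟨C, hC⟩ := exists_abs_integral_outerIntegrand_sub_log_le hα hαβ hθ
  rw [tendsto_iff_norm_sub_tendsto_zero]
  refine squeeze_zero' (Eventually.of_forall fun _ => norm_nonneg _) ?_
    (Real.tendsto_log_atTop.const_div_atTop C)
  filter_upwards [eventually_ge_atTop 2] with T hT
  have hlog : 0 < Real.log T := Real.log_pos (by linarith)
  have hT0 : 0 < T := by linarith
  have hpow : T ^ (2 * α + 2 * β) ≠ 0 := (Real.rpow_pos_of_pos hT0 _).ne'
  rw [hG T, exp_mul_integral_eq hT0, mul_div_mul_left _ _ hpow, Real.norm_eq_abs,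
    le_div_iff₀ hlog, ← abs_of_pos hlog, ← abs_mul, abs_of_pos hlog, sub_mul,
    div_mul_cancel₀ _ hlog.ne']
  exact hC T hT
end
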